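/- Let n ≥ 1, 0 < p ≤ 1, 0 < q₁ < q < q₂ ≤ ∞, and define η ∈ (0,1) by 1/q = (1−η)/q₁ + η/q₂ (with η/q₂ = 0 when q₂ = ∞). Fix ψ smooth, compactly supported on ℝⁿ with ∫ψ ≠ 0, and let N denote the associated non-tangential maximal operator. For locally integrable f and t > 0 set K(t,f) = inf { ‖N f₀‖_{p,q₁} + t ‖N f₁‖_{p,q₂} : f = f₀ + f₁, f₀, f₁ locally integrable }. Then there is a constant c such that every locally integrable f with ‖N f‖_{p,q} < ∞ satisfies (∫_0^∞ (t^{−η} K(t,f))^q dt/t)^{1/q} ≤ c · ‖N f‖_{p,q}. -/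

import Mathlib

open MeasureTheory ENNReal Set

noncomputable section

abbrev Euc (n : ℕ) := EuclideanSpace ℝ (Fin n)

/-- Distribution function `m(F, lam) = |{x : lam < F x}|` (Lebesgue measure). -/
def distFn {n : ℕ} (F : Euc n → ℝ≥0∞) (lam : ℝ≥0∞) : ℝ≥0∞ :=
  volume {x | lam < F x}

/-- View a real-valued function as an `ℝ≥0∞`-valued one via its absolute value. -/
def eF {n : ℕ} (g : Euc n → ℝ) : Euc n → ℝ≥0∞ :=
  fun x => ENNReal.ofReal |g x|

/-- Dyadic Lorentz `L^{p,q}` quasinorm. -/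
def lorentzNorm {n : ℕ} (p : ℝ) (q : ℝ≥0∞) (F : Euc n → ℝ≥0∞) : ℝ≥0∞ :=
  if q = ∞ then ⨆ k : ℤ, (2 : ℝ≥0∞) ^ k * (distFn F ((2 : ℝ≥0∞) ^ k)) ^ (1/p)
  else (∑' k : ℤ, ((2 : ℝ≥0∞) ^ k * (distFn F ((2 : ℝ≥0∞) ^ k)) ^ (1/p)) ^ q.toReal) ^ (1/q.toReal)

/-- `ℓ^q(ℤ)` norm of a nonnegative sequence. -/
def ellq (q : ℝ≥0∞) (a : ℤ → ℝ≥0∞) : ℝ≥0∞ :=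
  if q = ∞ then ⨆ k : ℤ, a k else (∑' k : ℤ, (a k) ^ q.toReal) ^ (1/q.toReal)

/-- The axis-parallel closed cube centered at `c` with half side-length `r`. -/
def cube {n : ℕ} (c : Euc n) (r : ℝ) : Set (Euc n) := {y | ∀ i, |y i - c i| ≤ r}

/-- `H^p` atom with defining cube `cube c r`; `|cube c r| = (2r)^n`. -/
def IsHpAtom {n : ℕ} (p : ℝ) (a : Euc n → ℝ) (c : Euc n) (r : ℝ) : Prop :=
  0 < r ∧ Measurable a ∧ (∀ x, x ∉ cube c r → a x = 0) ∧
    (∀ᵐ x ∂(volume : Measure (Euc n)), |a x| ≤ ((((2*r)^n : ℝ)) ^ (1/p))⁻¹) ∧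
    ∀ α : Fin n → ℕ, (∑ i, α i) ≤ ⌊(n : ℝ) * (1/p - 1)⌋₊ →
      (∫ y : Euc n, (∏ i, y i ^ α i) * a y) = 0

/-- `(f * ψ_t)(y)` where `ψ_t(x) = t⁻ⁿ ψ(x/t)`. -/
def convAt {n : ℕ} (ψ f : Euc n → ℝ) (t : ℝ) (y : Euc n) : ℝ :=
  ∫ z : Euc n, f z * ((t ^ n)⁻¹ * ψ (t⁻¹ • (y - z)))

/-- Non-tangential maximal function. -/
def ntMax {n : ℕ} (ψ f : Euc n → ℝ) (x : Euc n) : ℝ≥0∞ :=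
  ⨆ (y : Euc n) (t : ℝ) (_ : 0 < t) (_ : dist x y < t), ENNReal.ofReal |convAt ψ f t y|

/-- Radial maximal function. -/
def radMax {n : ℕ} (φ f : Euc n → ℝ) (x : Euc n) : ℝ≥0∞ :=
  ⨆ (t : ℝ) (_ : 0 < t), ENNReal.ofReal |convAt φ f t x|


/-- The Peetre `K`-functional for the couple `(H^{p,q₁}, H^{p,q₂})`, with the `H^{p,q}`
quasinorm computed via the non-tangential maximal operator associated to `ψ`. -/
def Kfun {n : ℕ} (ψ : Euc n → ℝ) (p : ℝ) (q1 q2 : ℝ≥0∞) (f : Euc n → ℝ) (t : ℝ) : ℝ≥0∞ :=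
  ⨅ (f0 : Euc n → ℝ) (f1 : Euc n → ℝ) (_ : LocallyIntegrable f0 volume)
    (_ : LocallyIntegrable f1 volume) (_ : ∀ x, f x = f0 x + f1 x),
      lorentzNorm p q1 (ntMax ψ f0) + ENNReal.ofReal t * lorentzNorm p q2 (ntMax ψ f1)

/-!
Write `f` as a bilateral telescoping series `∑ₖ (gₖ₊₁ - gₖ)`, where `gₖ` is a good function of `f`
at height `2ᵏ`: in the telescoping series of `K_s * K_s * f` over dyadic scales `s = 2⁻ʲ`, with `K`
a combination of dilates of `ψ` reproducing its target up to a difference of high order `M`, one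
discards at each scale the contribution of the points lying deeper than `A * 2⁻ʲ` in
`Ωₖ = {N_A f > 2ᵏ}`. The discarded points see `ψ_t` through a kernel with `M`-th order cancellation,
so `N (gₖ₊₁ - gₖ) ≤ C 2ᵏ min(1, wₖ ^ (τ + 1))` for the Marcinkiewicz integral `wₖ` of `Ωₖ`, which
satisfies `∫ wₖ ≤ C |Ωₖ|`. Taking `τ` large enough for the given `p`, every partial
sum over a set `S` of indices satisfies
`‖N (∑_{k ∈ S} (gₖ₊₁ - gₖ))‖_{p,r} ≤ C ‖2ᵏ |{N f > 2ᵏ}| ^ (1 / p)‖_{ℓʳ(S)}` for every `r`.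

Splitting `f` along a finite set `S` and its complement thus bounds `K(t, f)` by a `K`-functional of
the couple `(ℓ^{q₁}, ℓ^{q₂})`. For `t ≈ 2^{mθ}`, `θ = 1/q₁ - 1/q₂`, let `S` consist of the indices
where the sequence exceeds its decreasing rearrangement at `2ᵐ`; Hardy-type inequalities for the
rearrangement then sum the bounds over `m`.
-/

/-! ### Dyadic sums and sequence norms -/

section DyadicSums

lemma ofReal_two_zpow (k : ℤ) : ENNReal.ofReal (2 ^ k) = 2 ^ k := by
  rw [ENNReal.ofReal, Real.toNNReal_zpow zero_le_two, Real.toNNReal_ofNat,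
    ENNReal.coe_zpow two_ne_zero, ENNReal.coe_ofNat]

lemma two_rpow_ne_zero (x : ℝ) : (2 : ℝ≥0∞) ^ x ≠ 0 := by
  simp [ENNReal.rpow_eq_zero_iff]

lemma two_rpow_ne_top (x : ℝ) : (2 : ℝ≥0∞) ^ x ≠ ∞ := by
  simp [ENNReal.rpow_eq_top_iff]

lemma two_rpow_add (x y : ℝ) : (2 : ℝ≥0∞) ^ (x + y) = 2 ^ x * 2 ^ y :=
  ENNReal.rpow_add _ _ two_ne_zero ofNat_ne_top

lemma two_rpow_mul_rpow (x : ℝ) (b : ℝ≥0∞) {r : ℝ} (hr : 0 ≤ r) :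
    ((2 : ℝ≥0∞) ^ x * b) ^ r = 2 ^ (x * r) * b ^ r := by
  rw [ENNReal.mul_rpow_of_nonneg _ _ hr, ← ENNReal.rpow_mul]

lemma two_rpow_mul_rpow_inv (x : ℝ) (b : ℝ≥0∞) {r : ℝ} (hr : 0 < r) :
    (2 : ℝ≥0∞) ^ x * b ^ (1 / r) = (2 ^ (x * r) * b) ^ (1 / r) := by
  rw [two_rpow_mul_rpow _ _ (by positivity), mul_assoc, mul_one_div_cancel hr.ne', mul_one]

lemma two_zpow_rpow (k : ℤ) (r : ℝ) : ((2 : ℝ≥0∞) ^ k) ^ r = 2 ^ (k * r) := by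
  rw [← ENNReal.rpow_intCast, ← ENNReal.rpow_mul]

lemma two_zpow_mono {k l : ℤ} (h : k ≤ l) : (2 : ℝ≥0∞) ^ k ≤ 2 ^ l :=
  ENNReal.zpow_le_of_le one_le_two h

lemma exists_le_two_zpow {c : ℝ≥0∞} (hc : c ≠ ∞) : ∃ e : ℤ, c ≤ 2 ^ e := by
  obtain rfl | hc0 := eq_or_ne c 0
  · exact ⟨0, zero_le⟩
  · obtain ⟨m, -, hm⟩ := ENNReal.exists_mem_Ioc_zpow hc0 hc one_lt_two ofNat_ne_top
    exact ⟨m + 1, hm⟩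

lemma tsum_two_rpow_ne_top {δ : ℝ} (hδ : 0 < δ) : ∑' i : ℕ, (2 : ℝ≥0∞) ^ (-(δ * i)) ≠ ∞ := by
  have hpow (i : ℕ) : (2 : ℝ≥0∞) ^ (-(δ * i)) = (2 ^ (-δ)) ^ i := by
    rw [← ENNReal.rpow_mul_natCast, neg_mul]
  have hlt : (2 : ℝ≥0∞) ^ (-δ) < 1 :=
    ENNReal.rpow_lt_one_of_one_lt_of_neg one_lt_two (neg_lt_zero.2 hδ)
  simpa only [hpow, ENNReal.tsum_geometric, ne_eq, ENNReal.inv_eq_top] using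
    (tsub_pos_of_lt hlt).ne'

lemma tsum_int_gt_eq_tsum_nat (G : ℤ → ℝ≥0∞) (l : ℤ) :
    ∑' k : ℤ, (if l < k then G k else 0) = ∑' i : ℕ, G (l + 1 + i) := by
  have hinj : Function.Injective fun i : ℕ => l + 1 + (i : ℤ) := fun i j h => by simpa using h
  rw [← hinj.tsum_eq]
  · exact tsum_congr fun i => if_pos (by omega)
  · intro k hk
    have hlk : l < k := by by_contra h; simp [h] at hk
    exact ⟨(k - l - 1).toNat, by dsimp only; omega⟩

lemma tsum_int_le_eq_tsum_nat (G : ℤ → ℝ≥0∞) (l : ℤ) :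
    ∑' k : ℤ, (if k ≤ l then G k else 0) = ∑' i : ℕ, G (l - i) := by
  have hinj : Function.Injective fun i : ℕ => l - (i : ℤ) := fun i j h => by simpa using h
  rw [← hinj.tsum_eq]
  · exact tsum_congr fun i => if_pos (by omega)
  · intro k hk
    have hlk : k ≤ l := by by_contra h; simp [h] at hk
    exact ⟨(l - k).toNat, by dsimp only; omega⟩

lemma exists_tsum_two_zpow_rpow_le {q : ℝ} (hq : 0 < q) : ∃ C ≠ ∞, ∀ D : ℝ≥0∞,
    ∑' j : ℤ, (if (2 : ℝ≥0∞) ^ j ≤ D then ((2 : ℝ≥0∞) ^ j) ^ q else 0) ≤ C * D ^ q := by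
  have hC0 : ∑' i : ℕ, (2 : ℝ≥0∞) ^ (-(q * i)) ≠ 0 := fun h => by
    simpa using ENNReal.tsum_eq_zero.1 h 0
  refine ⟨_, tsum_two_rpow_ne_top hq, fun D => ?_⟩
  obtain rfl | hD0 := eq_or_ne D 0
  · simp [(ENNReal.zpow_pos two_ne_zero ofNat_ne_top _).ne']
  obtain rfl | hDt := eq_or_ne D ∞
  · simp [ENNReal.top_rpow_of_pos hq, ENNReal.mul_top hC0]
  obtain ⟨m, hm, hm'⟩ := ENNReal.exists_mem_Ico_zpow hD0 hDt one_lt_two ofNat_ne_top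
  have hle (j : ℤ) (hj : (2 : ℝ≥0∞) ^ j ≤ D) : j ≤ m := by
    by_contra! hmj
    exact ((two_zpow_mono hmj).trans hj).not_gt hm'
  calc ∑' j : ℤ, (if (2 : ℝ≥0∞) ^ j ≤ D then ((2 : ℝ≥0∞) ^ j) ^ q else 0)
      ≤ ∑' j : ℤ, (if j ≤ m then ((2 : ℝ≥0∞) ^ j) ^ q else 0) := by
        gcongr with j
        split_ifs with h h' <;> first | exact le_rfl | exact zero_le | exact absurd (hle j h) h'
    _ = ∑' i : ℕ, (2 : ℝ≥0∞) ^ (-(q * i)) * ((2 : ℝ≥0∞) ^ m) ^ q := by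
        rw [tsum_int_le_eq_tsum_nat]
        refine tsum_congr fun i => ?_
        rw [two_zpow_rpow, two_zpow_rpow, ← two_rpow_add]
        congr 1
        push_cast
        ring
    _ ≤ (∑' i : ℕ, (2 : ℝ≥0∞) ^ (-(q * i))) * D ^ q := by
        rw [ENNReal.tsum_mul_right]
        gcongr

lemma rpow_le_tsum_two_zpow_rpow {q : ℝ} (hq : 0 < q) (D : ℝ≥0∞) :
    D ^ q ≤ 2 ^ q * ∑' i : ℤ, (if (2 : ℝ≥0∞) ^ i < D then ((2 : ℝ≥0∞) ^ i) ^ q else 0) := by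
  obtain rfl | hD0 := eq_or_ne D 0
  · simp [ENNReal.zero_rpow_of_pos hq]
  obtain rfl | hDt := eq_or_ne D ∞
  · have htop : ∑' i : ℤ, (if (2 : ℝ≥0∞) ^ i < ∞ then ((2 : ℝ≥0∞) ^ i) ^ q else 0) = ∞ := by
      rw [eq_top_iff]
      refine (ENNReal.tsum_const_eq_top_of_ne_zero (α := ℕ) one_ne_zero).ge.trans <|
        le_trans (ENNReal.tsum_le_tsum fun i => ?_)
          (ENNReal.tsum_comp_le_tsum_of_injective Nat.cast_injective _)
      rw [if_pos (ENNReal.zpow_lt_top two_ne_zero ofNat_ne_top _), zpow_natCast]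
      exact ENNReal.one_le_rpow (one_le_pow₀ one_le_two) hq
    rw [htop, ENNReal.mul_top (two_rpow_ne_zero _)]
    exact le_top
  obtain ⟨m, hm, hm'⟩ := ENNReal.exists_mem_Ioc_zpow hD0 hDt one_lt_two ofNat_ne_top
  calc D ^ q ≤ ((2 : ℝ≥0∞) ^ (m + 1)) ^ q := ENNReal.rpow_le_rpow hm' hq.le
    _ = 2 ^ q * (2 ^ m) ^ q := by
        rw [two_zpow_rpow, two_zpow_rpow, ← two_rpow_add]
        congr 1
        push_cast
        ring
    _ ≤ _ := by
        gcongr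
        exact le_trans (if_pos hm).ge (ENNReal.le_tsum m)

lemma tsum_pow_le_pow_tsum {ι : Type*} (x : ι → ℝ≥0∞) (k : ℕ) :
    ∑' i, x i ^ (k + 1) ≤ (∑' i, x i) ^ (k + 1) := by
  simp only [pow_succ']
  rw [← ENNReal.tsum_mul_right]
  gcongr with i
  exact ENNReal.le_tsum i

end DyadicSums

section SequenceNorm

variable {q : ℝ≥0∞} {a b : ℤ → ℝ≥0∞}

lemma ellq_top (a : ℤ → ℝ≥0∞) : ellq ∞ a = ⨆ k, a k := if_pos rfl

lemma ellq_of_ne_top (hq : q ≠ ∞) (a : ℤ → ℝ≥0∞) :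
    ellq q a = (∑' k, a k ^ q.toReal) ^ (1 / q.toReal) := if_neg hq

lemma ellq_ofReal {r : ℝ} (hr : 0 < r) (a : ℤ → ℝ≥0∞) :
    ellq (ENNReal.ofReal r) a = (∑' k, a k ^ r) ^ (1 / r) := by
  rw [ellq_of_ne_top ofReal_ne_top, ENNReal.toReal_ofReal hr.le]

lemma ellq_mono (h : ∀ k, a k ≤ b k) : ellq q a ≤ ellq q b := by
  unfold ellq
  split_ifs
  · exact iSup_mono h
  · gcongr
    exact h _

lemma ellq_const_mul (hq : q ≠ 0) (c : ℝ≥0∞) (a : ℤ → ℝ≥0∞) :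
    ellq q (fun k => c * a k) = c * ellq q a := by
  obtain rfl | hqt := eq_or_ne q ∞
  · simp only [ellq_top, ENNReal.mul_iSup]
  · have hQ := ENNReal.toReal_pos hq hqt
    simp only [ellq_of_ne_top hqt, ENNReal.mul_rpow_of_nonneg _ _ hQ.le, ENNReal.tsum_mul_left]
    rw [ENNReal.mul_rpow_of_nonneg _ _ (by positivity), ← ENNReal.rpow_mul,
      mul_one_div_cancel hQ.ne', ENNReal.rpow_one]

lemma ellq_le_const_mul (hq : q ≠ 0) {c : ℝ≥0∞} (h : ∀ k, a k ≤ c * b k) :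
    ellq q a ≤ c * ellq q b :=
  (ellq_mono h).trans (ellq_const_mul hq c b).le

lemma lorentzNorm_eq_ellq {n : ℕ} (p : ℝ) (q : ℝ≥0∞) (F : Euc n → ℝ≥0∞) :
    lorentzNorm p q F = ellq q fun k => 2 ^ k * distFn F (2 ^ k) ^ (1 / p) := rfl

lemma le_ellq (hq : q ≠ 0) (a : ℤ → ℝ≥0∞) (k : ℤ) : a k ≤ ellq q a := by
  obtain rfl | hqt := eq_or_ne q ∞
  · exact (le_iSup a k).trans_eq (ellq_top a).symm
  · rw [ellq_of_ne_top hqt, one_div, ENNReal.le_rpow_inv_iff (ENNReal.toReal_pos hq hqt)]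
    exact ENNReal.le_tsum (f := fun k => a k ^ q.toReal) k

lemma exists_ellq_add_le {q : ℝ} (hq : 0 < q) : ∃ C ≠ ∞, ∀ a b : ℤ → ℝ≥0∞,
    ellq (ENNReal.ofReal q) (fun k => a k + b k) ≤
      C * (ellq (ENNReal.ofReal q) a + ellq (ENNReal.ofReal q) b) := by
  have hnorm : ∀ a : ℤ → ℝ≥0∞,
      ellq (ENNReal.ofReal q) a = eLpNorm a (ENNReal.ofReal q) Measure.count := fun a => by
    rw [ellq_ofReal hq, eLpNorm_eq_lintegral_rpow_enorm_toReal (by simpa using hq) ofReal_ne_top,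
      ENNReal.toReal_ofReal hq.le, lintegral_count]
    rfl
  refine ⟨_, (LpAddConst_lt_top (ENNReal.ofReal q)).ne, fun a b => ?_⟩
  simp only [hnorm]
  exact eLpNorm_add_le' (measurable_of_countable a).aestronglyMeasurable
    (measurable_of_countable b).aestronglyMeasurable _

end SequenceNorm

section GeometricConvolution

variable {δ σ : ℝ}

-- Half of the geometric decay replaces Hölder's inequality, so `τ < 1` is allowed.
lemma exists_rpow_tsum_two_rpow_mul_le {τ : ℝ} (hδ : 0 < δ) (hτ : 0 < τ) :
    ∃ C ≠ ∞, ∀ x : ℕ → ℝ≥0∞, (∑' i : ℕ, (2 : ℝ≥0∞) ^ (-(δ * i)) * x i) ^ τ ≤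
      C * ∑' i : ℕ, (2 : ℝ≥0∞) ^ (-(δ / 2 * τ * i)) * x i ^ τ := by
  refine ⟨(∑' i : ℕ, (2 : ℝ≥0∞) ^ (-(δ / 2 * i))) ^ τ,
    ENNReal.rpow_ne_top_of_nonneg hτ.le (tsum_two_rpow_ne_top (half_pos hδ)), fun x => ?_⟩
  set S := ∑' i : ℕ, (2 : ℝ≥0∞) ^ (-(δ / 2 * τ * i)) * x i ^ τ with hS
  have hterm (i : ℕ) : (2 : ℝ≥0∞) ^ (-(δ / 2 * i)) * x i ≤ S ^ (1 / τ) := by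
    rw [one_div, ENNReal.le_rpow_inv_iff hτ, two_rpow_mul_rpow _ _ hτ.le, hS]
    refine le_trans (le_of_eq ?_) (ENNReal.le_tsum i)
    ring_nf
  have hsum : ∑' i : ℕ, (2 : ℝ≥0∞) ^ (-(δ * i)) * x i ≤
      (∑' i : ℕ, (2 : ℝ≥0∞) ^ (-(δ / 2 * i))) * S ^ (1 / τ) := by
    rw [← ENNReal.tsum_mul_right]
    refine ENNReal.tsum_le_tsum fun i => ?_
    calc (2 : ℝ≥0∞) ^ (-(δ * i)) * x i = 2 ^ (-(δ / 2 * i)) * (2 ^ (-(δ / 2 * i)) * x i) := by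
          rw [← mul_assoc, ← two_rpow_add]
          ring_nf
      _ ≤ _ := by gcongr; exact hterm i
  refine (ENNReal.rpow_le_rpow hsum hτ.le).trans_eq ?_
  rw [ENNReal.mul_rpow_of_nonneg _ _ hτ.le, ← ENNReal.rpow_mul, one_div_mul_cancel hτ.ne',
    ENNReal.rpow_one]

lemma exists_iSup_geometric_convolution_le (hδ : 0 < δ) (hσ : 0 < σ) :
    ∃ C ≠ ∞, ∀ (φ : ℕ → ℤ) (a : ℤ → ℝ≥0∞),
      ⨆ l, (∑' i : ℕ, (2 : ℝ≥0∞) ^ (-(δ * i)) * a (l + φ i) ^ σ) ^ (1 / σ) ≤ C * ⨆ k, a k := by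
  refine ⟨(∑' i : ℕ, (2 : ℝ≥0∞) ^ (-(δ * i))) ^ (1 / σ),
    ENNReal.rpow_ne_top_of_nonneg (by positivity) (tsum_two_rpow_ne_top hδ),
    fun φ a => iSup_le fun l => ?_⟩
  calc (∑' i : ℕ, (2 : ℝ≥0∞) ^ (-(δ * i)) * a (l + φ i) ^ σ) ^ (1 / σ)
      ≤ ((∑' i : ℕ, (2 : ℝ≥0∞) ^ (-(δ * i))) * (⨆ k, a k) ^ σ) ^ (1 / σ) := by
        rw [← ENNReal.tsum_mul_right]
        gcongr
        exact le_iSup a _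
    _ = _ := by
        rw [ENNReal.mul_rpow_of_nonneg _ _ (by positivity), ← ENNReal.rpow_mul,
          mul_one_div_cancel hσ.ne', ENNReal.rpow_one]

lemma exists_tsum_geometric_convolution_le {r : ℝ} (hδ : 0 < δ) (hσ : 0 < σ) (hr : 0 < r) :
    ∃ C ≠ ∞, ∀ (φ : ℕ → ℤ) (a : ℤ → ℝ≥0∞),
      ∑' l, ((∑' i : ℕ, (2 : ℝ≥0∞) ^ (-(δ * i)) * a (l + φ i) ^ σ) ^ (1 / σ)) ^ r ≤
        C * ∑' k, a k ^ r := by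
  obtain ⟨C, hC, hpoint⟩ := exists_rpow_tsum_two_rpow_mul_le hδ (div_pos hr hσ)
  set W := ∑' i : ℕ, (2 : ℝ≥0∞) ^ (-(δ / 2 * (r / σ) * i)) with hW
  refine ⟨C * W, ENNReal.mul_ne_top hC (tsum_two_rpow_ne_top (by positivity)), fun φ a => ?_⟩
  calc ∑' l, ((∑' i : ℕ, (2 : ℝ≥0∞) ^ (-(δ * i)) * a (l + φ i) ^ σ) ^ (1 / σ)) ^ r
      ≤ ∑' l, C * ∑' i : ℕ, (2 : ℝ≥0∞) ^ (-(δ / 2 * (r / σ) * i)) * a (l + φ i) ^ r := by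
        gcongr with l
        have h := hpoint fun i => a (l + φ i) ^ σ
        simp only [← ENNReal.rpow_mul _ σ, mul_div_cancel₀ r hσ.ne'] at h
        rwa [← ENNReal.rpow_mul, one_div_mul_eq_div]
    _ = C * ∑' i : ℕ, ∑' l, (2 : ℝ≥0∞) ^ (-(δ / 2 * (r / σ) * i)) * a (l + φ i) ^ r := by
        rw [ENNReal.tsum_mul_left, ENNReal.tsum_comm]
    _ = C * W * ∑' k, a k ^ r := by
        rw [mul_assoc, hW, ← ENNReal.tsum_mul_right]
        congr 1
        refine tsum_congr fun i => ?_
        rw [ENNReal.tsum_mul_left]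
        congr 1
        exact (Equiv.addRight (φ i)).tsum_eq fun k => a k ^ r

lemma exists_ellq_geometric_convolution_le {q : ℝ≥0∞} (hδ : 0 < δ) (hσ : 0 < σ) (hq : q ≠ 0) :
    ∃ C ≠ ∞, ∀ (φ : ℕ → ℤ) (a : ℤ → ℝ≥0∞),
      ellq q (fun l => (∑' i : ℕ, (2 : ℝ≥0∞) ^ (-(δ * i)) * a (l + φ i) ^ σ) ^ (1 / σ)) ≤
        C * ellq q a := by
  obtain rfl | hqt := eq_or_ne q ∞
  · simpa only [ellq_top] using exists_iSup_geometric_convolution_le hδ hσ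
  · have hQ : 0 < 1 / q.toReal := one_div_pos.2 (ENNReal.toReal_pos hq hqt)
    obtain ⟨C, hC, h⟩ :=
      exists_tsum_geometric_convolution_le hδ hσ (ENNReal.toReal_pos hq hqt)
    refine ⟨C ^ (1 / q.toReal), ENNReal.rpow_ne_top_of_nonneg hQ.le hC, fun φ a => ?_⟩
    rw [ellq_of_ne_top hqt, ellq_of_ne_top hqt, ← ENNReal.mul_rpow_of_nonneg _ _ hQ.le]
    exact ENNReal.rpow_le_rpow (h φ a) hQ.le

end GeometricConvolution

/-! ### Dyadic rearrangements and interpolation of sequence spaces -/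

section Rearrangement

variable {ι : Type*} {a : ι → ℝ≥0∞}

/-- The number of indices at which `a` exceeds the level `s`. -/
def countAbove (a : ι → ℝ≥0∞) (s : ℝ≥0∞) : ℝ≥0∞ := ∑' k, if s < a k then 1 else 0

/-- The decreasing rearrangement of `a`, sampled at the dyadic number `2 ^ l` of indices. -/
def dyadicRearr (a : ι → ℝ≥0∞) (l : ℤ) : ℝ≥0∞ := sInf {s | countAbove a s ≤ 2 ^ l}

lemma countAbove_mul_rpow_le (a : ι → ℝ≥0∞) (s : ℝ≥0∞) {q : ℝ} (hq : 0 ≤ q) :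
    countAbove a s * s ^ q ≤ ∑' k, a k ^ q := by
  rw [countAbove, ← ENNReal.tsum_mul_right]
  gcongr with k
  split_ifs with h
  · rw [one_mul]
    gcongr
  · simp

lemma countAbove_dyadicRearr_le (a : ι → ℝ≥0∞) (l : ℤ) :
    countAbove a (dyadicRearr a l) ≤ 2 ^ l := by
  rw [countAbove, ENNReal.tsum_eq_iSup_sum]
  refine iSup_le fun F => ?_
  obtain hF | hF := (F.filter fun k => dyadicRearr a l < a k).eq_empty_or_nonempty
  · rw [Finset.filter_eq_empty_iff] at hF
    rw [Finset.sum_eq_zero fun k hk => if_neg (hF hk)]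
    exact zero_le
  · have hlt : dyadicRearr a l < (F.filter fun k => dyadicRearr a l < a k).inf' hF a :=
      (Finset.lt_inf'_iff _).2 fun k hk => (Finset.mem_filter.1 hk).2
    obtain ⟨s, hs, hs_lt⟩ := sInf_lt_iff.1 hlt
    refine le_trans (Finset.sum_le_sum fun k hk => ?_) ((ENNReal.sum_le_tsum F).trans hs)
    split_ifs with h h' <;> first | exact le_rfl | exact zero_le | skip
    exact absurd (hs_lt.trans_le (Finset.inf'_le _ (Finset.mem_filter.2 ⟨hk, h⟩))) h'

lemma dyadicRearr_antitone (a : ι → ℝ≥0∞) : Antitone (dyadicRearr a) := fun _ _ h =>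
  sInf_le_sInf fun _ hs => le_trans hs (two_zpow_mono h)

lemma two_zpow_lt_countAbove {l : ℤ} {s : ℝ≥0∞} (h : s < dyadicRearr a l) :
    2 ^ l < countAbove a s :=
  not_le.1 fun hle => h.not_ge (sInf_le hle)

lemma le_dyadicRearr_of_neg (a : ι → ℝ≥0∞) {l : ℤ} (hl : l < 0) (k : ι) :
    a k ≤ dyadicRearr a l := by
  by_contra! h
  have hone : 1 ≤ countAbove a (dyadicRearr a l) := (if_pos h).ge.trans (ENNReal.le_tsum k)
  have hlt : (2 : ℝ≥0∞) ^ l < 1 := by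
    rw [← ENNReal.rpow_intCast]
    exact ENNReal.rpow_lt_one_of_one_lt_of_neg one_lt_two (by exact_mod_cast hl)
  exact (hone.trans (countAbove_dyadicRearr_le a l)).not_gt hlt

lemma finite_dyadicRearr_lt (a : ι → ℝ≥0∞) (l : ℤ) : {k | dyadicRearr a l < a k}.Finite := by
  have h : countAbove a (dyadicRearr a l) ≠ ∞ :=
    ne_top_of_le_ne_top (ENNReal.zpow_ne_top two_ne_zero ofNat_ne_top _)
      (countAbove_dyadicRearr_le a l)
  exact (ENNReal.finite_const_le_of_tsum_ne_top h one_ne_zero).subset fun k hk => by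
    simp only [mem_ofPred_eq] at hk ⊢
    rw [if_pos hk]

lemma exists_dyadicRearr_lt {q : ℝ} (hq : 0 ≤ q) (ha : ∑' k, a k ^ q ≠ ∞) {x : ℝ≥0∞}
    (hx : x ≠ 0) : ∃ l, dyadicRearr a l < x := by
  obtain ⟨s, hs, hsx⟩ := exists_between (pos_iff_ne_zero.2 hx)
  have hmul : countAbove a s * s ^ q ≠ ∞ := ne_top_of_le_ne_top ha (countAbove_mul_rpow_le a s hq)
  have hcount := ENNReal.lt_top_of_mul_ne_top_left hmul
    (ENNReal.rpow_pos hs hsx.ne_top).ne'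
  obtain ⟨l, hl⟩ := exists_le_two_zpow hcount.ne
  exact ⟨l, lt_of_le_of_lt (sInf_le hl) hsx⟩

lemma exists_dyadicRearr_lt_le {x : ℝ≥0∞} {l₀ l₁ : ℤ} (h₀ : x ≤ dyadicRearr a l₀)
    (h₁ : dyadicRearr a l₁ < x) :
    ∃ l, l₀ ≤ l ∧ l < l₁ ∧ dyadicRearr a (l + 1) < x ∧ x ≤ dyadicRearr a l := by
  have hlt {l : ℤ} (hl : x ≤ dyadicRearr a l) : l < l₁ :=
    not_le.1 fun h => (h₁.trans_le hl).not_ge (dyadicRearr_antitone a h)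
  obtain ⟨l, hl, hmax⟩ := Int.exists_greatest_of_bdd ⟨l₁, fun l hl => (hlt hl).le⟩ ⟨l₀, h₀⟩
  refine ⟨l, hmax l₀ h₀, hlt hl, not_le.1 fun h => ?_, hl⟩
  exact absurd (hmax _ h) (by omega)

lemma exists_tsum_dyadicRearr_rpow_le {q : ℝ} (hq : 0 < q) :
    ∃ C ≠ ∞, ∀ a : ι → ℝ≥0∞, ∑' l : ℤ, 2 ^ l * dyadicRearr a l ^ q ≤ C * ∑' k, a k ^ q := by
  obtain ⟨C₁, hC₁, h₁⟩ := exists_tsum_two_zpow_rpow_le hq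
  obtain ⟨C₂, hC₂, h₂⟩ := exists_tsum_two_zpow_rpow_le one_pos
  simp only [ENNReal.rpow_one] at h₂
  refine ⟨2 ^ q * (C₂ * C₁), by finiteness, fun a => ?_⟩
  calc ∑' l : ℤ, 2 ^ l * dyadicRearr a l ^ q
      ≤ ∑' l : ℤ, 2 ^ l * (2 ^ q * ∑' i : ℤ,
          (if (2 : ℝ≥0∞) ^ i < dyadicRearr a l then ((2 : ℝ≥0∞) ^ i) ^ q else 0)) := by
        gcongr
        exact rpow_le_tsum_two_zpow_rpow hq _
    _ = 2 ^ q * ∑' i : ℤ, ∑' l : ℤ, ((2 : ℝ≥0∞) ^ i) ^ q *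
          (if (2 : ℝ≥0∞) ^ i < dyadicRearr a l then 2 ^ l else 0) := by
        rw [ENNReal.tsum_comm, ← ENNReal.tsum_mul_left]
        refine tsum_congr fun l => ?_
        rw [mul_left_comm, ← ENNReal.tsum_mul_left]
        congr 1
        refine tsum_congr fun i => ?_
        split_ifs <;> ring
    _ ≤ 2 ^ q * ∑' i : ℤ, ((2 : ℝ≥0∞) ^ i) ^ q * (C₂ * countAbove a (2 ^ i)) := by
        gcongr with i
        rw [ENNReal.tsum_mul_left]
        gcongr
        refine le_trans (ENNReal.tsum_le_tsum fun l => ?_) (h₂ _)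
        split_ifs with h h' <;> first | exact le_rfl | exact zero_le | skip
        exact absurd (two_zpow_lt_countAbove h).le h'
    _ = 2 ^ q * (C₂ * ∑' k, ∑' i : ℤ,
          (if (2 : ℝ≥0∞) ^ i < a k then ((2 : ℝ≥0∞) ^ i) ^ q else 0)) := by
        congr 1
        rw [ENNReal.tsum_comm (α := ι), ← ENNReal.tsum_mul_left]
        refine tsum_congr fun i => ?_
        rw [mul_left_comm, countAbove, ← ENNReal.tsum_mul_left]
        simp only [mul_ite, mul_one, mul_zero]
    _ ≤ 2 ^ q * (C₂ * ∑' k, C₁ * a k ^ q) := by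
        gcongr with k
        refine le_trans (ENNReal.tsum_le_tsum fun i => ?_) (h₁ (a k))
        split_ifs with h h' <;> first | exact le_rfl | exact zero_le | exact absurd h.le h'
    _ = 2 ^ q * (C₂ * C₁) * ∑' k, a k ^ q := by
        rw [ENNReal.tsum_mul_left]
        ring

lemma tsum_rpow_le_of_dyadicRearr {b : ι → ℝ≥0∞} {P : ℤ → Prop} [DecidablePred P] {r : ℝ}
    (hr : 0 < r)
    (hb : ∀ k, b k ≠ 0 → ∃ l, P l ∧ dyadicRearr a (l + 1) < a k ∧ b k ≤ dyadicRearr a l) :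
    ∑' k, b k ^ r ≤ ∑' l : ℤ, if P l then 2 ^ (l + 1) * dyadicRearr a l ^ r else 0 := by
  have hterm (k : ι) : b k ^ r ≤ ∑' l : ℤ, (if P l then
      (if dyadicRearr a (l + 1) < a k then 1 else 0) * dyadicRearr a l ^ r else 0) := by
    obtain h0 | h0 := eq_or_ne (b k) 0
    · simp [h0, ENNReal.zero_rpow_of_pos hr]
    · obtain ⟨l, hPl, hlt, hle⟩ := hb k h0
      refine le_trans ?_ (ENNReal.le_tsum l)
      rw [if_pos hPl, if_pos hlt, one_mul]
      gcongr
  refine (ENNReal.tsum_le_tsum hterm).trans ?_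
  rw [ENNReal.tsum_comm]
  gcongr with l
  split_ifs
  · rw [ENNReal.tsum_mul_right]
    gcongr
    exact countAbove_dyadicRearr_le a (l + 1)
  · simp

lemma tsum_head_rpow_le (a : ι → ℝ≥0∞) {r : ℝ} (hr : 0 < r) (m : ℤ) :
    ∑' k, {k | dyadicRearr a m < a k}.indicator a k ^ r ≤
      ∑' i : ℕ, 2 ^ (m + (-1 - i : ℤ) + 1) * dyadicRearr a (m + (-1 - i)) ^ r := by
  refine (tsum_rpow_le_of_dyadicRearr (a := a) (P := (· ≤ m - 1)) hr fun k hk => ?_).trans_eq ?_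
  · have hmk : k ∈ {k | dyadicRearr a m < a k} := Set.mem_of_indicator_ne_zero hk
    rw [Set.indicator_of_mem hmk]
    obtain ⟨l, -, hlm, hlt, hle⟩ :=
      exists_dyadicRearr_lt_le (le_dyadicRearr_of_neg a neg_one_lt_zero k) hmk
    exact ⟨l, by omega, hlt, hle⟩
  · rw [tsum_int_le_eq_tsum_nat]
    refine tsum_congr fun i => ?_
    rw [← add_sub_assoc, ← sub_eq_add_neg]

lemma tsum_tail_rpow_le {q r : ℝ} (hq : 0 ≤ q) (ha : ∑' k, a k ^ q ≠ ∞) (hr : 0 < r) (m : ℤ) :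
    ∑' k, {k | dyadicRearr a m < a k}ᶜ.indicator a k ^ r ≤
      ∑' i : ℕ, 2 ^ (m + (i : ℤ) + 1) * dyadicRearr a (m + i) ^ r := by
  refine (tsum_rpow_le_of_dyadicRearr (a := a) (P := (m - 1 < ·)) hr fun k hk => ?_).trans_eq ?_
  · have hkm : k ∈ {k | dyadicRearr a m < a k}ᶜ := Set.mem_of_indicator_ne_zero hk
    rw [Set.indicator_of_mem hkm] at hk ⊢
    obtain ⟨l₁, hl₁⟩ := exists_dyadicRearr_lt hq ha hk
    obtain ⟨l, hml, -, hlt, hle⟩ := exists_dyadicRearr_lt_le (not_lt.1 hkm) hl₁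
    exact ⟨l, by omega, hlt, hle⟩
  · rw [tsum_int_gt_eq_tsum_nat]
    refine tsum_congr fun i => ?_
    rw [sub_add_cancel]

end Rearrangement

section SequenceInterpolation

variable {q : ℝ}

lemma exists_ellq_dyadicRearr_le (hq : 0 < q) : ∃ C ≠ ∞, ∀ a : ℤ → ℝ≥0∞,
    ellq (ENNReal.ofReal q) (fun l => 2 ^ (l / q : ℝ) * dyadicRearr a l) ≤
      C * ellq (ENNReal.ofReal q) a := by
  obtain ⟨C, hC, h⟩ := exists_tsum_dyadicRearr_rpow_le (ι := ℤ) hq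
  refine ⟨C ^ (1 / q), ENNReal.rpow_ne_top_of_nonneg (by positivity) hC, fun a => ?_⟩
  rw [ellq_ofReal hq, ellq_ofReal hq, ← ENNReal.mul_rpow_of_nonneg _ _ (by positivity)]
  gcongr
  simpa only [two_rpow_mul_rpow _ _ hq.le, div_mul_cancel₀ _ hq.ne', ENNReal.rpow_intCast] using h a

-- Both the head (`φ i = -1 - i`, `r < q`) and the tail (`φ i = i`, `q < r`) have this form.
lemma exists_ellq_layers_le {r δ κ : ℝ} (hq : 0 < q) (hr : 0 < r) (hδ : 0 < δ) (φ : ℕ → ℤ)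
    (hφ : ∀ i : ℕ, 1 + φ i * (1 - r / q) = κ - δ * i) : ∃ C ≠ ∞, ∀ a : ℤ → ℝ≥0∞,
    ellq (ENNReal.ofReal q) (fun m => 2 ^ (m * (1 / q - 1 / r)) *
        (∑' i : ℕ, 2 ^ (m + φ i + 1) * dyadicRearr a (m + φ i) ^ r) ^ (1 / r)) ≤
      C * ellq (ENNReal.ofReal q) a := by
  have hq0 : ENNReal.ofReal q ≠ 0 := by simpa using hq
  obtain ⟨C₁, hC₁, hrearr⟩ := exists_ellq_dyadicRearr_le hq
  obtain ⟨C₂, hC₂, hconv⟩ := exists_ellq_geometric_convolution_le hδ hr hq0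
  refine ⟨2 ^ (κ / r) * (C₂ * C₁), ENNReal.mul_ne_top (two_rpow_ne_top _)
    (ENNReal.mul_ne_top hC₂ hC₁), fun a => ?_⟩
  have hweight (m : ℤ) : 2 ^ (m * (1 / q - 1 / r)) *
      (∑' i : ℕ, 2 ^ (m + φ i + 1) * dyadicRearr a (m + φ i) ^ r) ^ (1 / r) =
      2 ^ (κ / r) * (∑' i : ℕ, 2 ^ (-(δ * i)) *
        (2 ^ ((m + φ i : ℤ) / q : ℝ) * dyadicRearr a (m + φ i)) ^ r) ^ (1 / r) := by
    rw [two_rpow_mul_rpow_inv _ _ hr, two_rpow_mul_rpow_inv _ _ hr, ← ENNReal.tsum_mul_left,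
      ← ENNReal.tsum_mul_left]
    congr 1
    refine tsum_congr fun i => ?_
    rw [two_rpow_mul_rpow _ _ hr.le, ← ENNReal.rpow_intCast]
    simp only [← mul_assoc, ← two_rpow_add]
    congr 2
    have hexp : m * (1 / q - 1 / r) * r = m * (r / q) - m := by field_simp
    rw [hexp, div_mul_cancel₀ κ hr.ne']
    push_cast
    linear_combination hφ i
  calc _ ≤ 2 ^ (κ / r) * ellq (ENNReal.ofReal q) _ :=
        ellq_le_const_mul hq0 fun m => (hweight m).le
    _ ≤ 2 ^ (κ / r) * (C₂ * (C₁ * ellq (ENNReal.ofReal q) a)) := by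
        gcongr
        exact (hconv φ fun l => 2 ^ (l / q : ℝ) * dyadicRearr a l).trans
          (mul_le_mul_right (hrearr a) _)
    _ = _ := by ring

lemma exists_ellq_head_le {r : ℝ} (hr : 0 < r) (hrq : r < q) : ∃ C ≠ ∞, ∀ a : ℤ → ℝ≥0∞,
    ellq (ENNReal.ofReal q) (fun m => 2 ^ (m * (1 / q - 1 / r)) *
        ellq (ENNReal.ofReal r) ({k | dyadicRearr a m < a k}.indicator a)) ≤
      C * ellq (ENNReal.ofReal q) a := by
  have hq : 0 < q := hr.trans hrq
  have hδ : 0 < 1 - r / q := sub_pos.2 ((div_lt_one hq).2 hrq)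
  obtain ⟨C, hC, h⟩ := exists_ellq_layers_le (κ := r / q) hq hr hδ (fun i => -1 - i) fun i => by
    push_cast
    ring
  refine ⟨C, hC, fun a => (ellq_mono fun m => ?_).trans (h a)⟩
  rw [ellq_ofReal hr]
  gcongr
  exact tsum_head_rpow_le a hr m

lemma exists_ellq_tail_le {r : ℝ≥0∞} (hq : 0 < q) (hqr : ENNReal.ofReal q < r) :
    ∃ C ≠ ∞, ∀ a : ℤ → ℝ≥0∞, ∑' k, a k ^ q ≠ ∞ →
      ellq (ENNReal.ofReal q) (fun m => 2 ^ (m * (1 / q - 1 / r.toReal)) *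
        ellq r ({k | dyadicRearr a m < a k}ᶜ.indicator a)) ≤ C * ellq (ENNReal.ofReal q) a := by
  obtain rfl | hrt := eq_or_ne r ∞
  · obtain ⟨C, hC, h⟩ := exists_ellq_dyadicRearr_le hq
    refine ⟨C, hC, fun a _ => (ellq_mono fun m => ?_).trans (h a)⟩
    rw [ENNReal.toReal_top, _root_.div_zero, _root_.sub_zero, mul_one_div, ellq_top]
    gcongr
    exact iSup_le fun k => Set.indicator_le' (fun _ => not_lt.1) (fun _ _ => zero_le) k
  · have hqr' : q < r.toReal := (ENNReal.ofReal_lt_iff_lt_toReal hq.le hrt).1 hqr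
    have hr := hq.trans hqr'
    have hδ : 0 < r.toReal / q - 1 := sub_pos.2 ((one_lt_div hq).2 hqr')
    obtain ⟨C, hC, h⟩ := exists_ellq_layers_le (κ := 1) hq hr hδ (fun i => i) fun i => by
      push_cast
      ring
    refine ⟨C, hC, fun a ha => (ellq_mono fun m => ?_).trans (h a)⟩
    rw [ellq_of_ne_top hrt]
    gcongr
    exact tsum_tail_rpow_le hq.le ha hr m

end SequenceInterpolation

/-! ### Marcinkiewicz integrals and change of aperture -/

section DistanceToComplement

variable {E : Type*} [PseudoMetricSpace E] {Ω : Set E} {x z : E}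

/-- The distance from `z` to the complement of `Ω`. -/
def distCompl (Ω : Set E) (z : E) : ℝ := Metric.infDist z Ωᶜ

/-- The ratio `d / (d + |x - z|)`, where `d` is the distance from `z` to the complement of `Ω`; it
measures how close `x` is to `z` at the scale of a Whitney ball around `z`. -/
def relDist (Ω : Set E) (x z : E) : ℝ := distCompl Ω z / (distCompl Ω z + dist x z)

lemma distCompl_nonneg (Ω : Set E) (z : E) : 0 ≤ distCompl Ω z := Metric.infDist_nonneg

@[fun_prop]
lemma continuous_distCompl (Ω : Set E) : Continuous (distCompl Ω) :=
  Metric.continuous_infDist_pt _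

lemma distCompl_le_add_dist (Ω : Set E) (x z : E) : distCompl Ω x ≤ distCompl Ω z + dist x z :=
  Metric.infDist_le_infDist_add_dist

lemma distCompl_le_dist (hx : x ∉ Ω) (z : E) : distCompl Ω z ≤ dist x z := by
  rw [dist_comm]
  exact Metric.infDist_le_dist_of_mem hx

lemma distCompl_pos (hΩ : IsOpen Ω) (hne : Ωᶜ.Nonempty) (hz : z ∈ Ω) : 0 < distCompl Ω z :=
  (hΩ.isClosed_compl.notMem_iff_infDist_pos hne).1 (by simpa using hz)

lemma mem_of_distCompl_pos (hz : 0 < distCompl Ω z) : z ∈ Ω := by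
  by_contra h
  exact hz.ne' (Metric.infDist_zero_of_mem h)

lemma relDist_nonneg (Ω : Set E) (x z : E) : 0 ≤ relDist Ω x z :=
  div_nonneg (distCompl_nonneg _ _) (add_nonneg (distCompl_nonneg _ _) dist_nonneg)

lemma relDist_self (hx : 0 < distCompl Ω x) : relDist Ω x x = 1 := by
  rw [relDist, dist_self, add_zero, div_self hx.ne']

lemma relDist_div_four_le {z₀ : E} (hd : 0 < distCompl Ω z₀)
    (hz : z ∈ Metric.ball z₀ (distCompl Ω z₀ / 2)) (x : E) :
    relDist Ω x z₀ / 4 ≤ relDist Ω x z := by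
  rw [Metric.mem_ball] at hz
  have hlow := distCompl_le_add_dist Ω z₀ z
  have hup := distCompl_le_add_dist Ω z z₀
  have htri := dist_triangle x z₀ z
  rw [dist_comm] at hlow
  rw [dist_comm z₀ z] at htri
  have hx : 0 ≤ dist x z₀ := dist_nonneg
  have hx' : 0 ≤ dist x z := dist_nonneg
  rw [relDist, relDist, div_div, div_le_div_iff₀ (by positivity) (by linarith)]
  nlinarith

end DistanceToComplement

section MarcinkiewiczIntegral

variable {n : ℕ}

/-- The Marcinkiewicz integral `∫_Ω d(z) / (d(z) + |x - z|) ^ (n + 1) dz` of the distance `d` to the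
complement of `Ω`. -/
def marcinkiewicz (Ω : Set (Euc n)) (x : Euc n) : ℝ≥0∞ :=
  ∫⁻ z in Ω, ENNReal.ofReal (relDist Ω x z ^ (n + 1) / distCompl Ω z ^ n)

lemma measurable_marcinkiewicz_integrand {α : Type*} [MeasurableSpace α] (Ω : Set (Euc n))
    {u v : α → Euc n} (hu : Measurable u) (hv : Measurable v) :
    Measurable fun a =>
      ENNReal.ofReal (relDist Ω (u a) (v a) ^ (n + 1) / distCompl Ω (v a) ^ n) := by
  have hd : Measurable fun a => distCompl Ω (v a) := (continuous_distCompl Ω).measurable.comp hv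
  exact (((hd.div (hd.add (hu.dist hv))).pow_const _).div (hd.pow_const _)).ennreal_ofReal

lemma measurable_marcinkiewicz (Ω : Set (Euc n)) : Measurable (marcinkiewicz Ω) :=
  (measurable_marcinkiewicz_integrand Ω measurable_fst measurable_snd).lintegral_prod_right'

lemma lintegral_comp_inv_smul_sub {g : Euc n → ℝ≥0∞} (hg : Measurable g) {d : ℝ} (hd : 0 < d)
    (z : Euc n) : ∫⁻ x, g (d⁻¹ • (x - z)) = ENNReal.ofReal (d ^ n) * ∫⁻ x, g x := by
  rw [lintegral_sub_right_eq_self (fun x => g (d⁻¹ • x)) z,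
    ← lintegral_map hg (measurable_const_smul d⁻¹),
    Measure.map_addHaar_smul volume (inv_ne_zero hd.ne'), lintegral_smul_measure, smul_eq_mul,
    finrank_euclideanSpace_fin, inv_pow, inv_inv, abs_of_pos (by positivity)]

lemma volume_euc_ball (z : Euc n) {r : ℝ} (hr : 0 < r) :
    volume (Metric.ball z r) = ENNReal.ofReal (r ^ n) * volume (Metric.ball (0 : Euc n) 1) := by
  simpa using Measure.addHaar_ball_of_pos (volume : Measure (Euc n)) z hr

lemma relDist_eq_rpow {Ω : Set (Euc n)} {z : Euc n} (hd : 0 < distCompl Ω z) (x : Euc n) :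
    relDist Ω x z ^ (n + 1) =
      (1 + ‖(distCompl Ω z)⁻¹ • (x - z)‖) ^ (-((n : ℝ) + 1)) := by
  rw [norm_smul, Real.norm_of_nonneg (inv_nonneg.2 hd.le), ← dist_eq_norm, relDist]
  set d := distCompl Ω z
  have hpos : 0 < 1 + d⁻¹ * dist x z := by positivity
  have hratio : d / (d + dist x z) = (1 + d⁻¹ * dist x z)⁻¹ := by
    have : 0 ≤ dist x z := dist_nonneg
    field_simp
  rw [Real.rpow_neg hpos.le, hratio, inv_pow]
  norm_cast

lemma exists_lintegral_marcinkiewicz_le (n : ℕ) :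
    ∃ C ≠ ∞, ∀ Ω : Set (Euc n), IsOpen Ω → Ωᶜ.Nonempty →
      ∫⁻ x, marcinkiewicz Ω x ≤ C * volume Ω := by
  refine ⟨∫⁻ x : Euc n, ENNReal.ofReal ((1 + ‖x‖) ^ (-((n : ℝ) + 1))),
    (finite_integral_one_add_norm (by simp)).ne, fun Ω hΩ hne => ?_⟩
  unfold marcinkiewicz
  rw [lintegral_lintegral_swap
      (measurable_marcinkiewicz_integrand Ω measurable_fst measurable_snd).aemeasurable,
    ← setLIntegral_const]
  refine setLIntegral_mono' hΩ.measurableSet fun z hz => ?_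
  have hd := distCompl_pos hΩ hne hz
  have hscale := lintegral_comp_inv_smul_sub
    (g := fun x : Euc n => ENNReal.ofReal ((1 + ‖x‖) ^ (-((n : ℝ) + 1)))) (by fun_prop) hd z
  simp only [relDist_eq_rpow hd, div_eq_inv_mul _ (distCompl Ω z ^ n),
    ENNReal.ofReal_mul (inv_nonneg.2 (pow_nonneg hd.le n))]
  rw [lintegral_const_mul _ (by fun_prop), hscale, ← mul_assoc,
    ← ENNReal.ofReal_mul (by positivity), inv_mul_cancel₀ (by positivity), ENNReal.ofReal_one,
    one_mul]

-- On the Whitney ball around `z₀` the integrand is comparable to its value at `z₀`.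
lemma relDist_pow_le_marcinkiewicz {Ω : Set (Euc n)} {z₀ : Euc n} (hd : 0 < distCompl Ω z₀)
    (x : Euc n) :
    ENNReal.ofReal ((1 / 4) ^ (n + 1) * (1 / 3) ^ n) * volume (Metric.ball (0 : Euc n) 1) *
      ENNReal.ofReal (relDist Ω x z₀ ^ (n + 1)) ≤ marcinkiewicz Ω x := by
  have hx := relDist_nonneg Ω x z₀
  set d := distCompl Ω z₀
  have hball : ∀ z ∈ Metric.ball z₀ (d / 2), d / 2 ≤ distCompl Ω z ∧ distCompl Ω z ≤ 3 * d / 2 := by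
    intro z hz
    rw [Metric.mem_ball] at hz
    have hup := distCompl_le_add_dist Ω z z₀
    have hlow := distCompl_le_add_dist Ω z₀ z
    rw [dist_comm] at hlow
    constructor <;> linarith
  have hsub : Metric.ball z₀ (d / 2) ⊆ Ω := fun z hz =>
    mem_of_distCompl_pos ((half_pos hd).trans_le (hball z hz).1)
  calc _ = ∫⁻ z in Metric.ball z₀ (d / 2),
          ENNReal.ofReal ((relDist Ω x z₀ / 4) ^ (n + 1) / (3 * d / 2) ^ n) := by
        rw [setLIntegral_const, volume_euc_ball z₀ (half_pos hd), ← mul_assoc,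
          ← ENNReal.ofReal_mul (by positivity), mul_right_comm,
          ← ENNReal.ofReal_mul (by positivity)]
        have hthree : (3 * d / 2) ^ n = 3 ^ n * (d / 2) ^ n := by rw [← mul_pow]; ring
        have hd2 : (d / 2) ^ n ≠ 0 := by positivity
        congr 2
        rw [hthree, one_div_pow, one_div_pow, div_pow (relDist Ω x z₀)]
        field_simp
    _ ≤ ∫⁻ z in Metric.ball z₀ (d / 2),
          ENNReal.ofReal (relDist Ω x z ^ (n + 1) / distCompl Ω z ^ n) := by
        refine setLIntegral_mono' measurableSet_ball fun z hz => ENNReal.ofReal_le_ofReal ?_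
        obtain ⟨hlow, hup⟩ := hball z hz
        have hz0 : 0 < distCompl Ω z := (half_pos hd).trans_le hlow
        have := relDist_nonneg Ω x z
        have := relDist_div_four_le hd hz x
        gcongr
    _ ≤ marcinkiewicz Ω x := lintegral_mono_set hsub

lemma exists_relDist_pow_le_marcinkiewicz (n : ℕ) :
    ∃ C ≠ ∞, ∀ Ω : Set (Euc n), IsOpen Ω → Ωᶜ.Nonempty → ∀ x, ∀ z ∈ Ω,
      ENNReal.ofReal (relDist Ω x z ^ (n + 1)) ≤ C * marcinkiewicz Ω x := by
  set c : ℝ≥0∞ := ENNReal.ofReal ((1 / 4) ^ (n + 1) * (1 / 3) ^ n) *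
    volume (Metric.ball (0 : Euc n) 1)
  have hc0 : c ≠ 0 := mul_ne_zero (ENNReal.ofReal_pos.2 (by positivity)).ne'
    (Metric.measure_ball_pos _ _ one_pos).ne'
  have hct : c ≠ ∞ := ENNReal.mul_ne_top ofReal_ne_top measure_ball_lt_top.ne
  refine ⟨c⁻¹, ENNReal.inv_ne_top.2 hc0, fun Ω hΩ hne x z hz => ?_⟩
  rw [← ENNReal.mul_le_iff_le_inv hc0 hct]
  exact relDist_pow_le_marcinkiewicz (distCompl_pos hΩ hne hz) x

lemma exists_one_le_marcinkiewicz (n : ℕ) :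
    ∃ C ≠ ∞, ∀ Ω : Set (Euc n), IsOpen Ω → Ωᶜ.Nonempty → ∀ x ∈ Ω,
      1 ≤ C * marcinkiewicz Ω x := by
  obtain ⟨C, hC, h⟩ := exists_relDist_pow_le_marcinkiewicz n
  refine ⟨C, hC, fun Ω hΩ hne x hx => ?_⟩
  simpa [relDist_self (distCompl_pos hΩ hne hx)] using h Ω hΩ hne x x hx

lemma exists_setLIntegral_relDist_pow_le (n τ : ℕ) :
    ∃ C ≠ ∞, ∀ Ω : Set (Euc n), IsOpen Ω → Ωᶜ.Nonempty → ∀ x,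
      ∫⁻ z in Ω, ENNReal.ofReal (relDist Ω x z ^ ((n + 1) * (τ + 1)) / distCompl Ω z ^ n) ≤
        C * marcinkiewicz Ω x ^ (τ + 1) := by
  obtain ⟨C, hC, h⟩ := exists_relDist_pow_le_marcinkiewicz n
  refine ⟨C ^ τ, ENNReal.pow_ne_top hC, fun Ω hΩ hne x => ?_⟩
  have hmeas : Measurable fun z =>
      ENNReal.ofReal (relDist Ω x z ^ (n + 1) / distCompl Ω z ^ n) :=
    measurable_marcinkiewicz_integrand Ω measurable_const measurable_id
  have hpoint : ∀ z ∈ Ω,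
      ENNReal.ofReal (relDist Ω x z ^ ((n + 1) * (τ + 1)) / distCompl Ω z ^ n) ≤
        (C * marcinkiewicz Ω x) ^ τ *
          ENNReal.ofReal (relDist Ω x z ^ (n + 1) / distCompl Ω z ^ n) := by
    intro z hz
    have hx := relDist_nonneg Ω x z
    rw [pow_mul, pow_succ, mul_div_assoc, ENNReal.ofReal_mul (by positivity),
      ENNReal.ofReal_pow (by positivity)]
    gcongr
    exact h Ω hΩ hne x z hz
  refine (setLIntegral_mono' hΩ.measurableSet hpoint).trans_eq ?_
  rw [lintegral_const_mul _ hmeas, ← marcinkiewicz, mul_pow, pow_succ, mul_assoc]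

end MarcinkiewiczIntegral

section Aperture

variable {n : ℕ} {ψ f : Euc n → ℝ}

/-- The level set `{lam < N_A f}` of the non-tangential maximal function `N_A` of aperture `A`. -/
def apertureLevelSet (ψ f : Euc n → ℝ) (A lam : ℝ) : Set (Euc n) :=
  {x | ∃ y t, 0 < t ∧ dist x y < A * t ∧ lam < |convAt ψ f t y|}

lemma isOpen_apertureLevelSet (ψ f : Euc n → ℝ) (A lam : ℝ) :
    IsOpen (apertureLevelSet ψ f A lam) := by
  simp only [apertureLevelSet, Set.ofPred_exists]
  refine isOpen_iUnion fun y => isOpen_iUnion fun t => ?_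
  by_cases h : 0 < t ∧ lam < |convAt ψ f t y|
  · simp only [h.1, h.2, true_and, and_true]
    exact Metric.isOpen_ball (x := y) (ε := A * t)
  · convert isOpen_empty using 1
    ext x
    simp only [mem_ofPred_eq, mem_empty_iff_false]
    tauto

lemma apertureLevelSet_one (ψ f : Euc n → ℝ) {lam : ℝ} (hl : 0 ≤ lam) :
    apertureLevelSet ψ f 1 lam = {x | ENNReal.ofReal lam < ntMax ψ f x} := by
  ext x
  simp only [apertureLevelSet, ntMax, mem_ofPred_eq, lt_iSup_iff, one_mul, exists_prop,
    ENNReal.ofReal_lt_ofReal_iff_of_nonneg hl]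

lemma volume_apertureLevelSet_one (ψ f : Euc n → ℝ) {lam : ℝ} (hl : 0 ≤ lam) :
    volume (apertureLevelSet ψ f 1 lam) = distFn (ntMax ψ f) (ENNReal.ofReal lam) := by
  rw [apertureLevelSet_one ψ f hl, distFn]

lemma apertureLevelSet_antitone (ψ f : Euc n → ℝ) (A : ℝ) :
    Antitone (apertureLevelSet ψ f A) := by
  rintro l m h x ⟨y, t, ht, hxy, hlam⟩
  exact ⟨y, t, ht, hxy, h.trans_lt hlam⟩

lemma nonempty_compl_of_volume_ne_top (hn : 1 ≤ n) {Ω : Set (Euc n)} (h : volume Ω ≠ ∞) :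
    Ωᶜ.Nonempty := by
  rw [Set.nonempty_compl]
  rintro rfl
  have : Nonempty (Fin n) := ⟨⟨0, hn⟩⟩
  have : NoncompactSpace (Euc n) := NormedSpace.noncompactSpace ℝ _
  exact h (measure_univ_of_isAddLeftInvariant _)

lemma le_relDist_of_dist_lt {lam A t : ℝ} {x y : Euc n} (hA : 0 < A) (ht : 0 < t)
    (hne : (apertureLevelSet ψ f 1 lam)ᶜ.Nonempty) (hxy : dist x y < A * t)
    (hlam : lam < |convAt ψ f t y|) :
    1 / (1 + A) ≤ relDist (apertureLevelSet ψ f 1 lam) x y := by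
  have hd : t ≤ distCompl (apertureLevelSet ψ f 1 lam) y := by
    refine (Metric.le_infDist hne).2 fun z hz => ?_
    by_contra! hlt
    exact hz ⟨y, t, ht, by rwa [one_mul, dist_comm], hlam⟩
  have hxy0 : 0 ≤ dist x y := dist_nonneg
  rw [relDist, div_le_div_iff₀ (by positivity) (by linarith)]
  nlinarith

lemma exists_volume_apertureLevelSet_le (hn : 1 ≤ n) {A : ℝ} (hA : 0 < A) :
    ∃ C ≠ ∞, ∀ (ψ f : Euc n → ℝ) (lam : ℝ), volume (apertureLevelSet ψ f 1 lam) ≠ ∞ →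
      volume (apertureLevelSet ψ f A lam) ≤ C * volume (apertureLevelSet ψ f 1 lam) := by
  obtain ⟨C₁, hC₁, h_int⟩ := exists_lintegral_marcinkiewicz_le n
  obtain ⟨C₂, hC₂, hpoint⟩ := exists_relDist_pow_le_marcinkiewicz n
  set c := ENNReal.ofReal ((1 / (1 + A)) ^ (n + 1))
  have hc0 : c ≠ 0 := (ENNReal.ofReal_pos.2 (by positivity)).ne'
  refine ⟨c⁻¹ * (C₂ * C₁), by finiteness, fun ψ f lam hfin => ?_⟩
  set Ω := apertureLevelSet ψ f 1 lam
  have hΩ : IsOpen Ω := isOpen_apertureLevelSet _ _ _ _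
  have hne := nonempty_compl_of_volume_ne_top hn hfin
  have hsub : apertureLevelSet ψ f A lam ⊆ {x | c ≤ C₂ * marcinkiewicz Ω x} := by
    rintro x ⟨y, t, ht, hxy, hlam⟩
    have hy : y ∈ Ω := ⟨y, t, ht, by simpa using ht, hlam⟩
    refine le_trans (ENNReal.ofReal_le_ofReal ?_) (hpoint Ω hΩ hne x y hy)
    gcongr
    exact le_relDist_of_dist_lt hA ht hne hxy hlam
  have hmarkov := mul_meas_ge_le_lintegral (μ := volume)
    ((measurable_marcinkiewicz Ω).const_mul C₂) c
  rw [lintegral_const_mul _ (measurable_marcinkiewicz Ω)] at hmarkov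
  rw [mul_assoc, ← ENNReal.mul_le_iff_le_inv hc0 ofReal_ne_top, mul_assoc]
  calc c * volume (apertureLevelSet ψ f A lam)
      ≤ c * volume {x | c ≤ C₂ * marcinkiewicz Ω x} := by gcongr
    _ ≤ C₂ * ∫⁻ x, marcinkiewicz Ω x := hmarkov
    _ ≤ C₂ * (C₁ * volume Ω) := by
        gcongr
        exact h_int Ω hΩ hne

end Aperture

/-! ### Convolution with continuous compactly supported kernels -/

/-- Convolution of real functions on `ℝⁿ`: Mathlib's `convolution` for the product of `ℝ`. -/
def conv {n : ℕ} (f g : Euc n → ℝ) : Euc n → ℝ :=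
  convolution f g (ContinuousLinearMap.mul ℝ ℝ) volume

/-- The `L¹`-normalised dilation `g_t(x) = t⁻ⁿ g(x/t)`. -/
def dilate {n : ℕ} (g : Euc n → ℝ) (t : ℝ) (x : Euc n) : ℝ := (t ^ n)⁻¹ * g (t⁻¹ • x)

/-- The class `C_c(ℝⁿ)` from which all convolution kernels are taken. -/
structure ContCompactSupport {n : ℕ} (g : Euc n → ℝ) : Prop where
  continuous : Continuous g
  hasCompactSupport : HasCompactSupport g

section Convolution

variable {n : ℕ} {f f' g h : Euc n → ℝ}

lemma conv_apply (f g : Euc n → ℝ) (y : Euc n) : conv f g y = ∫ z, f z * g (y - z) := rfl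

lemma convAt_eq_conv (ψ f : Euc n → ℝ) (t : ℝ) : convAt ψ f t = conv f (dilate ψ t) := rfl

namespace ContCompactSupport

lemma exists_abs_le (hg : ContCompactSupport g) : ∃ C > 0, ∀ x, |g x| ≤ C := by
  obtain ⟨C, hC⟩ := hg.1.bounded_above_of_compact_support hg.2
  exact ⟨max C 1, by positivity, fun x => (hC x).trans (le_max_left _ _)⟩

lemma integrable (hg : ContCompactSupport g) : Integrable g volume :=
  hg.1.integrable_of_hasCompactSupport hg.2

lemma locallyIntegrable (hg : ContCompactSupport g) : LocallyIntegrable g volume :=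
  hg.1.locallyIntegrable

lemma exists_norm_le (hg : ContCompactSupport g) : ∃ B ≥ 1, ∀ x, g x ≠ 0 → ‖x‖ ≤ B := by
  obtain ⟨B, hB⟩ := hg.2.isCompact.isBounded.exists_norm_le
  exact ⟨max B 1, le_max_right _ _, fun x hx =>
    (hB x (subset_tsupport _ hx)).trans (le_max_left _ _)⟩

lemma dilate (hg : ContCompactSupport g) {t : ℝ} (ht : 0 < t) :
    ContCompactSupport (dilate g t) :=
  ⟨continuous_const.mul (hg.1.comp (continuous_const_smul _)),
    (hg.2.comp_homeomorph (Homeomorph.smulOfNeZero t⁻¹ (inv_ne_zero ht.ne'))).mul_left⟩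

lemma const_smul (hg : ContCompactSupport g) (c : ℝ) : ContCompactSupport (c • g) :=
  ⟨hg.1.const_smul c, hg.2.mono (Function.support_const_smul_subset c g)⟩

lemma sub (hg : ContCompactSupport g) (hh : ContCompactSupport h) :
    ContCompactSupport (g - h) :=
  ⟨hg.1.sub hh.1, hg.2.sub hh.2⟩

lemma sum {ι : Type*} (s : Finset ι) {g : ι → Euc n → ℝ} (hg : ∀ i ∈ s, ContCompactSupport (g i)) :
    ContCompactSupport (∑ i ∈ s, g i) :=
  Finset.sum_induction g ContCompactSupport (fun _ _ ha hb => ⟨ha.1.add hb.1, ha.2.add hb.2⟩)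
    ⟨continuous_const, HasCompactSupport.zero⟩ hg

lemma abs (hg : ContCompactSupport g) : ContCompactSupport (fun x => |g x|) :=
  ⟨hg.1.abs, hg.2.comp_left (g := fun r : ℝ => |r|) abs_zero⟩

lemma conv (hg : ContCompactSupport g) (hh : ContCompactSupport h) :
    ContCompactSupport (conv g h) :=
  ⟨hh.2.continuous_convolution_right _ hg.locallyIntegrable hh.1, hg.2.convolution _ hh.2⟩

end ContCompactSupport

lemma integrable_mul_comp_sub (hf : LocallyIntegrable f volume) (hg : ContCompactSupport g)
    (y : Euc n) : Integrable (fun z => f z * g (y - z)) volume :=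
  hg.2.convolutionExists_right (ContinuousLinearMap.mul ℝ ℝ) hf hg.1 y

lemma continuous_conv (hf : LocallyIntegrable f volume) (hg : ContCompactSupport g) :
    Continuous (conv f g) :=
  hg.2.continuous_convolution_right _ hf hg.1

lemma conv_assoc (hf : LocallyIntegrable f volume) (hg : ContCompactSupport g)
    (hh : ContCompactSupport h) : conv (conv f g) h = conv f (conv g h) := by
  ext y
  refine convolution_assoc _ _ _ _ (fun x y z => by simp [mul_assoc]) hf.aestronglyMeasurable
    hg.1.aestronglyMeasurable hh.1.aestronglyMeasurable
    (Filter.Eventually.of_forall fun y => integrable_mul_comp_sub hf hg y)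
    (Filter.Eventually.of_forall fun y =>
      integrable_mul_comp_sub hg.abs.locallyIntegrable hh.abs y) ?_
  exact integrable_mul_comp_sub (fun x => (hf x).norm) (hg.abs.conv hh.abs) y

lemma conv_comm (f g : Euc n → ℝ) : conv f g = conv g f := by
  ext y
  rw [conv_apply, conv_apply, ← integral_sub_left_eq_self (fun z => g z * f (y - z)) volume y]
  simp only [_root_.sub_sub_cancel, mul_comm]

lemma conv_sub_left (hf : LocallyIntegrable f volume) (hf' : LocallyIntegrable f' volume)
    (hg : ContCompactSupport g) : conv (f - f') g = conv f g - conv f' g := by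
  ext y
  simp only [conv_apply, Pi.sub_apply, sub_mul]
  exact integral_sub (integrable_mul_comp_sub hf hg y) (integrable_mul_comp_sub hf' hg y)

lemma conv_add_left (hf : LocallyIntegrable f volume) (hf' : LocallyIntegrable f' volume)
    (hg : ContCompactSupport g) : conv (f + f') g = conv f g + conv f' g := by
  ext y
  simp only [conv_apply, Pi.add_apply, add_mul]
  exact integral_add (integrable_mul_comp_sub hf hg y) (integrable_mul_comp_sub hf' hg y)

lemma conv_sub_right (hf : LocallyIntegrable f volume) (hg : ContCompactSupport g)
    (hh : ContCompactSupport h) : conv f (g - h) = conv f g - conv f h := by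
  ext y
  simp only [conv_apply, Pi.sub_apply, mul_sub]
  exact integral_sub (integrable_mul_comp_sub hf hg y) (integrable_mul_comp_sub hf hh y)

lemma conv_sum_left {ι : Type*} (s : Finset ι) {f : ι → Euc n → ℝ}
    (hf : ∀ i ∈ s, LocallyIntegrable (f i) volume) (hg : ContCompactSupport g) :
    conv (∑ i ∈ s, f i) g = ∑ i ∈ s, conv (f i) g := by
  ext y
  simp only [conv_apply, Finset.sum_apply, Finset.sum_mul]
  exact integral_finsetSum _ fun i hi => integrable_mul_comp_sub (hf i hi) hg y

lemma conv_sum_right {ι : Type*} (s : Finset ι) {g : ι → Euc n → ℝ}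
    (hf : LocallyIntegrable f volume) (hg : ∀ i ∈ s, ContCompactSupport (g i)) :
    conv f (∑ i ∈ s, g i) = ∑ i ∈ s, conv f (g i) := by
  ext y
  simp only [conv_apply, Finset.sum_apply, Finset.mul_sum]
  exact integral_finsetSum _ fun i hi => integrable_mul_comp_sub hf (hg i hi) y

lemma conv_smul_right (f g : Euc n → ℝ) (c : ℝ) : conv f (c • g) = c • conv f g :=
  convolution_smul

lemma abs_conv_le {c : ℝ} (hg : Integrable g volume) (y : Euc n)
    (h : ∀ᵐ z, g (y - z) ≠ 0 → |f z| ≤ c) : |conv f g y| ≤ c * ∫ x, |g x| := by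
  rw [← integral_sub_left_eq_self (fun z => |g z|) volume y, ← integral_const_mul,
    ← Real.norm_eq_abs, conv_apply]
  refine norm_integral_le_of_norm_le ((hg.comp_sub_left y).abs.const_mul c) ?_
  filter_upwards [h] with z hz
  rw [norm_mul, Real.norm_eq_abs, Real.norm_eq_abs]
  by_cases h0 : g (y - z) = 0
  · simp [h0]
  · exact mul_le_mul_of_nonneg_right (hz h0) (abs_nonneg _)

lemma ofReal_abs_conv_le (f g : Euc n → ℝ) (y : Euc n) :
    ENNReal.ofReal |conv f g y| ≤ ∫⁻ z, ENNReal.ofReal (|f z| * |g (y - z)|) := by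
  rw [conv_apply, ← Real.enorm_eq_ofReal_abs]
  simp only [← abs_mul, ← Real.enorm_eq_ofReal_abs]
  exact enorm_integral_le_lintegral_enorm _

lemma abs_conv_le_setIntegral_closedBall {φ : Euc n → ℝ} {y y' : Euc n} {r c : ℝ} (hc : 0 ≤ c)
    (hφ : LocallyIntegrable φ volume)
    (h : ∀ z, f z ≠ 0 → g (y - z) ≠ 0 →
      z ∈ Metric.closedBall y' r ∧ |f z| * |g (y - z)| ≤ c * |φ z|) :
    |conv f g y| ≤ c * ∫ z in Metric.closedBall y' r, |φ z| := by
  have hmeas : MeasurableSet (Metric.closedBall y' r) := Metric.isClosed_closedBall.measurableSet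
  have h_int : IntegrableOn (fun z => |φ z|) (Metric.closedBall y' r) volume :=
    (hφ.integrableOn_isCompact (isCompact_closedBall _ _)).norm
  rw [← integral_const_mul, ← integral_indicator hmeas, ← Real.norm_eq_abs, conv_apply]
  refine norm_integral_le_of_norm_le (IntegrableOn.integrable_indicator (h_int.const_mul _) hmeas)
    (Filter.Eventually.of_forall fun z => ?_)
  by_cases hz : f z * g (y - z) = 0
  · rw [hz, norm_zero]
    exact indicator_nonneg (fun z _ => by positivity) z
  · obtain ⟨hmem, hle⟩ := h z (left_ne_zero_of_mul hz) (right_ne_zero_of_mul hz)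
    rw [indicator_of_mem hmem, norm_mul]
    exact hle

lemma norm_le_add_of_conv_ne_zero {a b : ℝ} (hg : ∀ x, g x ≠ 0 → ‖x‖ ≤ a)
    (hh : ∀ x, h x ≠ 0 → ‖x‖ ≤ b) (x : Euc n) (hx : conv g h x ≠ 0) : ‖x‖ ≤ a + b := by
  obtain ⟨z, hz⟩ : ∃ z, g z * h (x - z) ≠ 0 := by
    by_contra! hall
    exact hx (by simp only [conv_apply, hall, integral_zero])
  calc ‖x‖ ≤ ‖z‖ + ‖x - z‖ := norm_le_norm_add_norm_sub' x z
    _ ≤ a + b := add_le_add (hg z (left_ne_zero_of_mul hz)) (hh _ (right_ne_zero_of_mul hz))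

lemma dilate_dilate (g : Euc n → ℝ) (s t : ℝ) : dilate (dilate g s) t = dilate g (s * t) := by
  ext x
  simp only [dilate, smul_smul, mul_inv, mul_pow]
  ring

lemma dilate_smul (c : ℝ) (g : Euc n → ℝ) (t : ℝ) : dilate (c • g) t = c • dilate g t := by
  ext x
  simp only [dilate, Pi.smul_apply, smul_eq_mul]
  ring

lemma dilate_sum {ι : Type*} (s : Finset ι) (g : ι → Euc n → ℝ) (t : ℝ) :
    dilate (∑ i ∈ s, g i) t = ∑ i ∈ s, dilate (g i) t := by
  ext x
  simp only [dilate, Finset.sum_apply, Finset.mul_sum]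

variable {t : ℝ}

lemma integral_dilate (g : Euc n → ℝ) (ht : 0 < t) : ∫ x, dilate g t x = ∫ x, g x := by
  simp only [dilate]
  rw [integral_const_mul, Measure.integral_comp_smul, finrank_euclideanSpace, Fintype.card_fin,
    inv_pow, inv_inv, abs_of_pos (by positivity), smul_eq_mul, inv_mul_cancel_left₀ (by positivity)]

lemma abs_dilate (g : Euc n → ℝ) (ht : 0 < t) (x : Euc n) :
    |dilate g t x| = dilate (fun x => |g x|) t x := by
  rw [dilate, abs_mul, abs_of_pos (by positivity : 0 < (t ^ n)⁻¹), dilate]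

lemma integral_abs_dilate (g : Euc n → ℝ) (ht : 0 < t) :
    ∫ x, |dilate g t x| = ∫ x, |g x| := by
  simp only [abs_dilate g ht, integral_dilate _ ht]

lemma norm_le_of_dilate_ne_zero {B : ℝ} (hB : ∀ x, g x ≠ 0 → ‖x‖ ≤ B) (ht : 0 < t)
    (x : Euc n) (hx : dilate g t x ≠ 0) : ‖x‖ ≤ B * t := by
  have hle := hB _ (right_ne_zero_of_mul hx)
  rwa [norm_smul, norm_inv, Real.norm_of_nonneg ht.le, inv_mul_le_iff₀' ht] at hle

lemma abs_dilate_le {C : ℝ} (hC : ∀ x, |g x| ≤ C) (ht : 0 < t) (x : Euc n) :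
    |dilate g t x| ≤ C * (t ^ n)⁻¹ := by
  rw [abs_dilate _ ht, dilate, mul_comm]
  gcongr
  exact hC _

lemma conv_dilate_left (g h : Euc n → ℝ) (ht : 0 < t) (w : Euc n) :
    conv (dilate g t) h w = ∫ u, g u * h (w - t • u) := by
  rw [← integral_dilate (fun u => g u * h (w - t • u)) ht, conv_apply]
  simp only [dilate, smul_smul, mul_inv_cancel₀ ht.ne', one_smul, mul_assoc]

lemma conv_dilate_dilate (g h : Euc n → ℝ) (ht : 0 < t) :
    conv (dilate g t) (dilate h t) = dilate (conv g h) t := by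
  ext w
  rw [conv_dilate_left _ _ ht, dilate, conv_apply, ← integral_const_mul]
  congr 1 with u
  rw [dilate, smul_sub, smul_smul, inv_mul_cancel₀ ht.ne', one_smul]
  ring

end Convolution

/-! ### The reproducing kernel -/

section FiniteDifferences

universe u

variable {E G : Type u} [NormedAddCommGroup E] [NormedSpace ℝ E] [NormedAddCommGroup G]
  [NormedSpace ℝ G]

lemma hasFDerivAt_fwdDiff_iterate (v : E) (m : ℕ) {F : E → G} {F' : E → E →L[ℝ] G}
    (hF : ∀ y, HasFDerivAt F (F' y) y) (y : E) :
    HasFDerivAt ((fwdDiff v)^[m] F) ((fwdDiff v)^[m] F' y) y := by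
  induction m generalizing F F' y with
  | zero => simpa using hF y
  | succ m ih =>
    rw [Function.iterate_succ_apply, Function.iterate_succ_apply]
    exact ih (fun y => ((hasFDerivAt_comp_add_right v).2 (hF (y + v))).sub (hF y)) y

lemma exists_norm_fwdDiff_iterate_le (m : ℕ) {F : E → G} (hF : ContDiff ℝ m F)
    (hc : HasCompactSupport F) : ∃ C > 0, ∀ v y, ‖(fwdDiff v)^[m] F y‖ ≤ C * ‖v‖ ^ m := by
  induction m generalizing G with
  | zero =>
    obtain ⟨C, hC⟩ := hF.continuous.bounded_above_of_compact_support hc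
    exact ⟨max C 1, by positivity, fun v y => by simpa using Or.inl (hC y)⟩
  | succ m ih =>
    obtain ⟨C, hC0, hC⟩ := ih (hF.fderiv_right (m := m) (by simp)) (hc.fderiv ℝ)
    refine ⟨C, hC0, fun v y => ?_⟩
    have hdiff : ∀ y, HasFDerivAt F (fderiv ℝ F y) y := fun y =>
      (hF.differentiable (by simp)).differentiableAt.hasFDerivAt
    have hmean := convex_univ.norm_image_sub_le_of_norm_hasFDerivWithin_le (𝕜 := ℝ)
      (fun x _ => (hasFDerivAt_fwdDiff_iterate v m hdiff x).hasFDerivWithinAt)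
      (fun x _ => hC v x) (mem_univ y) (mem_univ (y + v))
    rw [Function.iterate_succ_apply', fwdDiff]
    rwa [add_sub_cancel_left, mul_assoc, ← pow_succ] at hmean

/-- The coefficients `(-1)ⁱ (M choose i+1)` expressing `F y` through the translates
`F (y + (i+1) v)`, `i < M`, up to an `M`-th difference. -/
def signedChoose (M i : ℕ) : ℝ := (-1) ^ i * (M.choose (i + 1) : ℝ)

lemma sum_signedChoose_mul_sub (M : ℕ) (F : E → ℝ) (v y : E) :
    ∑ i ∈ Finset.range M, signedChoose M i * F (y + ((i : ℝ) + 1) • v) - F y =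
      (-1) ^ (M + 1) * (fwdDiff v)^[M] F y := by
  have hsign : ∀ {k}, k ≤ M → (-1 : ℝ) ^ (M + 1) * (-1) ^ (M - k) = (-1) ^ (k + 1) := by
    intro k hk
    rw [← pow_add, show M + 1 + (M - k) = 2 * (M - k) + (k + 1) by omega, pow_add, pow_mul,
      neg_one_sq, one_pow, one_mul]
  rw [fwdDiff_iter_eq_sum_shift, Finset.mul_sum, Finset.sum_range_succ', sub_eq_add_neg]
  congr 1
  · refine Finset.sum_congr rfl fun i hi => ?_
    rw [← Nat.cast_smul_eq_nsmul ℝ, zsmul_eq_mul]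
    push_cast
    rw [← mul_assoc, ← mul_assoc, hsign (Finset.mem_range.1 hi), signedChoose,
      Nat.succ_eq_add_one]
    ring
  · rw [zsmul_eq_mul]
    push_cast
    rw [← mul_assoc, ← mul_assoc, hsign (Nat.zero_le M)]
    simp

lemma sum_signedChoose {M : ℕ} (hM : 1 ≤ M) : ∑ i ∈ Finset.range M, signedChoose M i = 1 := by
  have h := sum_signedChoose_mul_sub (E := ℝ) M (fun _ => 1) 0 0
  obtain ⟨m, rfl⟩ : ∃ m, M = m + 1 := ⟨M - 1, by omega⟩
  have hconst : ∀ c : ℝ, fwdDiff (0 : ℝ) (fun _ : ℝ => c) = fun _ => 0 := fun c => by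
    ext
    simp [fwdDiff]
  rw [Function.iterate_succ_apply, hconst, Function.iterate_fixed (hconst 0)] at h
  simpa [sub_eq_zero] using h

end FiniteDifferences

/-- The hypotheses on the test function `ψ` defining the maximal operator. -/
structure IsAdmissible {n : ℕ} (ψ : Euc n → ℝ) : Prop where
  contDiff : ContDiff ℝ (⊤ : ℕ∞) ψ
  hasCompactSupport : HasCompactSupport ψ
  integral_ne_zero : ∫ x, ψ x ≠ 0

/-- The combination of the dilates `ψ_1, …, ψ_M` with integral `1` whose convolution with a
function differs from it by an `M`-th difference, see `conv_reproKernel_sub`. -/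
def reproKernel {n : ℕ} (ψ : Euc n → ℝ) (M : ℕ) : Euc n → ℝ :=
  (∫ z, ψ z)⁻¹ • ∑ i ∈ Finset.range M, signedChoose M i • dilate ψ ((i : ℝ) + 1)

/-- The difference of the reproducing kernels at the scales `s` and `2 * s`. -/
def bandKernel {n : ℕ} (ψ : Euc n → ℝ) (M : ℕ) (s : ℝ) : Euc n → ℝ :=
  dilate (reproKernel ψ M) s - dilate (reproKernel ψ M) (2 * s)

section ReproducingKernel

variable {n : ℕ} {ψ f g : Euc n → ℝ} {M : ℕ} {s R : ℝ}

lemma IsAdmissible.contCompactSupport (hψ : IsAdmissible ψ) : ContCompactSupport ψ :=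
  ⟨hψ.contDiff.continuous, hψ.hasCompactSupport⟩

lemma contCompactSupport_reproKernel (hψ : ContCompactSupport ψ) (M : ℕ) :
    ContCompactSupport (reproKernel ψ M) :=
  .const_smul (.sum _ fun _ _ => (hψ.dilate (by positivity)).const_smul _) _

lemma contCompactSupport_bandKernel (hψ : ContCompactSupport ψ) (M : ℕ) (hs : 0 < s) :
    ContCompactSupport (bandKernel ψ M s) :=
  ((contCompactSupport_reproKernel hψ M).dilate hs).sub
    ((contCompactSupport_reproKernel hψ M).dilate (by positivity))

lemma integral_reproKernel (hψ : IsAdmissible ψ) (hM : 1 ≤ M) : ∫ x, reproKernel ψ M x = 1 := by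
  simp only [reproKernel, Pi.smul_apply, Finset.sum_apply, smul_eq_mul]
  rw [integral_const_mul, integral_finsetSum _ fun i _ =>
    ((hψ.contCompactSupport.dilate (by positivity)).integrable.const_mul _)]
  have hterm : ∀ i ∈ Finset.range M, ∫ x, signedChoose M i * dilate ψ ((i : ℝ) + 1) x =
      signedChoose M i * ∫ x, ψ x := fun i _ => by
    rw [integral_const_mul, integral_dilate _ (by positivity)]
  rw [Finset.sum_congr rfl hterm, ← Finset.sum_mul, sum_signedChoose hM, one_mul,
    inv_mul_cancel₀ hψ.integral_ne_zero]

lemma conv_dilate_reproKernel (hψ : ContCompactSupport ψ) (hf : LocallyIntegrable f volume)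
    (M : ℕ) (hs : 0 < s) (y : Euc n) :
    conv f (dilate (reproKernel ψ M) s) y = (∫ z, ψ z)⁻¹ *
      ∑ i ∈ Finset.range M, signedChoose M i * conv f (dilate ψ (((i : ℝ) + 1) * s)) y := by
  have hker : ∀ i ∈ Finset.range M,
      ContCompactSupport (signedChoose M i • dilate ψ (((i : ℝ) + 1) * s)) :=
    fun i _ => (hψ.dilate (by positivity)).const_smul _
  simp only [reproKernel, dilate_smul, dilate_sum, dilate_dilate]
  rw [conv_smul_right, conv_sum_right _ hf hker]
  simp only [conv_smul_right, Pi.smul_apply, Finset.sum_apply, smul_eq_mul]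

lemma exists_abs_conv_dilate_reproKernel_le (hψ : ContCompactSupport ψ) (M : ℕ) :
    ∃ C > 0, ∀ (f : Euc n → ℝ) (_ : LocallyIntegrable f volume) (s lam : ℝ) (_ : 0 < s)
      (y : Euc n), (∀ t, s ≤ t → |convAt ψ f t y| ≤ lam) →
        |conv f (dilate (reproKernel ψ M) s) y| ≤ C * lam := by
  refine ⟨|(∫ z, ψ z)⁻¹| * ∑ i ∈ Finset.range M, |signedChoose M i| + 1, by positivity, ?_⟩
  intro f hf s lam hs y h
  have hlam : 0 ≤ lam := (abs_nonneg _).trans (h s le_rfl)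
  rw [conv_dilate_reproKernel hψ hf M hs, abs_mul]
  have hsum : |∑ i ∈ Finset.range M, signedChoose M i * conv f (dilate ψ (((i : ℝ) + 1) * s)) y|
      ≤ (∑ i ∈ Finset.range M, |signedChoose M i|) * lam := by
    rw [Finset.sum_mul]
    refine (Finset.abs_sum_le_sum_abs _ _).trans (Finset.sum_le_sum fun i _ => ?_)
    rw [abs_mul]
    gcongr
    exact h _ (le_mul_of_one_le_left hs.le (by simp))
  calc _ ≤ |(∫ z, ψ z)⁻¹| * ((∑ i ∈ Finset.range M, |signedChoose M i|) * lam) := by gcongr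
    _ ≤ _ := by linarith

/-- Expanding the kernel turns the left-hand side into the average against `ψ` of the combination
of translates in `sum_signedChoose_mul_sub`. -/
lemma conv_reproKernel_sub (hψ : IsAdmissible ψ) (hg : ContCompactSupport g) (M : ℕ) (hs : 0 < s)
    (w : Euc n) :
    conv (dilate (reproKernel ψ M) s) g w - g w =
      (∫ z, ψ z)⁻¹ * ∫ u, ψ u * ((-1) ^ (M + 1) * (fwdDiff (-(s • u)))^[M] g w) := by
  have hψc := hψ.contCompactSupport
  have h_int : ∀ r : ℝ, Integrable (fun u => ψ u * g (w - r • u)) volume := fun r => by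
    have := hψc.continuous
    have := hg.continuous
    exact Continuous.integrable_of_hasCompactSupport (by fun_prop) hψc.hasCompactSupport.mul_right
  have hterm : ∀ i ∈ Finset.range M, signedChoose M i * conv g (dilate ψ (((i : ℝ) + 1) * s)) w =
      ∫ u, signedChoose M i * (ψ u * g (w - (((i : ℝ) + 1) * s) • u)) := fun i _ => by
    rw [conv_comm, conv_dilate_left _ _ (by positivity), integral_const_mul]
  have hgw : g w = (∫ z, ψ z)⁻¹ * ∫ u, ψ u * g w := by
    rw [integral_mul_const, inv_mul_cancel_left₀ hψ.integral_ne_zero]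
  rw [conv_comm, conv_dilate_reproKernel hψc hg.locallyIntegrable M hs, Finset.sum_congr rfl hterm,
    ← integral_finsetSum _ fun i _ => (h_int _).const_mul _]
  conv_lhs => rw [hgw]
  rw [← mul_sub, ← integral_sub (integrable_finsetSum _ fun i _ => (h_int _).const_mul _)
    (hψc.integrable.mul_const _)]
  congr 2 with u
  rw [← sum_signedChoose_mul_sub, mul_sub, Finset.mul_sum]
  simp only [smul_neg, smul_smul, ← sub_eq_add_neg, mul_left_comm]

lemma fwdDiff_iterate_dilate (g : Euc n → ℝ) (M : ℕ) (R : ℝ) (v w : Euc n) :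
    (fwdDiff v)^[M] (dilate g R) w = (R ^ n)⁻¹ * (fwdDiff (R⁻¹ • v))^[M] g (R⁻¹ • w) := by
  induction M generalizing w with
  | zero => rfl
  | succ M ih =>
    rw [Function.iterate_succ_apply', Function.iterate_succ_apply', fwdDiff, fwdDiff, ih, ih,
      smul_add, mul_sub]

lemma exists_abs_conv_reproKernel_sub_le (hψ : IsAdmissible ψ) (M : ℕ) :
    ∃ C > 0, ∀ (s R : ℝ) (_ : 0 < s) (_ : 0 < R) (w : Euc n),
      |conv (dilate (reproKernel ψ M) s) (dilate ψ R) w - dilate ψ R w| ≤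
        C * (s ^ M * (R ^ (n + M))⁻¹) := by
  have hψc := hψ.contCompactSupport
  obtain ⟨C, hC0, hC⟩ := exists_norm_fwdDiff_iterate_le M
    (hψ.contDiff.of_le (by exact_mod_cast le_top)) hψ.hasCompactSupport
  obtain ⟨B, hB1, hB⟩ := hψc.exists_norm_le
  refine ⟨|(∫ z, ψ z)⁻¹| * (C * B ^ M * ∫ u, |ψ u|) + 1, by positivity, ?_⟩
  intro s R hs hR w
  have hpointwise : ∀ u, |ψ u * ((-1) ^ (M + 1) * (fwdDiff (-(s • u)))^[M] (dilate ψ R) w)| ≤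
      |ψ u| * (C * B ^ M * (s ^ M * (R ^ (n + M))⁻¹)) := by
    intro u
    by_cases hu : ψ u = 0
    · simp [hu]
    rw [abs_mul, fwdDiff_iterate_dilate, abs_mul, abs_pow, abs_neg, abs_one, one_pow, one_mul,
      abs_mul, abs_of_pos (by positivity : 0 < (R ^ n)⁻¹)]
    have hnorm : ‖R⁻¹ • (-(s • u))‖ ≤ R⁻¹ * (s * B) := by
      rw [norm_smul, norm_neg, norm_smul, norm_inv, Real.norm_of_nonneg hR.le,
        Real.norm_of_nonneg hs.le]
      gcongr
      exact hB u hu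
    refine mul_le_mul_of_nonneg_left ?_ (abs_nonneg _)
    calc _ ≤ (R ^ n)⁻¹ * (C * (R⁻¹ * (s * B)) ^ M) := by
          refine mul_le_mul_of_nonneg_left ((hC _ _).trans ?_) (by positivity)
          gcongr
      _ = _ := by
          rw [mul_pow, mul_pow, inv_pow, pow_add, mul_inv]
          ring
  have hintegral : |∫ u, ψ u * ((-1) ^ (M + 1) * (fwdDiff (-(s • u)))^[M] (dilate ψ R) w)| ≤
      (∫ u, |ψ u|) * (C * B ^ M * (s ^ M * (R ^ (n + M))⁻¹)) := by
    rw [← integral_mul_const, ← Real.norm_eq_abs]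
    exact norm_integral_le_of_norm_le (hψc.integrable.abs.mul_const _)
      (Filter.Eventually.of_forall hpointwise)
  rw [conv_reproKernel_sub hψ (hψc.dilate hR) M hs, abs_mul]
  have hpos : 0 ≤ s ^ M * (R ^ (n + M))⁻¹ := by positivity
  calc _ ≤ |(∫ z, ψ z)⁻¹| * ((∫ u, |ψ u|) * (C * B ^ M * (s ^ M * (R ^ (n + M))⁻¹))) := by gcongr
    _ ≤ _ := by linarith

lemma norm_le_of_bandKernel_ne_zero {B : ℝ} (hB0 : 0 ≤ B)
    (hB : ∀ x, reproKernel ψ M x ≠ 0 → ‖x‖ ≤ B) (hs : 0 < s) (x : Euc n)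
    (hx : bandKernel ψ M s x ≠ 0) : ‖x‖ ≤ 2 * B * s := by
  have hcases : dilate (reproKernel ψ M) s x ≠ 0 ∨ dilate (reproKernel ψ M) (2 * s) x ≠ 0 := by
    by_contra! h
    exact hx (by rw [bandKernel, Pi.sub_apply, h.1, h.2, _root_.sub_zero])
  rcases hcases with h | h
  · nlinarith [norm_le_of_dilate_ne_zero hB hs x h]
  · linarith [norm_le_of_dilate_ne_zero hB (by positivity : 0 < 2 * s) x h]

lemma integral_abs_bandKernel_le (hψ : ContCompactSupport ψ) (M : ℕ) (hs : 0 < s) :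
    ∫ x, |bandKernel ψ M s x| ≤ 2 * ∫ x, |reproKernel ψ M x| := by
  have hs2 : 0 < 2 * s := by positivity
  have hK := contCompactSupport_reproKernel hψ M
  have h1 := (hK.dilate hs).integrable.abs
  have h2 := (hK.dilate hs2).integrable.abs
  calc _ ≤ ∫ x, (|dilate (reproKernel ψ M) s x| + |dilate (reproKernel ψ M) (2 * s) x|) :=
        integral_mono (contCompactSupport_bandKernel hψ M hs).integrable.abs (h1.add h2)
          fun x => abs_sub _ _
    _ = _ := by
        rw [integral_add h1 h2, integral_abs_dilate _ hs, integral_abs_dilate _ hs2, two_mul]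

lemma exists_abs_conv_bandKernel_le_of_small_scale (hψ : IsAdmissible ψ) (M : ℕ) :
    ∃ C > 0, ∀ (s R : ℝ) (_ : 0 < s) (_ : 0 < R) (w : Euc n),
      |conv (bandKernel ψ M s) (dilate ψ R) w| ≤ C * (s ^ M * (R ^ (n + M))⁻¹) := by
  obtain ⟨C, hC0, hC⟩ := exists_abs_conv_reproKernel_sub_le hψ M
  have hK := contCompactSupport_reproKernel hψ.contCompactSupport M
  refine ⟨C * (1 + 2 ^ M), by positivity, fun s R hs hR w => ?_⟩
  have hs2 : 0 < 2 * s := by positivity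
  have hsplit : conv (bandKernel ψ M s) (dilate ψ R) w =
      (conv (dilate (reproKernel ψ M) s) (dilate ψ R) w - dilate ψ R w) -
        (conv (dilate (reproKernel ψ M) (2 * s)) (dilate ψ R) w - dilate ψ R w) := by
    rw [bandKernel, conv_sub_left (hK.dilate hs).locallyIntegrable
      (hK.dilate hs2).locallyIntegrable (hψ.contCompactSupport.dilate hR), Pi.sub_apply,
      sub_sub_sub_cancel_right]
  rw [hsplit]
  calc _ ≤ C * (s ^ M * (R ^ (n + M))⁻¹) + C * ((2 * s) ^ M * (R ^ (n + M))⁻¹) :=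
        (abs_sub _ _).trans (add_le_add (hC s R hs hR w) (hC (2 * s) R hs2 hR w))
    _ = _ := by
        rw [mul_pow]
        ring

lemma exists_abs_conv_bandKernel_le_of_large_scale (hψ : ContCompactSupport ψ) (M : ℕ) :
    ∃ C > 0, ∀ (s R : ℝ) (_ : 0 < s) (_ : 0 < R) (w : Euc n),
      |conv (bandKernel ψ M s) (dilate ψ R) w| ≤ C * (s ^ n)⁻¹ := by
  obtain ⟨C, hC0, hC⟩ := (contCompactSupport_reproKernel hψ M).exists_abs_le
  refine ⟨2 * C * (∫ u, |ψ u|) + 1, by positivity, fun s R hs hR w => ?_⟩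
  have hs2 : 0 < 2 * s := by positivity
  have hband : ∀ z, |bandKernel ψ M s z| ≤ 2 * C * (s ^ n)⁻¹ := fun z =>
    calc _ ≤ C * (s ^ n)⁻¹ + C * ((2 * s) ^ n)⁻¹ :=
          (abs_sub _ _).trans (add_le_add (abs_dilate_le hC hs z) (abs_dilate_le hC hs2 z))
      _ ≤ C * (s ^ n)⁻¹ + C * (s ^ n)⁻¹ := by
          gcongr
          linarith
      _ = _ := by ring
  have hpos : 0 < (s ^ n)⁻¹ := by positivity
  calc _ ≤ 2 * C * (s ^ n)⁻¹ * ∫ u, |dilate ψ R u| :=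
        abs_conv_le (hψ.dilate hR).integrable w (Filter.Eventually.of_forall fun z _ => hband z)
    _ = 2 * C * (∫ u, |ψ u|) * (s ^ n)⁻¹ := by
        rw [integral_abs_dilate _ hR]
        ring
    _ ≤ _ := by linarith

lemma inv_pow_le_two_pow_mul_inv_add_pow {a b : ℝ} (ha : 0 < a) (hb : 0 < b) (hab : a ≤ b)
    (k : ℕ) : (b ^ k)⁻¹ ≤ 2 ^ k * ((a + b) ^ k)⁻¹ := by
  rw [← inv_pow, ← inv_pow, ← mul_pow]
  gcongr
  rw [← div_eq_mul_inv, le_div_iff₀ (by positivity), inv_mul_le_iff₀ hb]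
  linarith

lemma exists_abs_conv_bandKernel_le (hψ : IsAdmissible ψ) (M : ℕ) :
    ∃ C > 0, ∀ (s R : ℝ) (_ : 0 < s) (_ : 0 < R) (w : Euc n),
      |conv (bandKernel ψ M s) (dilate ψ R) w| ≤ C * (s ^ M * ((R + s) ^ (n + M))⁻¹) := by
  obtain ⟨C₁, hC₁0, hC₁⟩ := exists_abs_conv_bandKernel_le_of_small_scale hψ M
  obtain ⟨C₂, hC₂0, hC₂⟩ := exists_abs_conv_bandKernel_le_of_large_scale hψ.contCompactSupport M
  refine ⟨max C₁ C₂ * 2 ^ (n + M), by positivity, fun s R hs hR w => ?_⟩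
  rw [mul_assoc, mul_left_comm (2 ^ _)]
  rcases le_total s R with hsR | hRs
  · calc _ ≤ C₁ * (s ^ M * (R ^ (n + M))⁻¹) := hC₁ s R hs hR w
      _ ≤ _ := by
        gcongr
        · exact le_max_left _ _
        · rw [add_comm R]
          exact inv_pow_le_two_pow_mul_inv_add_pow hs hR hsR _
  · calc _ ≤ C₂ * (s ^ n)⁻¹ := hC₂ s R hs hR w
      _ = C₂ * (s ^ M * (s ^ (n + M))⁻¹) := by
        rw [pow_add]
        field_simp
      _ ≤ _ := by
        gcongr
        · exact le_max_right _ _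
        · exact inv_pow_le_two_pow_mul_inv_add_pow hR hs hRs _

end ReproducingKernel

/-! ### The truncated decomposition -/

/-- The scale `2⁻ʲ`. -/
def dyadicScale (j : ℤ) : ℝ := 2 ^ (-j)

lemma dyadicScale_pos (j : ℤ) : 0 < dyadicScale j := zpow_pos two_pos _

lemma dyadicScale_sub_one (j : ℤ) : dyadicScale (j - 1) = 2 * dyadicScale j := by
  rw [dyadicScale, dyadicScale, neg_sub, sub_eq_add_neg, zpow_add₀ two_ne_zero, zpow_one]

lemma dyadicScale_antitone : Antitone dyadicScale := fun i j hij =>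
  zpow_le_zpow_right₀ one_le_two (by omega)

lemma dyadicScale_natCast (N : ℕ) : dyadicScale N = (1 / 2) ^ N := by
  simp [dyadicScale, zpow_neg]

lemma dyadicScale_neg_natCast (N : ℕ) : dyadicScale (-N) = 2 ^ N := by
  simp [dyadicScale]

section ApproximateIdentity

open Filter Topology

variable {n : ℕ} {f Q : Euc n → ℝ}

lemma tendsto_dyadicScale : Tendsto (fun N : ℕ => dyadicScale N) atTop (𝓝[>] 0) := by
  refine tendsto_nhdsWithin_iff.2 ⟨?_, Eventually.of_forall fun N => dyadicScale_pos N⟩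
  simp only [dyadicScale_natCast]
  exact _root_.tendsto_pow_atTop_nhds_zero_of_lt_one (by norm_num) (by norm_num)

lemma conv_const_left (c : ℝ) (g : Euc n → ℝ) (x : Euc n) :
    conv (fun _ => c) g x = c * ∫ y, g y := by
  rw [conv_apply, integral_const_mul, integral_sub_left_eq_self g volume x]

lemma exists_abs_conv_dilate_le_average (hQ : ContCompactSupport Q) :
    ∃ B > 0, ∃ C > 0, ∀ f : Euc n → ℝ, LocallyIntegrable f volume → ∀ s > 0, ∀ x,
      |conv f (dilate Q s) x| ≤ C * ⨍ z in Metric.closedBall x (B * s), |f z| := by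
  obtain ⟨B, hB1, hB⟩ := hQ.exists_norm_le
  obtain ⟨C, hC0, hC⟩ := hQ.exists_abs_le
  have hB0 : 0 < B := one_pos.trans_le hB1
  set V := volume.real (Metric.ball (0 : Euc n) 1)
  have hV0 : 0 < V :=
    ENNReal.toReal_pos (Metric.measure_ball_pos _ _ one_pos).ne' measure_ball_lt_top.ne
  refine ⟨B, hB0, C * B ^ n * V, by positivity, fun f hf s hs x => ?_⟩
  have hvol : volume.real (Metric.closedBall x (B * s)) = (B * s) ^ n * V := by
    rw [Measure.addHaar_real_closedBall _ _ (by positivity), finrank_euclideanSpace_fin]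
  calc |conv f (dilate Q s) x|
      ≤ C * (s ^ n)⁻¹ * ∫ z in Metric.closedBall x (B * s), |f z| := by
        refine abs_conv_le_setIntegral_closedBall (by positivity) hf fun z _ hz => ⟨?_, ?_⟩
        · rw [Metric.mem_closedBall, dist_comm, dist_eq_norm]
          exact norm_le_of_dilate_ne_zero hB hs _ hz
        · rw [mul_comm]
          gcongr
          exact abs_dilate_le hC hs _
    _ = C * B ^ n * V * ⨍ z in Metric.closedBall x (B * s), |f z| := by
        rw [setAverage_eq, hvol, smul_eq_mul, mul_pow]
        field_simp

lemma ae_tendsto_conv_dilate (hQ : ContCompactSupport Q) (hf : LocallyIntegrable f volume) :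
    ∀ᵐ x, Tendsto (fun s => conv f (dilate Q s) x) (𝓝[>] 0) (𝓝 (f x * ∫ y, Q y)) := by
  obtain ⟨B, hB0, C, -, hC⟩ := exists_abs_conv_dilate_le_average hQ
  filter_upwards [IsUnifLocDoublingMeasure.ae_tendsto_average_norm_sub (μ := volume) hf 1] with x hx
  have hscale : Tendsto (fun s : ℝ => B * s) (𝓝[>] 0) (𝓝[>] 0) := by
    refine tendsto_nhdsWithin_iff.2 ⟨?_, ?_⟩
    · have hlim : Tendsto (fun s : ℝ => B * s) (𝓝 0) (𝓝 (B * 0)) := tendsto_id.const_mul B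
      rw [mul_zero] at hlim
      exact hlim.mono_left nhdsWithin_le_nhds
    · filter_upwards [self_mem_nhdsWithin] with s hs using mul_pos hB0 hs
  have haverage := (hx (fun _ => x) _ hscale <| by
    filter_upwards [self_mem_nhdsWithin] with s hs
    rw [one_mul]
    exact Metric.mem_closedBall_self (mul_pos hB0 hs).le).const_mul C
  rw [mul_zero] at haverage
  rw [tendsto_iff_norm_sub_tendsto_zero]
  refine squeeze_zero' (Eventually.of_forall fun _ => norm_nonneg _) ?_ haverage
  filter_upwards [self_mem_nhdsWithin] with s hs
  have hcenter : conv f (dilate Q s) x - f x * ∫ y, Q y =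
      conv (f - fun _ => f x) (dilate Q s) x := by
    rw [conv_sub_left hf (locallyIntegrable_const _) (hQ.dilate hs), Pi.sub_apply,
      conv_const_left, integral_dilate _ hs]
  rw [hcenter]
  exact hC _ (hf.sub (locallyIntegrable_const _)) s hs x

lemma tendsto_conv_dilate_of_continuous (hQ : ContCompactSupport Q) (hf : Continuous f)
    (x : Euc n) :
    Tendsto (fun s => conv f (dilate Q s) x) (𝓝[>] 0) (𝓝 (f x * ∫ y, Q y)) := by
  have hQc := hQ.continuous
  have hcont : ContinuousOn (fun s : ℝ => ∫ u, Q u * f (x - s • u)) univ := by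
    refine continuousOn_integral_of_compact_support hQ.hasCompactSupport.isCompact ?_
      fun s u _ hu => ?_
    · exact Continuous.continuousOn (by unfold Function.uncurry; fun_prop)
    · rw [image_eq_zero_of_notMem_tsupport hu, zero_mul]
  have hlim := (continuousOn_univ.1 hcont).tendsto 0
  simp only [zero_smul, _root_.sub_zero, mul_comm _ (f x), integral_const_mul] at hlim
  refine (hlim.mono_left nhdsWithin_le_nhds).congr' ?_
  filter_upwards [self_mem_nhdsWithin] with s hs
  rw [conv_comm, conv_dilate_left _ _ hs]

end ApproximateIdentity

section Pieces

variable {n : ℕ}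

/-- The sum of the regularizations of `f` at the scales `2⁻ʲ` and `2¹⁻ʲ`. -/
def twoScaleMean (ψ : Euc n → ℝ) (M : ℕ) (f : Euc n → ℝ) (j : ℤ) : Euc n → ℝ :=
  conv f (dilate (reproKernel ψ M) (dyadicScale j)) +
    conv f (dilate (reproKernel ψ M) (2 * dyadicScale j))

/-- The regularization of `f` by two convolutions with the reproducing kernel at scale `2⁻ʲ`. -/
def smoothing (ψ : Euc n → ℝ) (M : ℕ) (f : Euc n → ℝ) (j : ℤ) : Euc n → ℝ :=
  conv (conv f (dilate (reproKernel ψ M) (dyadicScale j)))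
    (dilate (reproKernel ψ M) (dyadicScale j))

/-- The points of `Ω` whose distance to the complement of `Ω` is at least `A * 2⁻ʲ`. -/
def farRegion (A : ℝ) (Ω : Set (Euc n)) (j : ℤ) : Set (Euc n) :=
  {y | A * dyadicScale j ≤ distCompl Ω y}

/-- The part of the `j`-th difference of smoothings produced by the far region. -/
def farPart (ψ : Euc n → ℝ) (M : ℕ) (f : Euc n → ℝ) (A : ℝ) (Ω : Set (Euc n)) (j : ℤ) :
    Euc n → ℝ :=
  conv ((farRegion A Ω j).indicator (twoScaleMean ψ M f j)) (bandKernel ψ M (dyadicScale j))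

/-- The part of the `j`-th difference of smoothings produced outside the far region. -/
def nearPart (ψ : Euc n → ℝ) (M : ℕ) (f : Euc n → ℝ) (A : ℝ) (Ω : Set (Euc n)) (j : ℤ) :
    Euc n → ℝ :=
  conv ((farRegion A Ω j)ᶜ.indicator (twoScaleMean ψ M f j)) (bandKernel ψ M (dyadicScale j))

/-- The smoothing of `f` at scale `2⁻ᵇ` without the far parts of the scales between `2⁻ᵃ` and
`2⁻ᵇ`; the good function of the decomposition is its limit as `b → ∞`. -/
def goodApprox (ψ : Euc n → ℝ) (M : ℕ) (f : Euc n → ℝ) (A : ℝ) (Ω : Set (Euc n)) (a b : ℤ) :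
    Euc n → ℝ :=
  smoothing ψ M f b - ∑ j ∈ Finset.Ioc a b, farPart ψ M f A Ω j

variable {ψ f : Euc n → ℝ} {M : ℕ} {j : ℤ} {Ω : Set (Euc n)} {A B lam : ℝ} {x : Euc n}

lemma measurableSet_farRegion (A : ℝ) (Ω : Set (Euc n)) (j : ℤ) :
    MeasurableSet (farRegion A Ω j) :=
  measurableSet_le measurable_const (continuous_distCompl Ω).measurable

lemma continuous_twoScaleMean (hψ : ContCompactSupport ψ) (M : ℕ)
    (hf : LocallyIntegrable f volume) (j : ℤ) : Continuous (twoScaleMean ψ M f j) := by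
  have hK := contCompactSupport_reproKernel hψ M
  have hs := dyadicScale_pos j
  exact (continuous_conv hf (hK.dilate hs)).add
    (continuous_conv hf (hK.dilate (mul_pos two_pos hs)))

lemma continuous_smoothing (hψ : ContCompactSupport ψ) (M : ℕ)
    (hf : LocallyIntegrable f volume) (j : ℤ) : Continuous (smoothing ψ M f j) := by
  have hK := (contCompactSupport_reproKernel hψ M).dilate (dyadicScale_pos j)
  exact continuous_conv (continuous_conv hf hK).locallyIntegrable hK

lemma continuous_farPart (hψ : ContCompactSupport ψ) (M : ℕ) (hf : LocallyIntegrable f volume)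
    (A : ℝ) (Ω : Set (Euc n)) (j : ℤ) : Continuous (farPart ψ M f A Ω j) :=
  continuous_conv ((continuous_twoScaleMean hψ M hf j).locallyIntegrable.indicator
    (measurableSet_farRegion A Ω j)) (contCompactSupport_bandKernel hψ M (dyadicScale_pos j))

lemma continuous_goodApprox (hψ : ContCompactSupport ψ) (M : ℕ)
    (hf : LocallyIntegrable f volume) (A : ℝ) (Ω : Set (Euc n)) (a b : ℤ) :
    Continuous (goodApprox ψ M f A Ω a b) :=
  (continuous_smoothing hψ M hf b).sub <| by
    simpa only [Finset.sum_fn] using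
      continuous_finsetSum _ fun j _ => continuous_farPart hψ M hf A Ω j

lemma smoothing_eq_conv_dilate (hψ : ContCompactSupport ψ) (M : ℕ)
    (hf : LocallyIntegrable f volume) (j : ℤ) :
    smoothing ψ M f j =
      conv f (dilate (conv (reproKernel ψ M) (reproKernel ψ M)) (dyadicScale j)) := by
  have hs := dyadicScale_pos j
  have hK := (contCompactSupport_reproKernel hψ M).dilate hs
  rw [smoothing, conv_assoc hf hK hK, conv_dilate_dilate _ _ hs]

lemma integral_conv_reproKernel (hψ : IsAdmissible ψ) (hM : 1 ≤ M) :
    ∫ x, conv (reproKernel ψ M) (reproKernel ψ M) x = 1 := by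
  have hK := (contCompactSupport_reproKernel hψ.contCompactSupport M).integrable
  have h := integral_convolution (ContinuousLinearMap.mul ℝ ℝ) hK hK (μ := volume) (ν := volume)
  simp only [integral_reproKernel hψ hM, ContinuousLinearMap.mul_apply', mul_one] at h
  exact h

lemma ae_tendsto_smoothing (hψ : IsAdmissible ψ) (hM : 1 ≤ M)
    (hf : LocallyIntegrable f volume) :
    ∀ᵐ x, Filter.Tendsto (fun N : ℕ => smoothing ψ M f N x) Filter.atTop (nhds (f x)) := by
  have hK := contCompactSupport_reproKernel hψ.contCompactSupport M
  filter_upwards [ae_tendsto_conv_dilate (hK.conv hK) hf] with x hx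
  simp only [smoothing_eq_conv_dilate hψ.contCompactSupport M hf]
  rw [integral_conv_reproKernel hψ hM, mul_one] at hx
  exact hx.comp tendsto_dyadicScale

/-- With `K` the reproducing kernel, this is the identity
`(K_s + K_2s) * (K_s - K_2s) = K_s * K_s - K_2s * K_2s`. -/
lemma conv_twoScaleMean_bandKernel (hψ : ContCompactSupport ψ) (M : ℕ)
    (hf : LocallyIntegrable f volume) (j : ℤ) :
    conv (twoScaleMean ψ M f j) (bandKernel ψ M (dyadicScale j)) =
      smoothing ψ M f j - smoothing ψ M f (j - 1) := by
  have hK := contCompactSupport_reproKernel hψ M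
  have hs := dyadicScale_pos j
  have h₁ := hK.dilate hs
  have h₂ := hK.dilate (mul_pos two_pos hs)
  have hf₁ := (continuous_conv hf h₁).locallyIntegrable (μ := volume)
  have hf₂ := (continuous_conv hf h₂).locallyIntegrable (μ := volume)
  rw [twoScaleMean, smoothing, smoothing, dyadicScale_sub_one, conv_add_left hf₁ hf₂
      (contCompactSupport_bandKernel hψ M hs), bandKernel, conv_sub_right hf₁ h₁ h₂,
    conv_sub_right hf₂ h₁ h₂, conv_assoc hf h₁ h₂, conv_assoc hf h₂ h₁, conv_comm (dilate _ _)]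
  abel

lemma farPart_add_nearPart (hψ : ContCompactSupport ψ) (M : ℕ) (hf : LocallyIntegrable f volume)
    (A : ℝ) (Ω : Set (Euc n)) (j : ℤ) :
    farPart ψ M f A Ω j + nearPart ψ M f A Ω j =
      smoothing ψ M f j - smoothing ψ M f (j - 1) := by
  have hu := (continuous_twoScaleMean hψ M hf j).locallyIntegrable (μ := volume)
  have hF := measurableSet_farRegion A Ω j
  rw [farPart, nearPart, ← conv_add_left (hu.indicator hF) (hu.indicator hF.compl)
      (contCompactSupport_bandKernel hψ M (dyadicScale_pos j)),
    indicator_self_add_compl, conv_twoScaleMean_bandKernel hψ M hf]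

lemma goodApprox_add_one (hψ : ContCompactSupport ψ) (M : ℕ) (hf : LocallyIntegrable f volume)
    (A : ℝ) (Ω : Set (Euc n)) {a b : ℤ} (hab : a ≤ b) :
    goodApprox ψ M f A Ω a (b + 1) =
      goodApprox ψ M f A Ω a b + nearPart ψ M f A Ω (b + 1) := by
  have hdiff := farPart_add_nearPart hψ M hf A Ω (b + 1)
  rw [_root_.add_sub_cancel_right] at hdiff
  rw [goodApprox, goodApprox, ← Finset.insert_Ioc_right_eq_Ioc_add_one hab,
    Finset.sum_insert (by simp), eq_add_of_sub_eq' hdiff.symm]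
  abel

lemma farPart_eq_zero (hB0 : 0 ≤ B) (hB : ∀ x, reproKernel ψ M x ≠ 0 → ‖x‖ ≤ B)
    (f : Euc n → ℝ) (hx : distCompl Ω x < 4 * B * dyadicScale j) :
    farPart ψ M f (6 * B) Ω j x = 0 := by
  rw [farPart, conv_apply]
  refine integral_eq_zero_of_ae (Filter.Eventually.of_forall fun z => ?_)
  by_contra hz
  have hdist := norm_le_of_bandKernel_ne_zero hB0 hB (dyadicScale_pos j) _
    (right_ne_zero_of_mul hz)
  have hfar : z ∈ farRegion (6 * B) Ω j := mem_of_indicator_ne_zero (left_ne_zero_of_mul hz)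
  rw [farRegion, mem_ofPred_eq] at hfar
  have htri := distCompl_le_add_dist Ω z x
  rw [dist_comm, dist_eq_norm] at htri
  linarith

lemma nearPart_eq_zero (hB0 : 0 ≤ B) (hB : ∀ x, reproKernel ψ M x ≠ 0 → ‖x‖ ≤ B)
    (f : Euc n → ℝ) (hx : 8 * B * dyadicScale j ≤ distCompl Ω x) :
    nearPart ψ M f (6 * B) Ω j x = 0 := by
  rw [nearPart, conv_apply]
  refine integral_eq_zero_of_ae (Filter.Eventually.of_forall fun z => ?_)
  by_contra hz
  have hdist := norm_le_of_bandKernel_ne_zero hB0 hB (dyadicScale_pos j) _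
    (right_ne_zero_of_mul hz)
  have hnear : z ∈ (farRegion (6 * B) Ω j)ᶜ :=
    mem_of_indicator_ne_zero (left_ne_zero_of_mul hz)
  rw [mem_compl_iff, farRegion, mem_ofPred_eq, not_le] at hnear
  have htri := distCompl_le_add_dist Ω x z
  rw [dist_eq_norm] at htri
  linarith

lemma goodApprox_congr_left (hB0 : 0 ≤ B) (hB : ∀ x, reproKernel ψ M x ≠ 0 → ‖x‖ ≤ B)
    (f : Euc n → ℝ) {a a' : ℤ} (haa' : a' ≤ a) (b : ℤ)
    (hx : distCompl Ω x < 4 * B * dyadicScale a) :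
    goodApprox ψ M f (6 * B) Ω a' b x = goodApprox ψ M f (6 * B) Ω a b x := by
  simp only [goodApprox, Pi.sub_apply, Finset.sum_apply]
  congr 1
  refine (Finset.sum_subset (Finset.Ioc_subset_Ioc_left haa') fun j hj hj' => ?_).symm
  have hja : j ≤ a := by
    simp only [Finset.mem_Ioc] at hj hj'
    omega
  exact farPart_eq_zero hB0 hB f
    (hx.trans_le (mul_le_mul_of_nonneg_left (dyadicScale_antitone hja) (by positivity)))

lemma goodApprox_eq_smoothing (hB0 : 0 ≤ B) (hB : ∀ x, reproKernel ψ M x ≠ 0 → ‖x‖ ≤ B)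
    (f : Euc n → ℝ) {a b : ℤ} (hab : a ≤ b) (hx : distCompl Ω x < 4 * B * dyadicScale b) :
    goodApprox ψ M f (6 * B) Ω a b x = smoothing ψ M f b x := by
  rw [goodApprox_congr_left hB0 hB f hab b hx]
  simp [goodApprox]

end Pieces

section GoodBounds

variable {n : ℕ} {ψ f : Euc n → ℝ} {M : ℕ} {A B lam : ℝ}

lemma abs_convAt_le_of_distCompl_lt {s t : ℝ} {y : Euc n} (hA : 0 < A) (hs : 0 < s)
    (hne : (apertureLevelSet ψ f A lam)ᶜ.Nonempty)
    (hy : distCompl (apertureLevelSet ψ f A lam) y < A * s) (hst : s ≤ t) :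
    |convAt ψ f t y| ≤ lam := by
  obtain ⟨x, hx, hxy⟩ := (Metric.infDist_lt_iff hne).1 hy
  by_contra! hlt
  refine hx ⟨y, t, hs.trans_le hst, ?_, hlt⟩
  rw [dist_comm]
  exact hxy.trans_le (mul_le_mul_of_nonneg_left hst hA.le)

lemma exists_abs_twoScaleMean_le (hψ : ContCompactSupport ψ) (M : ℕ) (hA : 0 < A) :
    ∃ C > 0, ∀ f : Euc n → ℝ, LocallyIntegrable f volume → ∀ lam,
      (apertureLevelSet ψ f A lam)ᶜ.Nonempty → ∀ j y,
        distCompl (apertureLevelSet ψ f A lam) y < A * dyadicScale j →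
          |twoScaleMean ψ M f j y| ≤ C * lam := by
  obtain ⟨C, hC0, hC⟩ := exists_abs_conv_dilate_reproKernel_le hψ M
  refine ⟨2 * C, by positivity, fun f hf lam hne j y hy => ?_⟩
  have hs := dyadicScale_pos j
  have hnear : ∀ t, dyadicScale j ≤ t → |convAt ψ f t y| ≤ lam := fun _ =>
    abs_convAt_le_of_distCompl_lt hA hs hne hy
  have h₁ := hC f hf _ lam hs y hnear
  have h₂ := hC f hf _ lam (mul_pos two_pos hs) y fun t ht => hnear t (by linarith)
  calc _ ≤ C * lam + C * lam := (abs_add_le _ _).trans (add_le_add h₁ h₂)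
    _ = _ := by ring

lemma exists_abs_smoothing_le (hψ : ContCompactSupport ψ) (hB0 : 0 < B)
    (hB : ∀ x, reproKernel ψ M x ≠ 0 → ‖x‖ ≤ B) :
    ∃ C > 0, ∀ f : Euc n → ℝ, LocallyIntegrable f volume → ∀ lam ≥ 0,
      (apertureLevelSet ψ f (6 * B) lam)ᶜ.Nonempty → ∀ j x,
        distCompl (apertureLevelSet ψ f (6 * B) lam) x < 4 * B * dyadicScale j →
          |smoothing ψ M f j x| ≤ C * lam := by
  obtain ⟨C, hC0, hC⟩ := exists_abs_conv_dilate_reproKernel_le hψ M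
  refine ⟨C * (∫ x, |reproKernel ψ M x|) + 1, by positivity, fun f hf lam hlam hne j x hx => ?_⟩
  have hs := dyadicScale_pos j
  have hK := (contCompactSupport_reproKernel hψ M).dilate hs
  calc |smoothing ψ M f j x|
      ≤ C * lam * ∫ z, |dilate (reproKernel ψ M) (dyadicScale j) z| := by
        refine abs_conv_le hK.integrable x (Filter.Eventually.of_forall fun z hz => ?_)
        have hdist := norm_le_of_dilate_ne_zero hB hs _ hz
        have htri := distCompl_le_add_dist (apertureLevelSet ψ f (6 * B) lam) z x
        rw [dist_comm, dist_eq_norm] at htri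
        exact hC f hf _ lam hs z fun _ =>
          abs_convAt_le_of_distCompl_lt (by positivity) hs hne (by nlinarith)
    _ = C * (∫ x, |reproKernel ψ M x|) * lam := by
        rw [integral_abs_dilate _ hs]
        ring
    _ ≤ _ := by linarith

lemma exists_abs_nearPart_le (hψ : ContCompactSupport ψ) (M : ℕ) (hA : 0 < A) :
    ∃ C > 0, ∀ f : Euc n → ℝ, LocallyIntegrable f volume → ∀ lam ≥ 0,
      (apertureLevelSet ψ f A lam)ᶜ.Nonempty → ∀ j x,
        |nearPart ψ M f A (apertureLevelSet ψ f A lam) j x| ≤ C * lam := by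
  obtain ⟨C, hC0, hC⟩ := exists_abs_twoScaleMean_le hψ M hA
  refine ⟨C * (2 * ∫ x, |reproKernel ψ M x|) + 1, by positivity,
    fun f hf lam hlam hne j x => ?_⟩
  set Ω := apertureLevelSet ψ f A lam
  have hs := dyadicScale_pos j
  have hmean : ∀ z, |(farRegion A Ω j)ᶜ.indicator (twoScaleMean ψ M f j) z| ≤ C * lam := by
    intro z
    by_cases hz : z ∈ (farRegion A Ω j)ᶜ
    · rw [indicator_of_mem hz]
      exact hC f hf lam hne j z (not_le.1 hz)
    · rw [indicator_of_notMem hz, abs_zero]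
      positivity
  calc _ ≤ C * lam * ∫ z, |bandKernel ψ M (dyadicScale j) z| :=
        abs_conv_le (contCompactSupport_bandKernel hψ M hs).integrable x
          (Filter.Eventually.of_forall fun z _ => hmean z)
    _ ≤ C * lam * (2 * ∫ x, |reproKernel ψ M x|) := by
        gcongr
        exact integral_abs_bandKernel_le hψ M hs
    _ ≤ _ := by linarith

lemma exists_abs_goodApprox_le (hψ : ContCompactSupport ψ) (hB0 : 0 < B)
    (hB : ∀ x, reproKernel ψ M x ≠ 0 → ‖x‖ ≤ B) :
    ∃ C > 0, ∀ f : Euc n → ℝ, LocallyIntegrable f volume → ∀ lam ≥ 0,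
      (apertureLevelSet ψ f (6 * B) lam)ᶜ.Nonempty → ∀ a b, a ≤ b →
        (∀ y, distCompl (apertureLevelSet ψ f (6 * B) lam) y < 4 * B * dyadicScale a) →
          ∀ x, |goodApprox ψ M f (6 * B) (apertureLevelSet ψ f (6 * B) lam) a b x| ≤ C * lam := by
  obtain ⟨C₁, hC₁0, hC₁⟩ := exists_abs_smoothing_le hψ hB0 hB
  obtain ⟨C₂, hC₂0, hC₂⟩ := exists_abs_nearPart_le hψ M (A := 6 * B) (by positivity)
  refine ⟨C₁ + C₂, by positivity, fun f hf lam hlam hne a b hab ha x => ?_⟩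
  set Ω := apertureLevelSet ψ f (6 * B) lam
  have hC₂lam : 0 ≤ C₂ * lam := by positivity
  have hnear : ∀ b, a ≤ b → distCompl Ω x < 4 * B * dyadicScale b →
      |goodApprox ψ M f (6 * B) Ω a b x| ≤ C₁ * lam := fun b hab hx => by
    rw [goodApprox_eq_smoothing hB0.le hB f hab hx]
    exact hC₁ f hf lam hlam hne b x hx
  induction b, hab using Int.leInduction with
  | base => linarith [hnear a le_rfl (ha x)]
  | succ b hab ih =>
    rw [goodApprox_add_one hψ M hf _ _ hab, Pi.add_apply]
    rcases le_or_gt (8 * B * dyadicScale (b + 1)) (distCompl Ω x) with hx | hx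
    · rwa [nearPart_eq_zero hB0.le hB f hx, add_zero]
    · have hscale := dyadicScale_sub_one (b + 1)
      rw [_root_.add_sub_cancel_right] at hscale
      have h₁ := hnear b hab (by rw [hscale]; linarith)
      calc _ ≤ C₁ * lam + C₂ * lam :=
            (abs_add_le _ _).trans (add_le_add h₁ (hC₂ f hf lam hlam hne (b + 1) x))
        _ = _ := by ring

end GoodBounds

/-! ### The good functions -/

section GoodFunctions

open Filter Topology

variable {n : ℕ} {ψ f : Euc n → ℝ} {M : ℕ} {A B lam : ℝ} {Ω : Set (Euc n)} {x : Euc n}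

lemma distCompl_lt_of_volume_lt_volume_ball {r : ℝ}
    (hv : volume Ω < volume (Metric.ball (0 : Euc n) r)) (y : Euc n) : distCompl Ω y < r := by
  by_contra! hle
  refine hv.not_ge ?_
  rw [← Measure.addHaar_ball_center volume y]
  exact measure_mono ((Metric.ball_subset_ball hle).trans Metric.ball_infDist_compl_subset)

lemma eventually_distCompl_lt_dyadicScale (hn : 1 ≤ n) (hB0 : 0 < B) (hv : volume Ω ≠ ∞) :
    ∀ᶠ N : ℕ in atTop, ∀ y, distCompl Ω y < B * dyadicScale (-N) := by
  have hradius : Tendsto (fun N : ℕ => B * 2 ^ N) atTop atTop :=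
    (_root_.tendsto_pow_atTop_atTop_of_one_lt (one_lt_two (α := ℝ))).const_mul_atTop hB0
  have hpow : Tendsto (fun N : ℕ => (B * 2 ^ N) ^ n) atTop atTop :=
    (tendsto_pow_atTop (by omega)).comp hradius
  have hball : Tendsto (fun N : ℕ => volume (Metric.ball (0 : Euc n) (B * 2 ^ N)))
      atTop (𝓝 ∞) := by
    have hunit : volume (Metric.ball (0 : Euc n) 1) ≠ 0 :=
      (Metric.measure_ball_pos _ _ one_pos).ne'
    have hmul := ENNReal.Tendsto.mul_const (b := volume (Metric.ball (0 : Euc n) 1))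
      (ENNReal.tendsto_ofReal_atTop.comp hpow) (Or.inl top_ne_zero)
    rw [top_mul hunit] at hmul
    exact hmul.congr fun N => (volume_euc_ball 0 (by positivity)).symm
  filter_upwards [hball.eventually (lt_mem_nhds hv.lt_top)] with N hN y
  rw [dyadicScale_neg_natCast]
  exact distCompl_lt_of_volume_lt_volume_ball hN y

lemma goodApprox_eq_of_le_distCompl (hψ : ContCompactSupport ψ)
    (hf : LocallyIntegrable f volume) (hB0 : 0 ≤ B)
    (hB : ∀ x, reproKernel ψ M x ≠ 0 → ‖x‖ ≤ B) {a b c : ℤ} (hab : a ≤ b) (hbc : b ≤ c)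
    (hx : 8 * B * dyadicScale b ≤ distCompl Ω x) :
    goodApprox ψ M f (6 * B) Ω a c x = goodApprox ψ M f (6 * B) Ω a b x := by
  induction c, hbc using Int.leInduction with
  | base => rfl
  | succ c hbc ih =>
    have hscale : dyadicScale (c + 1) ≤ dyadicScale b := dyadicScale_antitone (by omega)
    have hfar : 8 * B * dyadicScale (c + 1) ≤ distCompl Ω x :=
      (mul_le_mul_of_nonneg_left hscale (by positivity)).trans hx
    rw [goodApprox_add_one hψ M hf _ _ (hab.trans hbc), Pi.add_apply, ih,
      nearPart_eq_zero hB0 hB f hfar, add_zero]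

lemma exists_tendsto_goodApprox_of_mem (hn : 1 ≤ n) (hψ : ContCompactSupport ψ)
    (hf : LocallyIntegrable f volume) (hB0 : 0 < B)
    (hB : ∀ x, reproKernel ψ M x ≠ 0 → ‖x‖ ≤ B) (hΩ : IsOpen Ω) (hv : volume Ω ≠ ∞)
    (hx : x ∈ Ω) :
    ∃ l, Tendsto (fun N : ℕ => goodApprox ψ M f (6 * B) Ω (-N) N x) atTop (𝓝 l) := by
  have hd := distCompl_pos hΩ (nonempty_compl_of_volume_ne_top hn hv) hx
  obtain ⟨a, ha⟩ := (eventually_distCompl_lt_dyadicScale hn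
    (show 0 < 4 * B by positivity) hv).exists
  have hsmall : ∀ᶠ N : ℕ in atTop, 8 * B * dyadicScale N < distCompl Ω x := by
    have hlim := ((tendsto_nhdsWithin_iff.1 tendsto_dyadicScale).1).const_mul (8 * B)
    rw [mul_zero] at hlim
    exact hlim.eventually_lt_const hd
  obtain ⟨b, hb, hab⟩ := (hsmall.and (eventually_ge_atTop a)).exists
  refine ⟨goodApprox ψ M f (6 * B) Ω (-a) b x, tendsto_const_nhds.congr' ?_⟩
  filter_upwards [eventually_ge_atTop b] with N hN
  have hleft := goodApprox_congr_left hB0.le hB f (show -(N : ℤ) ≤ -a by omega) N (ha x)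
  have hright := goodApprox_eq_of_le_distCompl hψ hf hB0.le hB (show -(a : ℤ) ≤ b by omega)
    (show (b : ℤ) ≤ N by omega) hb.le
  exact (hleft.trans hright).symm

lemma ae_exists_tendsto_goodApprox (hn : 1 ≤ n) (hψ : IsAdmissible ψ) (hM : 1 ≤ M)
    (hf : LocallyIntegrable f volume) (hB0 : 0 < B)
    (hB : ∀ x, reproKernel ψ M x ≠ 0 → ‖x‖ ≤ B) (hΩ : IsOpen Ω) (hv : volume Ω ≠ ∞) :
    ∀ᵐ x, ∃ l, Tendsto (fun N : ℕ => goodApprox ψ M f (6 * B) Ω (-N) N x) atTop (𝓝 l) := by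
  filter_upwards [ae_tendsto_smoothing hψ hM hf] with x hlim
  by_cases hx : x ∈ Ω
  · exact exists_tendsto_goodApprox_of_mem hn hψ.contCompactSupport hf hB0 hB hΩ hv hx
  · refine ⟨f x, hlim.congr fun N => (goodApprox_eq_smoothing hB0.le hB f (by omega) ?_).symm⟩
    have hs := dyadicScale_pos N
    have hx0 := distCompl_le_dist hx x
    rw [dist_self] at hx0
    exact hx0.trans_lt (by positivity)

lemma tendsto_convAt_of_ae_tendsto (hψ : ContCompactSupport ψ) {F : ℕ → Euc n → ℝ}
    {g : Euc n → ℝ} {c : ℝ} (hF : ∀ N, Continuous (F N))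
    (hc : ∀ᶠ N in atTop, ∀ x, |F N x| ≤ c)
    (hg : ∀ᵐ x, Tendsto (fun N => F N x) atTop (𝓝 (g x))) {R : ℝ} (hR : 0 < R) (y : Euc n) :
    Tendsto (fun N => convAt ψ (F N) R y) atTop (𝓝 (convAt ψ g R y)) := by
  have hd := hψ.dilate hR
  have hdc := hd.continuous
  simp only [convAt_eq_conv, conv_apply]
  refine tendsto_integral_filter_of_dominated_convergence (fun z => c * |dilate ψ R (y - z)|)
    (Eventually.of_forall fun N => ?_) ?_ ((hd.integrable.comp_sub_left y).abs.const_mul c) ?_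
  · exact ((hF N).mul (by fun_prop)).aestronglyMeasurable
  · filter_upwards [hc] with N hN
    refine Eventually.of_forall fun z => ?_
    rw [Real.norm_eq_abs, abs_mul]
    exact mul_le_mul_of_nonneg_right (hN z) (abs_nonneg _)
  · filter_upwards [hg] with z hz using hz.mul_const _

lemma locallyIntegrable_of_ae_abs_le {g : Euc n → ℝ} {c : ℝ}
    (hg : AEStronglyMeasurable g volume) (hc : ∀ᵐ x, |g x| ≤ c) : LocallyIntegrable g volume :=
  locallyIntegrable_iff.2 fun _ hk =>
    Measure.integrableOn_of_bounded hk.measure_lt_top.ne hg (ae_restrict_of_ae hc)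

/-- `g` is a good function of `f` relative to `Ω`: the limit of the truncated good functions,
tested against the dilates of `ψ`. -/
structure IsGoodFunction (ψ : Euc n → ℝ) (M : ℕ) (f : Euc n → ℝ) (A : ℝ) (Ω : Set (Euc n))
    (g : Euc n → ℝ) : Prop where
  locallyIntegrable : LocallyIntegrable g volume
  tendsto_convAt : ∀ R > 0, ∀ y, Tendsto
    (fun N : ℕ => convAt ψ (goodApprox ψ M f A Ω (-N) N) R y) atTop (𝓝 (convAt ψ g R y))

lemma exists_isGoodFunction (hn : 1 ≤ n) (hψ : IsAdmissible ψ) (hM : 1 ≤ M) (hB0 : 0 < B)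
    (hB : ∀ x, reproKernel ψ M x ≠ 0 → ‖x‖ ≤ B) :
    ∃ C > 0, ∀ f : Euc n → ℝ, LocallyIntegrable f volume → ∀ lam ≥ 0,
      volume (apertureLevelSet ψ f (6 * B) lam) ≠ ∞ → ∃ g,
        IsGoodFunction ψ M f (6 * B) (apertureLevelSet ψ f (6 * B) lam) g ∧
          ∀ᵐ x, |g x| ≤ C * lam := by
  have hψ' := hψ.contCompactSupport
  obtain ⟨C, hC0, hC⟩ := exists_abs_goodApprox_le hψ' hB0 hB
  refine ⟨C, hC0, fun f hf lam hlam hv => ?_⟩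
  have hcont : ∀ N : ℕ, Continuous
      (goodApprox ψ M f (6 * B) (apertureLevelSet ψ f (6 * B) lam) (-N) N) := fun N =>
    continuous_goodApprox hψ' M hf _ _ _ _
  have hbound : ∀ᶠ N : ℕ in atTop, ∀ x,
      |goodApprox ψ M f (6 * B) (apertureLevelSet ψ f (6 * B) lam) (-N) N x| ≤ C * lam := by
    filter_upwards [eventually_distCompl_lt_dyadicScale hn (show 0 < 4 * B by positivity) hv]
      with N hN x
    exact hC f hf lam hlam (nonempty_compl_of_volume_ne_top hn hv) (-N) N (by omega) hN x
  obtain ⟨g, hgm, hg⟩ := exists_stronglyMeasurable_limit_of_tendsto_ae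
    (fun N => (hcont N).aestronglyMeasurable)
    (ae_exists_tendsto_goodApprox hn hψ hM hf hB0 hB (isOpen_apertureLevelSet _ _ _ _) hv)
  have hgb : ∀ᵐ x, |g x| ≤ C * lam := by
    filter_upwards [hg] with x hx
    refine le_of_tendsto hx.abs ?_
    filter_upwards [hbound] with N hN using hN x
  exact ⟨g, ⟨locallyIntegrable_of_ae_abs_le hgm.aestronglyMeasurable hgb,
    fun R hR y => tendsto_convAt_of_ae_tendsto hψ' hcont hbound hg hR y⟩, hgb⟩

end GoodFunctions

/-! ### The far parts -/

lemma exists_sum_dyadicScale_pow_le {M : ℕ} (hM : 1 ≤ M) : ∃ C > 0, ∀ d > 0, ∀ s : Finset ℤ,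
    ∑ j ∈ s, (if dyadicScale j ≤ d then dyadicScale j ^ M else 0) ≤ C * d ^ M := by
  obtain ⟨C, hC, h⟩ := exists_tsum_two_zpow_rpow_le (q := M) (by exact_mod_cast hM)
  refine ⟨C.toReal + 1, by positivity, fun d hd s => ?_⟩
  have hterm : ∀ j, ENNReal.ofReal (if dyadicScale j ≤ d then dyadicScale j ^ M else 0) =
      if (2 : ℝ≥0∞) ^ (-j) ≤ ENNReal.ofReal d then ((2 : ℝ≥0∞) ^ (-j)) ^ (M : ℝ) else 0 := by
    intro j
    rw [← ofReal_two_zpow, ← dyadicScale, ENNReal.rpow_natCast,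
      ← ENNReal.ofReal_pow (dyadicScale_pos j).le]
    simp only [ENNReal.ofReal_le_ofReal_iff hd.le, apply_ite ENNReal.ofReal, ENNReal.ofReal_zero]
  have hsum : ENNReal.ofReal (∑ j ∈ s, (if dyadicScale j ≤ d then dyadicScale j ^ M else 0)) ≤
      ENNReal.ofReal (C.toReal * d ^ M) := by
    have hs : ∀ j, 0 < dyadicScale j := dyadicScale_pos
    rw [ENNReal.ofReal_sum_of_nonneg fun j _ => by have := hs j; positivity,
      ENNReal.ofReal_mul toReal_nonneg, ENNReal.ofReal_toReal hC, ENNReal.ofReal_pow hd.le,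
      ← ENNReal.rpow_natCast]
    simp only [hterm]
    refine (ENNReal.sum_le_tsum s).trans (le_trans (le_of_eq ?_) (h (ENNReal.ofReal d)))
    exact (Equiv.neg ℤ).tsum_eq fun j : ℤ =>
      if (2 : ℝ≥0∞) ^ j ≤ ENNReal.ofReal d then ((2 : ℝ≥0∞) ^ j) ^ (M : ℝ) else 0
  calc _ ≤ C.toReal * d ^ M := (ENNReal.ofReal_le_ofReal_iff (by positivity)).1 hsum
    _ ≤ (C.toReal + 1) * d ^ M := by
      gcongr
      linarith

section FarParts

variable {n : ℕ} {ψ f : Euc n → ℝ} {M : ℕ} {A B lam : ℝ} {Ω Ω' : Set (Euc n)} {x z : Euc n}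

lemma farRegion_subset_of_subset (A : ℝ) (h : Ω' ⊆ Ω) (hne : Ωᶜ.Nonempty) (j : ℤ) :
    farRegion A Ω' j ⊆ farRegion A Ω j := by
  intro z hz
  rw [farRegion, mem_ofPred_eq] at hz ⊢
  exact hz.trans (Metric.infDist_le_infDist_of_subset (compl_subset_compl.2 h) hne)

/-- The restriction of the two-scale mean of `f` to the layer where it belongs to the far part
relative to `Ω` but not to the far part relative to `Ω'`. -/
def farLayer (ψ : Euc n → ℝ) (M : ℕ) (f : Euc n → ℝ) (A : ℝ) (Ω Ω' : Set (Euc n)) (j : ℤ) :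
    Euc n → ℝ :=
  (farRegion A Ω j \ farRegion A Ω' j).indicator (twoScaleMean ψ M f j)

lemma locallyIntegrable_farLayer (hψ : ContCompactSupport ψ) (M : ℕ)
    (hf : LocallyIntegrable f volume) (A : ℝ) (Ω Ω' : Set (Euc n)) (j : ℤ) :
    LocallyIntegrable (farLayer ψ M f A Ω Ω' j) volume :=
  (continuous_twoScaleMean hψ M hf j).locallyIntegrable.indicator
    ((measurableSet_farRegion A Ω j).diff (measurableSet_farRegion A Ω' j))

lemma farPart_sub_farPart (hψ : ContCompactSupport ψ) (M : ℕ) (hf : LocallyIntegrable f volume)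
    {j : ℤ} (h : farRegion A Ω' j ⊆ farRegion A Ω j) :
    farPart ψ M f A Ω j - farPart ψ M f A Ω' j =
      conv (farLayer ψ M f A Ω Ω' j) (bandKernel ψ M (dyadicScale j)) := by
  have hu := (continuous_twoScaleMean hψ M hf j).locallyIntegrable (μ := volume)
  rw [farLayer, indicator_sdiff h, farPart, farPart,
    conv_sub_left (hu.indicator (measurableSet_farRegion A Ω j))
      (hu.indicator (measurableSet_farRegion A Ω' j))
      (contCompactSupport_bandKernel hψ M (dyadicScale_pos j))]

lemma convAt_goodApprox_sub (hψ : ContCompactSupport ψ) (M : ℕ)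
    (hf : LocallyIntegrable f volume) (h : ∀ j, farRegion A Ω' j ⊆ farRegion A Ω j) (a b : ℤ)
    {R : ℝ} (hR : 0 < R) (y : Euc n) :
    convAt ψ (goodApprox ψ M f A Ω' a b) R y - convAt ψ (goodApprox ψ M f A Ω a b) R y =
      ∑ j ∈ Finset.Ioc a b, conv (farLayer ψ M f A Ω Ω' j)
        (conv (bandKernel ψ M (dyadicScale j)) (dilate ψ R)) y := by
  have hd := hψ.dilate hR
  have hband := fun j => contCompactSupport_bandKernel hψ M (dyadicScale_pos j)
  have hlayer := locallyIntegrable_farLayer hψ M hf A Ω Ω'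
  have hgood : goodApprox ψ M f A Ω' a b - goodApprox ψ M f A Ω a b =
      ∑ j ∈ Finset.Ioc a b, conv (farLayer ψ M f A Ω Ω' j)
        (bandKernel ψ M (dyadicScale j)) := by
    rw [goodApprox, goodApprox, _root_.sub_sub_sub_cancel_left, ← Finset.sum_sub_distrib]
    exact Finset.sum_congr rfl fun j _ => farPart_sub_farPart hψ M hf (h j)
  rw [convAt_eq_conv, convAt_eq_conv, ← Pi.sub_apply, ← conv_sub_left
      (continuous_goodApprox hψ M hf A Ω' a b).locallyIntegrable
      (continuous_goodApprox hψ M hf A Ω a b).locallyIntegrable hd, hgood,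
    conv_sum_left _ (fun j _ => (continuous_conv (hlayer j) (hband j)).locallyIntegrable) hd,
    Finset.sum_apply]
  exact Finset.sum_congr rfl fun j _ => by rw [conv_assoc (hlayer j) (hband j) hd]

lemma norm_le_of_conv_bandKernel_ne_zero {s R : ℝ} (hB0 : 0 ≤ B)
    (hB : ∀ x, reproKernel ψ M x ≠ 0 → ‖x‖ ≤ B) (hB' : ∀ x, ψ x ≠ 0 → ‖x‖ ≤ B) (hs : 0 < s)
    (hR : 0 < R) (w : Euc n) (hw : conv (bandKernel ψ M s) (dilate ψ R) w ≠ 0) :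
    ‖w‖ ≤ 2 * B * s + B * R :=
  norm_le_add_of_conv_ne_zero (norm_le_of_bandKernel_ne_zero hB0 hB hs)
    (norm_le_of_dilate_ne_zero hB' hR) w hw

lemma exists_abs_conv_bandKernel_le_dist (hψ : IsAdmissible ψ) (hB1 : 1 ≤ B)
    (hB : ∀ x, reproKernel ψ M x ≠ 0 → ‖x‖ ≤ B) (hB' : ∀ x, ψ x ≠ 0 → ‖x‖ ≤ B) :
    ∃ C > 0, ∀ R, ∀ x y : Euc n, dist x y < R → ∀ s > 0, ∀ z ≠ x,
      |conv (bandKernel ψ M s) (dilate ψ R) (y - z)| ≤ C * (s ^ M * (dist x z ^ (n + M))⁻¹) := by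
  obtain ⟨C, hC0, hC⟩ := exists_abs_conv_bandKernel_le hψ M
  refine ⟨C * (3 * B) ^ (n + M), by positivity, fun R x y hxy s hs z hz => ?_⟩
  have hR : 0 < R := dist_nonneg.trans_lt hxy
  have hxz : 0 < dist x z := dist_pos.2 hz.symm
  rcases eq_or_ne (conv (bandKernel ψ M s) (dilate ψ R) (y - z)) 0 with h0 | h0
  · rw [h0, abs_zero]
    positivity
  have hdist : dist x z ≤ 3 * B * (R + s) := by
    have hsupp := norm_le_of_conv_bandKernel_ne_zero (one_pos.le.trans hB1) hB hB' hs hR _ h0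
    rw [← dist_eq_norm] at hsupp
    have htri := dist_triangle x y z
    nlinarith
  have hpow : ((R + s) ^ (n + M))⁻¹ ≤ (3 * B) ^ (n + M) * (dist x z ^ (n + M))⁻¹ := by
    rw [← inv_pow, ← inv_pow, ← mul_pow]
    gcongr
    rw [inv_le_iff_one_le_mul₀ (by positivity), mul_right_comm, ← div_eq_mul_inv,
      one_le_div hxz]
    exact hdist
  calc _ ≤ C * (s ^ M * ((R + s) ^ (n + M))⁻¹) := hC s R hs hR _
    _ ≤ C * (s ^ M * ((3 * B) ^ (n + M) * (dist x z ^ (n + M))⁻¹)) := by gcongr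
    _ = _ := by ring

lemma inv_dist_pow_le_relDist (hx : x ∉ Ω) (hz : 0 < distCompl Ω z) (k : ℕ) :
    (dist x z ^ k)⁻¹ ≤ 2 ^ k * (relDist Ω x z ^ k / distCompl Ω z ^ k) := by
  have hle := distCompl_le_dist hx z
  rw [← div_pow, ← mul_pow, ← inv_pow, relDist, div_div_cancel_left' hz.ne']
  gcongr
  rw [← div_eq_mul_inv, inv_eq_one_div, div_le_div_iff₀ (hz.trans_le hle) (by positivity)]
  linarith

lemma exists_abs_farLayer_mul_le (hψ : IsAdmissible ψ) (hB1 : 1 ≤ B)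
    (hB : ∀ x, reproKernel ψ M x ≠ 0 → ‖x‖ ≤ B) (hB' : ∀ x, ψ x ≠ 0 → ‖x‖ ≤ B) :
    ∃ C > 0, ∀ f : Euc n → ℝ, LocallyIntegrable f volume → ∀ lam ≥ 0,
      (apertureLevelSet ψ f (6 * B) lam)ᶜ.Nonempty → ∀ Ω x, x ∉ Ω → ∀ R y, dist x y < R → ∀ j z,
        |farLayer ψ M f (6 * B) Ω (apertureLevelSet ψ f (6 * B) lam) j z| *
            |conv (bandKernel ψ M (dyadicScale j)) (dilate ψ R) (y - z)| ≤
          C * lam * (relDist Ω x z ^ (n + M) / distCompl Ω z ^ (n + M)) *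
            (if dyadicScale j ≤ distCompl Ω z then dyadicScale j ^ M else 0) := by
  obtain ⟨C₁, hC₁0, hC₁⟩ := exists_abs_twoScaleMean_le hψ.contCompactSupport M
    (show 0 < 6 * B by positivity)
  obtain ⟨C₂, hC₂0, hC₂⟩ := exists_abs_conv_bandKernel_le_dist hψ hB1 hB hB'
  refine ⟨C₁ * C₂ * 2 ^ (n + M), by positivity,
    fun f hf lam hlam hne Ω x hx R y hxy j z => ?_⟩
  have hs := dyadicScale_pos j
  have hrel := relDist_nonneg Ω x z
  have hd := distCompl_nonneg Ω z
  by_cases hz : z ∈ farRegion (6 * B) Ω j \ farRegion (6 * B) (apertureLevelSet ψ f (6 * B) lam) j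
  swap
  · rw [farLayer, indicator_of_notMem hz, abs_zero, zero_mul]
    positivity
  have hfar : 6 * B * dyadicScale j ≤ distCompl Ω z := hz.1
  have hscale : dyadicScale j ≤ distCompl Ω z := by nlinarith
  have hzpos : 0 < distCompl Ω z := hs.trans_le hscale
  have hzx : z ≠ x := fun h => hx (h ▸ mem_of_distCompl_pos hzpos)
  rw [farLayer, indicator_of_mem hz, if_pos hscale]
  calc _ ≤ C₁ * lam * (C₂ * (dyadicScale j ^ M * (dist x z ^ (n + M))⁻¹)) := by
        gcongr
        · exact hC₁ f hf lam hne j z (not_le.1 hz.2)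
        · exact hC₂ R x y hxy _ hs z hzx
    _ ≤ C₁ * lam * (C₂ * (dyadicScale j ^ M *
          (2 ^ (n + M) * (relDist Ω x z ^ (n + M) / distCompl Ω z ^ (n + M))))) := by
        gcongr
        exact inv_dist_pow_le_relDist hx hzpos _
    _ = _ := by ring

lemma exists_sum_abs_farLayer_mul_le (hψ : IsAdmissible ψ) (hM : 1 ≤ M) (hB1 : 1 ≤ B)
    (hB : ∀ x, reproKernel ψ M x ≠ 0 → ‖x‖ ≤ B) (hB' : ∀ x, ψ x ≠ 0 → ‖x‖ ≤ B) :
    ∃ C > 0, ∀ f : Euc n → ℝ, LocallyIntegrable f volume → ∀ lam ≥ 0,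
      (apertureLevelSet ψ f (6 * B) lam)ᶜ.Nonempty → ∀ Ω x, x ∉ Ω → ∀ R y, dist x y < R →
        ∀ (s : Finset ℤ) (z), 0 < distCompl Ω z →
          ∑ j ∈ s, |farLayer ψ M f (6 * B) Ω (apertureLevelSet ψ f (6 * B) lam) j z| *
              |conv (bandKernel ψ M (dyadicScale j)) (dilate ψ R) (y - z)| ≤
            C * lam * (relDist Ω x z ^ (n + M) / distCompl Ω z ^ n) := by
  obtain ⟨C₁, hC₁0, hC₁⟩ := exists_abs_farLayer_mul_le (M := M) hψ hB1 hB hB'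
  obtain ⟨C₂, hC₂0, hC₂⟩ := exists_sum_dyadicScale_pow_le hM
  refine ⟨C₁ * C₂, by positivity, fun f hf lam hlam hne Ω x hx R y hxy s z hz => ?_⟩
  have hrel := relDist_nonneg Ω x z
  calc _ ≤ ∑ j ∈ s, C₁ * lam * (relDist Ω x z ^ (n + M) / distCompl Ω z ^ (n + M)) *
          (if dyadicScale j ≤ distCompl Ω z then dyadicScale j ^ M else 0) :=
        Finset.sum_le_sum fun j _ => hC₁ f hf lam hlam hne Ω x hx R y hxy j z
    _ ≤ C₁ * lam * (relDist Ω x z ^ (n + M) / distCompl Ω z ^ (n + M)) *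
          (C₂ * distCompl Ω z ^ M) := by
        rw [← Finset.mul_sum]
        exact mul_le_mul_of_nonneg_left (hC₂ _ hz s) (by positivity)
    _ = _ := by
        rw [pow_add (distCompl Ω z)]
        field_simp

lemma farLayer_eq_zero_of_notMem (hA : 0 < A) (hz : z ∉ Ω) (j : ℤ) :
    farLayer ψ M f A Ω Ω' j z = 0 := by
  refine indicator_of_notMem (fun hmem => hz (mem_of_distCompl_pos ?_)) _
  exact (mul_pos hA (dyadicScale_pos j)).trans_le hmem.1

lemma ofReal_abs_sum_conv_le (hψ : ContCompactSupport ψ) (M : ℕ) {R : ℝ} (hR : 0 < R)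
    {v : ℤ → Euc n → ℝ} (hv : ∀ j, Measurable (v j)) (s : Finset ℤ) (y : Euc n) :
    ENNReal.ofReal
        |∑ j ∈ s, conv (v j) (conv (bandKernel ψ M (dyadicScale j)) (dilate ψ R)) y| ≤
      ∫⁻ z, ENNReal.ofReal (∑ j ∈ s, |v j z| *
        |conv (bandKernel ψ M (dyadicScale j)) (dilate ψ R) (y - z)|) := by
  have hmeas : ∀ j, Measurable fun z => ENNReal.ofReal
      (|v j z| * |conv (bandKernel ψ M (dyadicScale j)) (dilate ψ R) (y - z)|) := fun j => by
    have hker := (continuous_conv (contCompactSupport_bandKernel hψ M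
      (dyadicScale_pos j)).locallyIntegrable (hψ.dilate hR)).measurable
    have hvj := hv j
    fun_prop
  calc _ ≤ ∑ j ∈ s, ENNReal.ofReal
          |conv (v j) (conv (bandKernel ψ M (dyadicScale j)) (dilate ψ R)) y| := by
        rw [← ENNReal.ofReal_sum_of_nonneg fun _ _ => abs_nonneg _]
        exact ENNReal.ofReal_le_ofReal (Finset.abs_sum_le_sum_abs _ _)
    _ ≤ ∑ j ∈ s, ∫⁻ z, ENNReal.ofReal
          (|v j z| * |conv (bandKernel ψ M (dyadicScale j)) (dilate ψ R) (y - z)|) :=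
        Finset.sum_le_sum fun j _ => ofReal_abs_conv_le _ _ _
    _ = _ := by
        rw [← lintegral_finsetSum _ fun j _ => hmeas j]
        refine lintegral_congr fun z => ?_
        rw [ENNReal.ofReal_sum_of_nonneg fun _ _ => by positivity]

lemma exists_ofReal_abs_convAt_goodApprox_sub_le {τ : ℕ} (hψ : IsAdmissible ψ) (hM : 1 ≤ M)
    (hMτ : n + M = (n + 1) * (τ + 1)) (hB1 : 1 ≤ B)
    (hB : ∀ x, reproKernel ψ M x ≠ 0 → ‖x‖ ≤ B) (hB' : ∀ x, ψ x ≠ 0 → ‖x‖ ≤ B) :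
    ∃ C ≠ ∞, ∀ f : Euc n → ℝ, LocallyIntegrable f volume → ∀ lam ≥ 0, ∀ Ω, IsOpen Ω →
      apertureLevelSet ψ f (6 * B) lam ⊆ Ω → ∀ x, x ∉ Ω → ∀ R y, dist x y < R → ∀ a b,
        ENNReal.ofReal
          |convAt ψ (goodApprox ψ M f (6 * B) (apertureLevelSet ψ f (6 * B) lam) a b) R y -
            convAt ψ (goodApprox ψ M f (6 * B) Ω a b) R y| ≤
          C * (ENNReal.ofReal lam * marcinkiewicz Ω x ^ (τ + 1)) := by
  have hψ' := hψ.contCompactSupport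
  obtain ⟨C₁, hC₁0, hC₁⟩ := exists_sum_abs_farLayer_mul_le hψ hM hB1 hB hB'
  obtain ⟨C₂, hC₂, h₂⟩ := exists_setLIntegral_relDist_pow_le n τ
  refine ⟨ENNReal.ofReal C₁ * C₂, mul_ne_top ofReal_ne_top hC₂,
    fun f hf lam hlam Ω hΩ hsub x hx R y hxy a b => ?_⟩
  have hne : Ωᶜ.Nonempty := ⟨x, hx⟩
  set Ω' := apertureLevelSet ψ f (6 * B) lam
  have hlayer : ∀ j, Measurable (farLayer ψ M f (6 * B) Ω Ω' j) := fun j =>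
    (continuous_twoScaleMean hψ' M hf j).measurable.indicator
      ((measurableSet_farRegion _ Ω j).diff (measurableSet_farRegion _ Ω' j))
  have hpoint : ∀ z, ENNReal.ofReal (∑ j ∈ Finset.Ioc a b, |farLayer ψ M f (6 * B) Ω Ω' j z| *
        |conv (bandKernel ψ M (dyadicScale j)) (dilate ψ R) (y - z)|) ≤
      Ω.indicator (fun z => ENNReal.ofReal (C₁ * lam) *
        ENNReal.ofReal (relDist Ω x z ^ ((n + 1) * (τ + 1)) / distCompl Ω z ^ n)) z := by
    intro z
    by_cases hz : z ∈ Ω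
    · rw [indicator_of_mem hz, ← ENNReal.ofReal_mul (by positivity), ← hMτ]
      exact ENNReal.ofReal_le_ofReal (hC₁ f hf lam hlam (hne.mono (compl_subset_compl.2 hsub))
        Ω x hx R y hxy _ z (distCompl_pos hΩ hne hz))
    · simp [farLayer_eq_zero_of_notMem (show 0 < 6 * B by positivity) hz]
  rw [convAt_goodApprox_sub hψ' M hf (farRegion_subset_of_subset _ hsub hne) a b
    (dist_nonneg.trans_lt hxy)]
  calc _ ≤ ∫⁻ z, Ω.indicator (fun z => ENNReal.ofReal (C₁ * lam) *
          ENNReal.ofReal (relDist Ω x z ^ ((n + 1) * (τ + 1)) / distCompl Ω z ^ n)) z :=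
        (ofReal_abs_sum_conv_le hψ' M (dist_nonneg.trans_lt hxy) hlayer _ y).trans
          (lintegral_mono hpoint)
    _ = ENNReal.ofReal (C₁ * lam) *
          ∫⁻ z in Ω, ENNReal.ofReal (relDist Ω x z ^ ((n + 1) * (τ + 1)) / distCompl Ω z ^ n) := by
        rw [lintegral_indicator hΩ.measurableSet, lintegral_const_mul' _ _ ofReal_ne_top]
    _ ≤ ENNReal.ofReal (C₁ * lam) * (C₂ * marcinkiewicz Ω x ^ (τ + 1)) :=
        mul_le_mul_right (h₂ Ω hΩ hne x) _
    _ = _ := by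
        rw [ENNReal.ofReal_mul hC₁0.le]
        ring

end FarParts

/-! ### Convergence of the good functions -/

section Convergence

open Filter Topology

variable {n : ℕ} {ψ f : Euc n → ℝ} {M : ℕ} {A R : ℝ} {Ω : Set (Euc n)}

lemma tendsto_convAt_smoothing (hψ : IsAdmissible ψ) (hM : 1 ≤ M)
    (hf : LocallyIntegrable f volume) (hR : 0 < R) (y : Euc n) :
    Tendsto (fun N : ℕ => convAt ψ (smoothing ψ M f N) R y) atTop (𝓝 (convAt ψ f R y)) := by
  have hψ' := hψ.contCompactSupport
  have hK := contCompactSupport_reproKernel hψ' M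
  have hd := hψ'.dilate hR
  have hlim := tendsto_conv_dilate_of_continuous (hK.conv hK) (continuous_conv hf hd) y
  rw [integral_conv_reproKernel hψ hM, mul_one] at hlim
  rw [convAt_eq_conv]
  refine (hlim.comp tendsto_dyadicScale).congr fun N => ?_
  have hKN := (hK.conv hK).dilate (dyadicScale_pos N)
  rw [Function.comp_apply, convAt_eq_conv, smoothing_eq_conv_dilate hψ' M hf,
    conv_assoc hf hKN hd, conv_assoc hf hd hKN, conv_comm (dilate ψ R)]

lemma exists_abs_conv_dilate_le_of_mem_closedBall {g : Euc n → ℝ} (hg : ContCompactSupport g)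
    (hf : LocallyIntegrable f volume) (y : Euc n) (r : ℝ) :
    ∃ C > 0, ∀ t > 0, t ≤ 2 → ∀ z ∈ Metric.closedBall y r,
      |conv f (dilate g t) z| ≤ C * (t ^ n)⁻¹ := by
  obtain ⟨B, hB1, hB⟩ := hg.exists_norm_le
  obtain ⟨C, hC0, hC⟩ := hg.exists_abs_le
  refine ⟨C * (∫ w in Metric.closedBall y (r + B * 2), |f w|) + 1, by positivity,
    fun t ht ht2 z hz => ?_⟩
  calc |conv f (dilate g t) z|
      ≤ C * (t ^ n)⁻¹ * ∫ w in Metric.closedBall y (r + B * 2), |f w| := by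
        refine abs_conv_le_setIntegral_closedBall (by positivity) hf fun w _ hw => ⟨?_, ?_⟩
        · have hzw := norm_le_of_dilate_ne_zero hB ht _ hw
          rw [← dist_eq_norm, dist_comm] at hzw
          rw [Metric.mem_closedBall] at hz ⊢
          nlinarith [dist_triangle w z y]
        · rw [mul_comm]
          gcongr
          exact abs_dilate_le hC ht _
    _ = C * (∫ w in Metric.closedBall y (r + B * 2), |f w|) * (t ^ n)⁻¹ := by ring
    _ ≤ _ := by
        gcongr
        linarith

lemma exists_abs_twoScaleMean_le_of_mem_closedBall (hψ : ContCompactSupport ψ) (M : ℕ)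
    (hf : LocallyIntegrable f volume) (y : Euc n) (r : ℝ) :
    ∃ C > 0, ∀ j ≥ 0, ∀ z ∈ Metric.closedBall y r,
      |twoScaleMean ψ M f j z| ≤ C * (dyadicScale j ^ n)⁻¹ := by
  obtain ⟨C, hC0, hC⟩ := exists_abs_conv_dilate_le_of_mem_closedBall
    (contCompactSupport_reproKernel hψ M) hf y r
  refine ⟨2 * C, by positivity, fun j hj z hz => ?_⟩
  have hs := dyadicScale_pos j
  have hs1 : dyadicScale j ≤ 1 := by simpa [dyadicScale] using dyadicScale_antitone hj
  have h₁ := hC _ hs (by linarith) z hz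
  have h₂ : |conv f (dilate (reproKernel ψ M) (2 * dyadicScale j)) z| ≤
      C * (dyadicScale j ^ n)⁻¹ :=
    (hC _ (by positivity) (by linarith) z hz).trans (by gcongr; linarith)
  calc _ ≤ C * (dyadicScale j ^ n)⁻¹ + C * (dyadicScale j ^ n)⁻¹ :=
        (abs_add_le _ _).trans (add_le_add h₁ h₂)
    _ = _ := by ring

lemma exists_abs_conv_indicator_twoScaleMean_le (hψ : IsAdmissible ψ) (hM : n + 1 ≤ M)
    (hf : LocallyIntegrable f volume) (hR : 0 < R) (y : Euc n) :
    ∃ C > 0, ∀ j ≥ 0, ∀ F : Set (Euc n), |conv (F.indicator (twoScaleMean ψ M f j))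
      (conv (bandKernel ψ M (dyadicScale j)) (dilate ψ R)) y| ≤ C * dyadicScale j := by
  have hψ' := hψ.contCompactSupport
  obtain ⟨B₁, hB₁, hB⟩ := (contCompactSupport_reproKernel hψ' M).exists_norm_le
  obtain ⟨B₂, -, hB'⟩ := hψ'.exists_norm_le
  set r := 2 * B₁ + B₂ * R
  obtain ⟨C₁, hC₁0, hC₁⟩ := exists_abs_twoScaleMean_le_of_mem_closedBall hψ' M hf y r
  obtain ⟨C₂, hC₂0, hC₂⟩ := exists_abs_conv_bandKernel_le hψ M
  set V := ∫ _ in Metric.closedBall y r, |(1 : ℝ)|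
  refine ⟨C₁ * (C₂ * (R ^ (n + M))⁻¹) * V + 1, by positivity, fun j hj F => ?_⟩
  have hs := dyadicScale_pos j
  have hs1 : dyadicScale j ≤ 1 := by simpa [dyadicScale] using dyadicScale_antitone hj
  have hpow : dyadicScale j ^ M ≤ dyadicScale j ^ n * dyadicScale j := by
    rw [← pow_succ]
    exact pow_le_pow_of_le_one hs.le hs1 hM
  have hkernel : ∀ z, |conv (bandKernel ψ M (dyadicScale j)) (dilate ψ R) (y - z)| ≤
      C₂ * (dyadicScale j ^ n * dyadicScale j * (R ^ (n + M))⁻¹) := fun z =>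
    (hC₂ _ R hs hR _).trans (by gcongr; linarith)
  calc _ ≤ C₁ * (C₂ * (R ^ (n + M))⁻¹) * dyadicScale j * V := by
        refine abs_conv_le_setIntegral_closedBall (by positivity)
          continuous_const.locallyIntegrable fun z hz₁ hz₂ => ?_
        have hz : z ∈ Metric.closedBall y r := by
          have hnorm := norm_le_add_of_conv_ne_zero
            (norm_le_of_bandKernel_ne_zero (by positivity) hB hs)
            (norm_le_of_dilate_ne_zero hB' hR) _ hz₂
          rw [Metric.mem_closedBall, dist_comm, dist_eq_norm]
          nlinarith
        refine ⟨hz, ?_⟩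
        rw [indicator_of_mem (mem_of_indicator_ne_zero hz₁)]
        refine (mul_le_mul (hC₁ j hj z hz) (hkernel z) (abs_nonneg _) (by positivity)).trans_eq ?_
        rw [abs_one]
        field_simp
    _ = C₁ * (C₂ * (R ^ (n + M))⁻¹) * V * dyadicScale j := by ring
    _ ≤ _ := by
        gcongr
        linarith

lemma farRegion_eq_empty {j : ℤ} (h : ∀ z, distCompl Ω z < A * dyadicScale j) :
    farRegion A Ω j = ∅ :=
  eq_empty_of_forall_notMem fun z hz => (h z).not_ge hz

lemma farRegion_empty (hA : 0 < A) (j : ℤ) : farRegion A (∅ : Set (Euc n)) j = ∅ :=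
  farRegion_eq_empty fun z => (distCompl_le_dist (notMem_empty z) z).trans_lt
    (by simpa using mul_pos hA (dyadicScale_pos j))

lemma smoothing_eq_goodApprox_empty (hA : 0 < A) (ψ : Euc n → ℝ) (M : ℕ) (f : Euc n → ℝ)
    (a b : ℤ) : smoothing ψ M f b = goodApprox ψ M f A ∅ a b := by
  have hfar : ∀ j, farPart ψ M f A ∅ j = 0 := fun j => by
    ext x
    simp [farPart, farRegion_empty hA, conv_apply]
  simp [goodApprox, hfar]

lemma exists_abs_convAt_sub_le_of_isGoodFunction (hψ : IsAdmissible ψ) (hM : n + 1 ≤ M)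
    (hA : 0 < A) (hf : LocallyIntegrable f volume) (hR : 0 < R) (y : Euc n) :
    ∃ C > 0, ∀ (J : ℕ) (Ω g), IsGoodFunction ψ M f A Ω g →
      (∀ z, distCompl Ω z < A * dyadicScale J) →
        |convAt ψ f R y - convAt ψ g R y| ≤ C * dyadicScale J := by
  obtain ⟨C₁, hC₁0, hC₁⟩ := exists_abs_conv_indicator_twoScaleMean_le hψ hM hf hR y
  obtain ⟨C₂, hC₂0, hC₂⟩ := exists_sum_dyadicScale_pow_le le_rfl
  refine ⟨C₁ * C₂, by positivity, fun J Ω g hg hJ => ?_⟩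
  have hM1 : 1 ≤ M := by omega
  refine le_of_tendsto ((tendsto_convAt_smoothing hψ hM1 hf hR y).sub
    (hg.tendsto_convAt R hR y)).abs (Eventually.of_forall fun N => ?_)
  have hfar : ∀ j : ℤ, farRegion A ∅ j ⊆ farRegion A Ω j := fun j => by
    rw [farRegion_empty hA]
    exact empty_subset _
  rw [smoothing_eq_goodApprox_empty hA ψ M f (-N) N,
    convAt_goodApprox_sub hψ.contCompactSupport M hf hfar _ _ hR]
  calc _ ≤ ∑ j ∈ Finset.Ioc (-(N : ℤ)) N,
        C₁ * (if dyadicScale j ≤ dyadicScale J then dyadicScale j ^ 1 else 0) := by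
        refine (Finset.abs_sum_le_sum_abs _ _).trans (Finset.sum_le_sum fun j _ => ?_)
        rcases le_or_gt (J : ℤ) j with hj | hj
        · rw [if_pos (dyadicScale_antitone hj), pow_one]
          exact hC₁ j (by omega) _
        · have hz : ∀ z, distCompl Ω z < A * dyadicScale j := fun z => (hJ z).trans_le
            (mul_le_mul_of_nonneg_left (dyadicScale_antitone hj.le) hA.le)
          have hs := dyadicScale_pos j
          rw [farLayer, farRegion_eq_empty hz, empty_sdiff, indicator_empty, conv_apply]
          simp only [zero_mul, integral_zero, abs_zero]
          positivity
    _ = C₁ * ∑ j ∈ Finset.Ioc (-(N : ℤ)) N,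
        (if dyadicScale j ≤ dyadicScale J then dyadicScale j ^ 1 else 0) := by
        rw [Finset.mul_sum]
    _ ≤ C₁ * (C₂ * dyadicScale J ^ 1) := by
        gcongr
        exact hC₂ _ (dyadicScale_pos J) _
    _ = C₁ * C₂ * dyadicScale J := by ring

lemma tendsto_convAt_of_isGoodFunction (hψ : IsAdmissible ψ) (hM : n + 1 ≤ M) (hA : 0 < A)
    (hf : LocallyIntegrable f volume) {ι : Type*} {l : Filter ι} {Ω : ι → Set (Euc n)}
    {g : ι → Euc n → ℝ} (hg : ∀ i, IsGoodFunction ψ M f A (Ω i) (g i))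
    (hΩ : Tendsto (fun i => volume (Ω i)) l (𝓝 0)) (hR : 0 < R) (y : Euc n) :
    Tendsto (fun i => convAt ψ (g i) R y) l (𝓝 (convAt ψ f R y)) := by
  obtain ⟨C, -, hC⟩ := exists_abs_convAt_sub_le_of_isGoodFunction hψ hM hA hf hR y
  refine Metric.tendsto_nhds.2 fun ε hε => ?_
  have hscale := ((tendsto_nhdsWithin_iff.1 tendsto_dyadicScale).1).const_mul C
  rw [mul_zero] at hscale
  obtain ⟨J, hJ⟩ := (hscale.eventually_lt_const hε).exists
  have hball : 0 < volume (Metric.ball (0 : Euc n) (A * dyadicScale J)) :=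
    Metric.measure_ball_pos _ _ (mul_pos hA (dyadicScale_pos J))
  filter_upwards [hΩ.eventually_lt_const hball] with i hi
  rw [dist_comm, Real.dist_eq]
  exact (hC J _ _ (hg i) (distCompl_lt_of_volume_lt_volume_ball hi)).trans_lt hJ

lemma abs_convAt_le (hψ : ContCompactSupport ψ) {g : Euc n → ℝ} {c : ℝ}
    (hg : ∀ᵐ x, |g x| ≤ c) (hR : 0 < R) (y : Euc n) :
    |convAt ψ g R y| ≤ c * ∫ x, |ψ x| := by
  rw [convAt_eq_conv, ← integral_abs_dilate ψ hR]
  exact abs_conv_le (hψ.dilate hR).integrable y (by filter_upwards [hg] with z hz _ using hz)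

end Convergence

/-! ### The dyadic decomposition -/

section DyadicDecomposition

open Filter Topology

variable {n : ℕ} {ψ f : Euc n → ℝ} {M : ℕ} {A B R : ℝ}

lemma ofReal_abs_convAt_le_ntMax (ψ f : Euc n → ℝ) {x y : Euc n} (hR : 0 < R)
    (hxy : dist x y < R) : ENNReal.ofReal |convAt ψ f R y| ≤ ntMax ψ f x :=
  le_iSup_of_le y <| le_iSup_of_le R <| le_iSup_of_le hR <| le_iSup_of_le hxy le_rfl

lemma ntMax_le {c : ℝ≥0∞} {x : Euc n}
    (h : ∀ y R, 0 < R → dist x y < R → ENNReal.ofReal |convAt ψ f R y| ≤ c) : ntMax ψ f x ≤ c :=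
  iSup_le fun y => iSup_le fun R => iSup_le fun hR => iSup_le fun hxy => h y R hR hxy

lemma ntMax_le_of_ae_abs_le (hψ : ContCompactSupport ψ) {g : Euc n → ℝ} {c : ℝ}
    (hg : ∀ᵐ x, |g x| ≤ c) (x : Euc n) : ntMax ψ g x ≤ ENNReal.ofReal (c * ∫ x, |ψ x|) :=
  ntMax_le fun y _ hR _ => ENNReal.ofReal_le_ofReal (abs_convAt_le hψ hg hR y)

lemma exists_volume_apertureLevelSet_two_zpow_le (hn : 1 ≤ n) (hA : 0 < A) :
    ∃ C ≠ ∞, ∀ (ψ f : Euc n → ℝ) (k : ℤ), distFn (ntMax ψ f) (2 ^ k) ≠ ∞ →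
      volume (apertureLevelSet ψ f A (2 ^ k)) ≤ C * distFn (ntMax ψ f) (2 ^ k) := by
  obtain ⟨C, hC, h⟩ := exists_volume_apertureLevelSet_le hn hA
  refine ⟨C, hC, fun ψ f k hk => ?_⟩
  have hone : volume (apertureLevelSet ψ f 1 (2 ^ k)) = distFn (ntMax ψ f) (2 ^ k) := by
    rw [volume_apertureLevelSet_one ψ f (by positivity), ofReal_two_zpow]
  rw [← hone] at hk ⊢
  exact h ψ f _ hk

lemma exists_ntMax_sub_le_marcinkiewicz_pow {τ : ℕ} (hψ : IsAdmissible ψ) (hM : 1 ≤ M)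
    (hMτ : n + M = (n + 1) * (τ + 1)) (hB1 : 1 ≤ B)
    (hB : ∀ x, reproKernel ψ M x ≠ 0 → ‖x‖ ≤ B) (hB' : ∀ x, ψ x ≠ 0 → ‖x‖ ≤ B) :
    ∃ C ≠ ∞, ∀ f : Euc n → ℝ, LocallyIntegrable f volume → ∀ lam ≥ 0, ∀ Ω, IsOpen Ω →
      apertureLevelSet ψ f (6 * B) lam ⊆ Ω → ∀ g g',
        IsGoodFunction ψ M f (6 * B) Ω g →
        IsGoodFunction ψ M f (6 * B) (apertureLevelSet ψ f (6 * B) lam) g' →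
          ∀ x ∉ Ω, ntMax ψ (g' - g) x ≤
            C * (ENNReal.ofReal lam * marcinkiewicz Ω x ^ (τ + 1)) := by
  obtain ⟨C, hC, h⟩ := exists_ofReal_abs_convAt_goodApprox_sub_le hψ hM hMτ hB1 hB hB'
  refine ⟨C, hC, fun f hf lam hlam Ω hΩ hsub g g' hg hg' x hx => ntMax_le fun y R hR hxy => ?_⟩
  rw [convAt_eq_conv, conv_sub_left hg'.locallyIntegrable hg.locallyIntegrable
    (hψ.contCompactSupport.dilate hR)]
  exact le_of_tendsto
    (ENNReal.tendsto_ofReal ((hg'.tendsto_convAt R hR y).sub (hg.tendsto_convAt R hR y)).abs)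
    (Eventually.of_forall fun N => h f hf lam hlam Ω hΩ hsub x hx R y hxy (-N) N)

lemma exists_ntMax_sub_le_min_marcinkiewicz_pow {τ : ℕ} (hψ : IsAdmissible ψ) (hM : 1 ≤ M)
    (hMτ : n + M = (n + 1) * (τ + 1)) (hB1 : 1 ≤ B)
    (hB : ∀ x, reproKernel ψ M x ≠ 0 → ‖x‖ ≤ B) (hB' : ∀ x, ψ x ≠ 0 → ‖x‖ ≤ B) (c : ℝ) :
    ∃ C ≠ ∞, ∀ f : Euc n → ℝ, LocallyIntegrable f volume → ∀ lam ≥ 0, ∀ Ω, IsOpen Ω →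
      Ωᶜ.Nonempty → apertureLevelSet ψ f (6 * B) lam ⊆ Ω → ∀ g g',
        IsGoodFunction ψ M f (6 * B) Ω g →
        IsGoodFunction ψ M f (6 * B) (apertureLevelSet ψ f (6 * B) lam) g' →
          (∀ᵐ x, |(g' - g) x| ≤ c * lam) → ∀ x, ntMax ψ (g' - g) x ≤
            C * (ENNReal.ofReal lam * min 1 (marcinkiewicz Ω x ^ (τ + 1))) := by
  obtain ⟨C₁, hC₁, h₁⟩ := exists_ntMax_sub_le_marcinkiewicz_pow hψ hM hMτ hB1 hB hB'
  obtain ⟨C₂, hC₂, h₂⟩ := exists_one_le_marcinkiewicz n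
  set D := ENNReal.ofReal (c * ∫ x, |ψ x|)
  refine ⟨C₁ + D * (1 + C₂ ^ (τ + 1)), by finiteness,
    fun f hf lam hlam Ω hΩ hne hsub g g' hg hg' hbound x => ?_⟩
  have hlevel : ntMax ψ (g' - g) x ≤ D * ENNReal.ofReal lam := by
    refine (ntMax_le_of_ae_abs_le hψ.contCompactSupport hbound x).trans_eq ?_
    rw [← ENNReal.ofReal_mul' hlam]
    congr 1
    ring
  have hfar : ntMax ψ (g' - g) x ≤ (C₁ + D * C₂ ^ (τ + 1)) *
      (ENNReal.ofReal lam * marcinkiewicz Ω x ^ (τ + 1)) := by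
    by_cases hx : x ∈ Ω
    · calc _ ≤ D * ENNReal.ofReal lam * 1 ^ (τ + 1) := by rwa [one_pow, mul_one]
        _ ≤ D * ENNReal.ofReal lam * (C₂ * marcinkiewicz Ω x) ^ (τ + 1) := by
            gcongr
            exact h₂ Ω hΩ hne x hx
        _ = D * C₂ ^ (τ + 1) * (ENNReal.ofReal lam * marcinkiewicz Ω x ^ (τ + 1)) := by ring
        _ ≤ _ := mul_le_mul_left le_add_self _
    · exact (h₁ f hf lam hlam Ω hΩ hsub g g' hg hg' x hx).trans (mul_le_mul_left le_self_add _)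
  rcases le_total 1 (marcinkiewicz Ω x ^ (τ + 1)) with h | h
  · rw [min_eq_left h, mul_one]
    exact hlevel.trans (mul_le_mul_left (le_add_left (le_mul_of_one_le_right' le_self_add)) _)
  · rw [min_eq_right h]
    refine hfar.trans (mul_le_mul_left ?_ _)
    gcongr
    exact le_add_self

/-- A sequence running from `0` at `-∞` to `f` at `+∞`, both limits being taken after convolution
with the dilates of `ψ`; then `f` is the sum of the differences `g (k + 1) - g k`. -/
structure IsBilateralApproximation (ψ f : Euc n → ℝ) (g : ℤ → Euc n → ℝ) : Prop where
  locallyIntegrable : ∀ k, LocallyIntegrable (g k) volume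
  tendsto_neg : ∀ R > 0, ∀ y, Tendsto (fun N : ℕ => convAt ψ (g (-N)) R y) atTop (𝓝 0)
  tendsto : ∀ R > 0, ∀ y, Tendsto (fun N : ℕ => convAt ψ (g N) R y) atTop (𝓝 (convAt ψ f R y))

lemma isBilateralApproximation_of_isGoodFunction (hψ : IsAdmissible ψ) (hM : n + 1 ≤ M)
    (hA : 0 < A) (hf : LocallyIntegrable f volume) {Ω : ℤ → Set (Euc n)} {g : ℤ → Euc n → ℝ}
    {C : ℝ} (hg : ∀ k, IsGoodFunction ψ M f A (Ω k) (g k)) (hgC : ∀ k, ∀ᵐ x, |g k x| ≤ C * 2 ^ k)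
    (hΩ : Tendsto (fun N : ℕ => volume (Ω N)) atTop (𝓝 0)) : IsBilateralApproximation ψ f g where
  locallyIntegrable k := (hg k).locallyIntegrable
  tendsto_neg R hR y := by
    have hscale := (((tendsto_nhdsWithin_iff.1 tendsto_dyadicScale).1).const_mul C).mul_const
      (∫ x, |ψ x|)
    rw [mul_zero, zero_mul] at hscale
    exact squeeze_zero_norm
      (fun N => abs_convAt_le hψ.contCompactSupport (hgC (-N)) hR y) hscale
  tendsto R hR y :=
    tendsto_convAt_of_isGoodFunction hψ hM hA hf (fun N : ℕ => hg N) hΩ hR y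

lemma exists_common_support_radius (hψ : ContCompactSupport ψ) (M : ℕ) :
    ∃ B ≥ 1, (∀ x, reproKernel ψ M x ≠ 0 → ‖x‖ ≤ B) ∧ ∀ x, ψ x ≠ 0 → ‖x‖ ≤ B := by
  obtain ⟨B₁, hB₁, hB⟩ := (contCompactSupport_reproKernel hψ M).exists_norm_le
  obtain ⟨B₂, -, hB'⟩ := hψ.exists_norm_le
  exact ⟨max B₁ B₂, hB₁.trans (le_max_left _ _), fun x hx => (hB x hx).trans (le_max_left _ _),
    fun x hx => (hB' x hx).trans (le_max_right _ _)⟩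

lemma exists_isBilateralApproximation_marcinkiewicz (hn : 1 ≤ n) (hψ : IsAdmissible ψ) {τ : ℕ}
    (hτ : 1 ≤ τ) : ∃ A > 0, ∃ C ≠ ∞, ∀ f : Euc n → ℝ, LocallyIntegrable f volume →
      (∀ k : ℤ, volume (apertureLevelSet ψ f A (2 ^ k)) ≠ ∞) →
      Tendsto (fun N : ℕ => volume (apertureLevelSet ψ f A (2 ^ (N : ℤ)))) atTop (𝓝 0) →
      ∃ g, IsBilateralApproximation ψ f g ∧ ∀ k x, ntMax ψ (g (k + 1) - g k) x ≤
        C * (2 ^ k * min 1 (marcinkiewicz (apertureLevelSet ψ f A (2 ^ k)) x ^ (τ + 1))) := by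
  obtain ⟨M, hMτ⟩ : ∃ M, n + M = (n + 1) * (τ + 1) := ⟨n * τ + τ + 1, by ring⟩
  have hM : n + 1 ≤ M := by nlinarith
  have hM1 : 1 ≤ M := by omega
  obtain ⟨B, hB1, hB, hB'⟩ := exists_common_support_radius hψ.contCompactSupport M
  have hB0 : 0 < B := one_pos.trans_le hB1
  obtain ⟨C₁, -, hgood⟩ := exists_isGoodFunction hn hψ hM1 hB0 hB
  obtain ⟨C₂, hC₂, hmax⟩ :=
    exists_ntMax_sub_le_min_marcinkiewicz_pow hψ hM1 hMτ hB1 hB hB' (C₁ + C₁ / 2)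
  refine ⟨6 * B, by positivity, C₂ * 2, by finiteness, fun f hf hfin hlim => ?_⟩
  choose g hg hgC using fun k : ℤ => hgood f hf (2 ^ k) (by positivity) (hfin k)
  refine ⟨g, isBilateralApproximation_of_isGoodFunction hψ hM (by positivity) hf hg hgC hlim,
    fun k x => ?_⟩
  have htwo : (2 : ℝ) ^ (k + 1) = 2 ^ k * 2 := zpow_add_one₀ two_ne_zero k
  have hbound : ∀ᵐ x, |(g (k + 1) - g k) x| ≤ (C₁ + C₁ / 2) * 2 ^ (k + 1) := by
    filter_upwards [hgC (k + 1), hgC k] with x h₁ h₂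
    rw [htwo] at h₁ ⊢
    refine (abs_sub _ _).trans ?_
    linarith
  have hsub := apertureLevelSet_antitone ψ f (6 * B)
    (zpow_le_zpow_right₀ (one_le_two (α := ℝ)) (Int.le.intro 1 rfl : k ≤ k + 1))
  refine (hmax f hf _ (by positivity) _ (isOpen_apertureLevelSet _ _ _ _)
    (nonempty_compl_of_volume_ne_top hn (hfin k)) hsub _ _ (hg k) (hg (k + 1)) hbound
    x).trans_eq ?_
  rw [ofReal_two_zpow, ENNReal.zpow_add two_ne_zero ofNat_ne_top, zpow_one]
  ring

lemma exists_isBilateralApproximation (hn : 1 ≤ n) (hψ : IsAdmissible ψ) {τ : ℕ} (hτ : 1 ≤ τ) :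
    ∃ C ≠ ∞, ∀ f : Euc n → ℝ, LocallyIntegrable f volume →
      (∀ k : ℤ, distFn (ntMax ψ f) (2 ^ k) ≠ ∞) →
      Tendsto (fun N : ℕ => distFn (ntMax ψ f) (2 ^ (N : ℤ))) atTop (𝓝 0) →
      ∃ (g : ℤ → Euc n → ℝ) (w : ℤ → Euc n → ℝ≥0∞), IsBilateralApproximation ψ f g ∧
        (∀ k, Measurable (w k)) ∧ (∀ k, ∫⁻ x, w k x ≤ C * distFn (ntMax ψ f) (2 ^ k)) ∧
        ∀ k x, ntMax ψ (g (k + 1) - g k) x ≤ C * (2 ^ k * min 1 (w k x ^ (τ + 1))) := by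
  obtain ⟨A, hA, C₁, hC₁, happrox⟩ := exists_isBilateralApproximation_marcinkiewicz hn hψ hτ
  obtain ⟨C₂, hC₂, hvol⟩ := exists_volume_apertureLevelSet_two_zpow_le hn hA
  obtain ⟨C₃, hC₃, h_int⟩ := exists_lintegral_marcinkiewicz_le n
  refine ⟨C₁ + C₃ * C₂, by finiteness, fun f hf hfin hlim => ?_⟩
  have hΩfin : ∀ k : ℤ, volume (apertureLevelSet ψ f A (2 ^ k)) ≠ ∞ := fun k =>
    ne_top_of_le_ne_top (mul_ne_top hC₂ (hfin k)) (hvol ψ f k (hfin k))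
  have hΩlim : Tendsto (fun N : ℕ => volume (apertureLevelSet ψ f A (2 ^ (N : ℤ)))) atTop
      (𝓝 0) := by
    have hC := ENNReal.Tendsto.const_mul hlim (Or.inr hC₂)
    rw [mul_zero] at hC
    exact tendsto_of_tendsto_of_tendsto_of_le_of_le tendsto_const_nhds hC
      (fun _ => zero_le) (fun N => hvol ψ f N (hfin N))
  obtain ⟨g, hg, hmax⟩ := happrox f hf hΩfin hΩlim
  refine ⟨g, fun k => marcinkiewicz (apertureLevelSet ψ f A (2 ^ k)), hg,
    fun k => measurable_marcinkiewicz _, fun k => ?_,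
    fun k x => (hmax k x).trans (mul_le_mul_left le_self_add _)⟩
  calc _ ≤ C₃ * (C₂ * distFn (ntMax ψ f) (2 ^ k)) :=
        (h_int _ (isOpen_apertureLevelSet _ _ _ _)
          (nonempty_compl_of_volume_ne_top hn (hΩfin k))).trans
          (mul_le_mul_right (hvol ψ f k (hfin k)) _)
    _ = C₃ * C₂ * distFn (ntMax ψ f) (2 ^ k) := (mul_assoc _ _ _).symm
    _ ≤ _ := mul_le_mul_left le_add_self _

end DyadicDecomposition

/-! ### Lorentz norms of dyadic superpositions -/

section Superposition

variable {n τ : ℕ} {p : ℝ} {q C₀ : ℝ≥0∞}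

lemma exists_tsum_two_zpow_mul_min_pow_le (τ : ℕ) :
    ∃ C ≠ ∞, ∀ (w : ℤ → ℝ≥0∞) (l : ℤ),
      ∑' i : ℕ, (2 : ℝ≥0∞) ^ ((i + 1) * (1 / ((τ : ℝ) + 1))) * w (l + 1 + i) ≤ 1 →
        ∑' k : ℤ, 2 ^ k * min 1 (w k ^ (τ + 1)) ≤ C * 2 ^ l := by
  obtain ⟨C, hC, hlow⟩ := exists_tsum_two_zpow_rpow_le one_pos
  refine ⟨C + 1, by finiteness, fun w l hw => ?_⟩
  set r := 1 / ((τ : ℝ) + 1) with hr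
  have hrτ : r * ((τ + 1 : ℕ) : ℝ) = 1 := by
    rw [hr, Nat.cast_succ]
    field_simp
  have hterm : ∀ i : ℕ, (2 : ℝ≥0∞) ^ (l + 1 + i) * w (l + 1 + i) ^ (τ + 1) =
      2 ^ l * (2 ^ ((i + 1) * r) * w (l + 1 + i)) ^ (τ + 1) := fun i => by
    rw [mul_pow, ← ENNReal.rpow_mul_natCast, mul_assoc, hrτ, mul_one, ← mul_assoc,
      ← ENNReal.rpow_intCast, ← ENNReal.rpow_intCast, ← two_rpow_add]
    congr 2
    push_cast
    ring
  have hhigh : ∑' k, (if l < k then 2 ^ k * w k ^ (τ + 1) else 0) ≤ (2 : ℝ≥0∞) ^ l :=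
    calc _ = 2 ^ l * ∑' i : ℕ, ((2 : ℝ≥0∞) ^ ((i + 1) * r) * w (l + 1 + i)) ^ (τ + 1) := by
          rw [tsum_int_gt_eq_tsum_nat fun k => 2 ^ k * w k ^ (τ + 1), ← ENNReal.tsum_mul_left]
          exact tsum_congr hterm
      _ ≤ 2 ^ l * 1 ^ (τ + 1) := by
          gcongr
          exact (tsum_pow_le_pow_tsum _ _).trans (pow_le_pow_left' hw _)
      _ = 2 ^ l := by rw [one_pow, mul_one]
  have hsplit : ∀ k : ℤ, (2 : ℝ≥0∞) ^ k * min 1 (w k ^ (τ + 1)) ≤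
      (if (2 : ℝ≥0∞) ^ k ≤ 2 ^ l then ((2 : ℝ≥0∞) ^ k) ^ (1 : ℝ) else 0) +
        if l < k then 2 ^ k * w k ^ (τ + 1) else 0 := fun k => by
    by_cases hk : l < k
    · rw [if_pos hk]
      exact le_add_left (mul_le_mul_right (min_le_right _ _) _)
    · rw [if_pos (two_zpow_mono (not_lt.1 hk)), ENNReal.rpow_one]
      exact le_add_right (mul_le_of_le_one_right' (min_le_left _ _))
  calc _ ≤ _ := ENNReal.tsum_le_tsum hsplit
    _ ≤ C * 2 ^ l + 2 ^ l := by
        rw [ENNReal.tsum_add]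
        exact add_le_add ((hlow (2 ^ l)).trans_eq (by rw [ENNReal.rpow_one])) hhigh
    _ = (C + 1) * 2 ^ l := by ring

lemma exists_distFn_le_tsum_lintegral (n τ : ℕ) (hC₀ : C₀ ≠ ∞) :
    ∃ e : ℤ, ∀ (F : Euc n → ℝ≥0∞) (w : ℤ → Euc n → ℝ≥0∞), (∀ k, Measurable (w k)) →
      (∀ x, F x ≤ C₀ * ∑' k : ℤ, 2 ^ k * min 1 (w k x ^ (τ + 1))) → ∀ l : ℤ,
        distFn F (2 ^ l) ≤ ∑' i : ℕ,
          (2 : ℝ≥0∞) ^ ((i + 1) * (1 / ((τ : ℝ) + 1))) * ∫⁻ x, w (l + (i + 1 - e)) x := by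
  obtain ⟨C, hC, hpoint⟩ := exists_tsum_two_zpow_mul_min_pow_le τ
  obtain ⟨e, he⟩ := exists_le_two_zpow (mul_ne_top hC₀ hC)
  refine ⟨e, fun F w hw hF l => ?_⟩
  set X : Euc n → ℝ≥0∞ := fun x => ∑' i : ℕ,
    (2 : ℝ≥0∞) ^ ((i + 1) * (1 / ((τ : ℝ) + 1))) * w (l + (i + 1 - e)) x with hX
  have hindex : ∀ i : ℕ, l - e + 1 + i = l + (i + 1 - e) := fun i => by ring
  have hsub : {x | 2 ^ l < F x} ⊆ {x | 1 ≤ X x} := by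
    intro x hx
    by_contra hX1
    simp only [mem_ofPred_eq, not_le] at hx hX1
    refine hx.not_ge ?_
    calc F x ≤ C₀ * (C * 2 ^ (l - e)) := by
          refine (hF x).trans (mul_le_mul_right (hpoint (fun k => w k x) (l - e) ?_) _)
          simpa only [hindex] using hX1.le
      _ = C₀ * C * 2 ^ (l - e) := (mul_assoc _ _ _).symm
      _ ≤ 2 ^ e * 2 ^ (l - e) := mul_le_mul_left he _
      _ = 2 ^ l := by rw [← ENNReal.zpow_add two_ne_zero ofNat_ne_top, add_sub_cancel]
  have hXm : Measurable X := Measurable.tsum fun i => (hw _).const_mul _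
  calc distFn F (2 ^ l) ≤ 1 * volume {x | 1 ≤ X x} := by
        rw [one_mul]
        exact measure_mono hsub
    _ ≤ ∫⁻ x, X x := mul_meas_ge_le_lintegral hXm 1
    _ = _ := by
        rw [hX, lintegral_tsum fun i => ((hw _).const_mul _).aemeasurable]
        exact tsum_congr fun i => lintegral_const_mul _ (hw _)

lemma two_zpow_mul_rpow_le_of_le_tsum (hp : 0 < p) (r : ℝ) {d : ℝ≥0∞} {m : ℤ → ℝ≥0∞} {l e : ℤ}
    (hd : d ≤ ∑' i : ℕ, 2 ^ ((i + 1) * r) * (C₀ * m (l + (i + 1 - e)))) :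
    2 ^ l * d ^ (1 / p) ≤ (C₀ * 2 ^ (e * p + (r - p))) ^ (1 / p) *
      (∑' i : ℕ, 2 ^ (-((p - r) * i)) *
        (2 ^ (l + (i + 1 - e)) * m (l + (i + 1 - e)) ^ (1 / p)) ^ p) ^ (1 / p) := by
  have hterm : ∀ i : ℕ, 2 ^ (l * p) * (2 ^ ((i + 1) * r) * (C₀ * m (l + (i + 1 - e)))) =
      C₀ * 2 ^ (e * p + (r - p)) * (2 ^ (-((p - r) * i)) *
        (2 ^ (l + (i + 1 - e)) * m (l + (i + 1 - e)) ^ (1 / p)) ^ p) := fun i => by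
    have hexp : (2 : ℝ≥0∞) ^ (l * p) * 2 ^ ((i + 1) * r) = 2 ^ (e * p + (r - p)) *
        (2 ^ (-((p - r) * i)) * 2 ^ (((l + (i + 1 - e) : ℤ) : ℝ) * p)) := by
      simp only [← two_rpow_add]
      congr 1
      push_cast
      ring
    rw [ENNReal.mul_rpow_of_nonneg _ _ hp.le, two_zpow_rpow, ← ENNReal.rpow_mul,
      one_div_mul_cancel hp.ne', ENNReal.rpow_one]
    calc _ = C₀ * (2 ^ (l * p) * 2 ^ ((i + 1) * r)) * m (l + (i + 1 - e)) := by ring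
      _ = _ := by
          rw [hexp]
          ring
  calc _ = (2 ^ (l * p) * d) ^ (1 / p) := by
        rw [← ENNReal.rpow_intCast, two_rpow_mul_rpow_inv _ _ hp]
    _ ≤ (2 ^ (l * p) * ∑' i : ℕ, 2 ^ ((i + 1) * r) * (C₀ * m (l + (i + 1 - e)))) ^ (1 / p) := by
        gcongr
    _ = _ := by
        rw [← ENNReal.mul_rpow_of_nonneg _ _ (by positivity), ← ENNReal.tsum_mul_left,
          ← ENNReal.tsum_mul_left]
        simp only [hterm]

lemma exists_lorentzNorm_le_ellq (n : ℕ) (hp : 0 < p) (hτ : 1 / ((τ : ℝ) + 1) < p) (hq : q ≠ 0)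
    (hC₀ : C₀ ≠ ∞) :
    ∃ C ≠ ∞, ∀ (F : Euc n → ℝ≥0∞) (w : ℤ → Euc n → ℝ≥0∞) (m : ℤ → ℝ≥0∞),
      (∀ k, Measurable (w k)) → (∀ k, ∫⁻ x, w k x ≤ C₀ * m k) →
      (∀ x, F x ≤ C₀ * ∑' k : ℤ, 2 ^ k * min 1 (w k x ^ (τ + 1))) →
        lorentzNorm p q F ≤ C * ellq q (fun k => 2 ^ k * m k ^ (1 / p)) := by
  obtain ⟨e, he⟩ := exists_distFn_le_tsum_lintegral n τ hC₀
  obtain ⟨C, hC, hconv⟩ := exists_ellq_geometric_convolution_le (sub_pos.2 hτ) hp hq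
  set D := (C₀ * 2 ^ (e * p + (1 / ((τ : ℝ) + 1) - p))) ^ (1 / p)
  have hD : D ≠ ∞ :=
    rpow_ne_top_of_nonneg (by positivity) (mul_ne_top hC₀ (two_rpow_ne_top _))
  refine ⟨D * C, mul_ne_top hD hC, fun F w m hw h_int hF => ?_⟩
  have hdist : ∀ l : ℤ, distFn F (2 ^ l) ≤
      ∑' i : ℕ, 2 ^ ((i + 1) * (1 / ((τ : ℝ) + 1))) * (C₀ * m (l + (i + 1 - e))) := fun l =>
    (he F w hw hF l).trans (ENNReal.tsum_le_tsum fun i => mul_le_mul_right (h_int _) _)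
  have hlevel : ∀ l : ℤ, 2 ^ l * distFn F (2 ^ l) ^ (1 / p) ≤
      D * (∑' i : ℕ, 2 ^ (-((p - 1 / ((τ : ℝ) + 1)) * i)) *
        (2 ^ (l + (i + 1 - e)) * m (l + (i + 1 - e)) ^ (1 / p)) ^ p) ^ (1 / p) :=
    fun l => two_zpow_mul_rpow_le_of_le_tsum hp _ (hdist l)
  rw [lorentzNorm_eq_ellq]
  calc _ ≤ _ := ellq_le_const_mul hq hlevel
    _ ≤ D * (C * _) :=
        mul_le_mul_right (hconv (fun i => i + 1 - e) fun k => 2 ^ k * m k ^ (1 / p)) _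
    _ = _ := (mul_assoc _ _ _).symm

lemma exists_lorentzNorm_le_ellq_indicator (n : ℕ) (hp : 0 < p) (hτ : 1 / ((τ : ℝ) + 1) < p)
    (hq : q ≠ 0) (hC₀ : C₀ ≠ ∞) :
    ∃ C ≠ ∞, ∀ (S : Set ℤ) (F : Euc n → ℝ≥0∞) (w : ℤ → Euc n → ℝ≥0∞) (m : ℤ → ℝ≥0∞),
      (∀ k, Measurable (w k)) → (∀ k, ∫⁻ x, w k x ≤ C₀ * m k) →
      (∀ x, F x ≤ ∑' k, S.indicator (fun k => C₀ * (2 ^ k * min 1 (w k x ^ (τ + 1)))) k) →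
        lorentzNorm p q F ≤ C * ellq q (S.indicator fun k => 2 ^ k * m k ^ (1 / p)) := by
  classical
  obtain ⟨C, hC, h⟩ := exists_lorentzNorm_le_ellq n hp hτ hq hC₀
  refine ⟨C, hC, fun S F w m hw h_int hF => ?_⟩
  refine (h F (fun k x => if k ∈ S then w k x else 0) (S.indicator m) (fun k => ?_) (fun k => ?_)
    fun x => ?_).trans_eq ?_
  · by_cases hk : k ∈ S
    · simpa only [if_pos hk] using hw k
    · simpa only [if_neg hk] using measurable_const
  · by_cases hk : k ∈ S
    · simpa only [if_pos hk, indicator_of_mem hk] using h_int k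
    · simp only [if_neg hk, lintegral_zero, zero_le]
  · refine (hF x).trans_eq ?_
    rw [← ENNReal.tsum_mul_left]
    refine tsum_congr fun k => ?_
    by_cases hk : k ∈ S <;> simp [hk]
  · congr 2
    funext k
    by_cases hk : k ∈ S <;> simp [hk, hp]

end Superposition

/-! ### The K-functional -/

section KFunctional

open Filter Topology

variable {n : ℕ} {ψ f : Euc n → ℝ} {p : ℝ}

lemma distFn_two_zpow_le {q : ℝ≥0∞} (hp : 0 < p) (hq : q ≠ 0) (F : Euc n → ℝ≥0∞) (k : ℤ) :
    distFn F (2 ^ k) ≤ (2 ^ (-k) * lorentzNorm p q F) ^ p := by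
  have hle := le_ellq hq (fun k => 2 ^ k * distFn F (2 ^ k) ^ (1 / p)) k
  rw [← lorentzNorm_eq_ellq] at hle
  have hdiv := mul_le_mul_right hle (2 ^ (-k))
  rwa [← mul_assoc, ← ENNReal.zpow_add two_ne_zero ofNat_ne_top, neg_add_cancel, zpow_zero,
    one_mul, one_div, ENNReal.rpow_inv_le_iff hp] at hdiv

lemma distFn_two_zpow_ne_top {q : ℝ≥0∞} (hp : 0 < p) (hq : q ≠ 0) {F : Euc n → ℝ≥0∞}
    (hF : lorentzNorm p q F ≠ ∞) (k : ℤ) : distFn F (2 ^ k) ≠ ∞ :=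
  ne_top_of_le_ne_top (rpow_ne_top_of_nonneg hp.le
    (mul_ne_top (ENNReal.zpow_ne_top two_ne_zero ofNat_ne_top _) hF)) (distFn_two_zpow_le hp hq F k)

lemma tendsto_distFn_two_zpow {q : ℝ≥0∞} (hp : 0 < p) (hq : q ≠ 0) {F : Euc n → ℝ≥0∞}
    (hF : lorentzNorm p q F ≠ ∞) :
    Tendsto (fun N : ℕ => distFn F (2 ^ (N : ℤ))) atTop (𝓝 0) := by
  have hpow : Tendsto (fun N : ℕ => (2 : ℝ≥0∞) ^ (-(N : ℤ))) atTop (𝓝 0) :=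
    (ENNReal.tendsto_pow_atTop_nhds_zero_of_lt_one ENNReal.one_half_lt_one).congr fun N => by
      rw [ENNReal.zpow_neg, zpow_natCast, ENNReal.inv_pow]
  have hbound := (ENNReal.Tendsto.mul_const hpow (Or.inr hF)).ennrpow_const p
  rw [zero_mul, ENNReal.zero_rpow_of_pos hp] at hbound
  exact tendsto_of_tendsto_of_tendsto_of_le_of_le tendsto_const_nhds hbound (fun _ => zero_le)
    fun N => distFn_two_zpow_le hp hq F N

lemma convAt_sub (hψ : ContCompactSupport ψ) {g : Euc n → ℝ} (hf : LocallyIntegrable f volume)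
    (hg : LocallyIntegrable g volume) {R : ℝ} (hR : 0 < R) (y : Euc n) :
    convAt ψ (f - g) R y = convAt ψ f R y - convAt ψ g R y := by
  simp only [convAt_eq_conv]
  rw [conv_sub_left hf hg (hψ.dilate hR), Pi.sub_apply]

lemma ntMax_sum_le {ι : Type*} (hψ : ContCompactSupport ψ) {s : Finset ι} {f : ι → Euc n → ℝ}
    (hf : ∀ i ∈ s, LocallyIntegrable (f i) volume) (x : Euc n) :
    ntMax ψ (∑ i ∈ s, f i) x ≤ ∑ i ∈ s, ntMax ψ (f i) x := by
  refine ntMax_le fun y R hR hxy => ?_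
  rw [convAt_eq_conv, conv_sum_left s hf (hψ.dilate hR), Finset.sum_apply]
  calc _ ≤ ENNReal.ofReal (∑ i ∈ s, |conv (f i) (dilate ψ R) y|) :=
        ENNReal.ofReal_le_ofReal (Finset.abs_sum_le_sum_abs _ _)
    _ = ∑ i ∈ s, ENNReal.ofReal |conv (f i) (dilate ψ R) y| :=
        ENNReal.ofReal_sum_of_nonneg fun _ _ => abs_nonneg _
    _ ≤ _ := Finset.sum_le_sum fun i _ => ofReal_abs_convAt_le_ntMax ψ (f i) hR hxy

namespace IsBilateralApproximation

variable {g : ℤ → Euc n → ℝ}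

lemma locallyIntegrable_sum_sub (hg : IsBilateralApproximation ψ f g) (S : Finset ℤ) :
    LocallyIntegrable (∑ k ∈ S, (g (k + 1) - g k)) volume :=
  locallyIntegrable_finsetSum' S fun k _ =>
    (hg.locallyIntegrable (k + 1)).sub (hg.locallyIntegrable k)

lemma ntMax_sum_sub_le (hψ : ContCompactSupport ψ) (hg : IsBilateralApproximation ψ f g)
    (S : Finset ℤ) (x : Euc n) :
    ntMax ψ (∑ k ∈ S, (g (k + 1) - g k)) x ≤
      ∑' k, (S : Set ℤ).indicator (fun k => ntMax ψ (g (k + 1) - g k) x) k := by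
  rw [← sum_eq_tsum_indicator]
  exact ntMax_sum_le hψ
    (fun k _ => (hg.locallyIntegrable (k + 1)).sub (hg.locallyIntegrable k)) x

lemma tendsto_convAt_sum_sdiff (hψ : ContCompactSupport ψ) (hf : LocallyIntegrable f volume)
    (hg : IsBilateralApproximation ψ f g) (S : Finset ℤ) {R : ℝ} (hR : 0 < R) (y : Euc n) :
    Tendsto (fun N : ℕ =>
        convAt ψ (∑ k ∈ Finset.Ico (-N : ℤ) N \ S, (g (k + 1) - g k)) R y) atTop
      (𝓝 (convAt ψ (f - ∑ k ∈ S, (g (k + 1) - g k)) R y)) := by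
  have hS := hg.locallyIntegrable_sum_sub S
  have hlim := ((hg.tendsto R hR y).sub (hg.tendsto_neg R hR y)).sub_const
    (convAt ψ (∑ k ∈ S, (g (k + 1) - g k)) R y)
  rw [_root_.sub_zero, ← convAt_sub hψ hf hS hR] at hlim
  refine hlim.congr' ?_
  filter_upwards [eventually_gt_atTop (S.sup Int.natAbs)] with N hN
  have hsub : S ⊆ Finset.Ico (-N : ℤ) N := fun k hk => by
    have hk' : k.natAbs ≤ S.sup Int.natAbs := Finset.le_sup hk
    rw [Finset.mem_Ico]
    omega
  have htelescope : ∑ k ∈ Finset.Ico (-N : ℤ) N, (g (k + 1) - g k) = g N - g (-N) := by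
    simpa only [← Finset.sum_neg_distrib, neg_sub] using
      congrArg Neg.neg (Finset.sum_Ico_int_sub N g)
  rw [Finset.sum_sdiff_eq_sub hsub, htelescope, convAt_sub hψ _ hS hR,
    convAt_sub hψ (hg.locallyIntegrable _) (hg.locallyIntegrable _) hR]
  exact (hg.locallyIntegrable _).sub (hg.locallyIntegrable _)

lemma ntMax_sub_sum_sub_le (hψ : ContCompactSupport ψ) (hf : LocallyIntegrable f volume)
    (hg : IsBilateralApproximation ψ f g) (S : Finset ℤ) (x : Euc n) :
    ntMax ψ (f - ∑ k ∈ S, (g (k + 1) - g k)) x ≤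
      ∑' k, (S : Set ℤ)ᶜ.indicator (fun k => ntMax ψ (g (k + 1) - g k) x) k := by
  refine ntMax_le fun y R hR hxy => le_of_tendsto
    (ENNReal.tendsto_ofReal (hg.tendsto_convAt_sum_sdiff hψ hf S hR y).abs)
    (Eventually.of_forall fun N => ?_)
  calc _ ≤ _ := ofReal_abs_convAt_le_ntMax ψ _ hR hxy
    _ ≤ _ := hg.ntMax_sum_sub_le hψ _ x
    _ ≤ _ := ENNReal.tsum_le_tsum fun k => indicator_le_indicator_of_subset
        (fun j hj => (Finset.mem_sdiff.1 hj).2) (fun _ => zero_le) k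

end IsBilateralApproximation

lemma exists_Kfun_le (hn : 1 ≤ n) (hψ : IsAdmissible ψ) (hp : 0 < p) {q q₁ q₂ : ℝ≥0∞}
    (hq : q ≠ 0) (hq₁ : q₁ ≠ 0) (hq₂ : q₂ ≠ 0) :
    ∃ C ≠ ∞, ∀ f : Euc n → ℝ, LocallyIntegrable f volume → lorentzNorm p q (ntMax ψ f) ≠ ∞ →
      ∀ (S : Finset ℤ) (t : ℝ), Kfun ψ p q₁ q₂ f t ≤
        C * ellq q₁ ((S : Set ℤ).indicator
          fun k => 2 ^ k * distFn (ntMax ψ f) (2 ^ k) ^ (1 / p)) +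
        ENNReal.ofReal t * (C * ellq q₂ ((S : Set ℤ)ᶜ.indicator
          fun k => 2 ^ k * distFn (ntMax ψ f) (2 ^ k) ^ (1 / p))) := by
  obtain ⟨τ, hτ1, hτ⟩ : ∃ τ : ℕ, 1 ≤ τ ∧ 1 / ((τ : ℝ) + 1) < p := by
    obtain ⟨N, hN⟩ := exists_nat_one_div_lt hp
    refine ⟨N + 1, by omega, lt_of_le_of_lt ?_ hN⟩
    push_cast
    exact one_div_le_one_div_of_le (by positivity) (by linarith)
  obtain ⟨C₀, hC₀, hdecomp⟩ := exists_isBilateralApproximation hn hψ hτ1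
  obtain ⟨C₁, hC₁, hhead⟩ := exists_lorentzNorm_le_ellq_indicator n hp hτ hq₁ hC₀
  obtain ⟨C₂, hC₂, htail⟩ := exists_lorentzNorm_le_ellq_indicator n hp hτ hq₂ hC₀
  refine ⟨C₁ + C₂, by finiteness, fun f hf hfin S t => ?_⟩
  obtain ⟨g, w, hg, hw, h_int, hmax⟩ := hdecomp f hf (distFn_two_zpow_ne_top hp hq hfin)
    (tendsto_distFn_two_zpow hp hq hfin)
  have hind : ∀ (T : Set ℤ) x, ∑' k, T.indicator (fun k => ntMax ψ (g (k + 1) - g k) x) k ≤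
      ∑' k, T.indicator (fun k => C₀ * (2 ^ k * min 1 (w k x ^ (τ + 1)))) k := fun T x =>
    ENNReal.tsum_le_tsum fun k => indicator_le_indicator (hmax k x)
  have hψc := hψ.contCompactSupport
  have hS := hg.locallyIntegrable_sum_sub S
  refine iInf_le_of_le _ <| iInf_le_of_le _ <| iInf_le_of_le hS <|
    iInf_le_of_le (hf.sub hS) <| iInf_le_of_le (fun x => (add_sub_cancel _ _).symm) ?_
  gcongr
  · exact (hhead S _ w _ hw h_int fun x => (hg.ntMax_sum_sub_le hψc S x).trans
      (hind _ x)).trans (mul_le_mul_left le_self_add _)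
  · exact (htail _ _ w _ hw h_int fun x => (hg.ntMax_sub_sum_sub_le hψc hf S x).trans
      (hind _ x)).trans (mul_le_mul_left le_add_self _)

end KFunctional

/-! ### Real interpolation -/

section RealInterpolation

variable {q η θ : ℝ}

lemma ofReal_two_rpow_zpow (θ : ℝ) (m : ℤ) :
    ENNReal.ofReal (((2 : ℝ) ^ θ) ^ m) = 2 ^ (m * θ) := by
  rw [← Real.rpow_intCast, ← Real.rpow_mul two_pos.le, ← ENNReal.ofReal_rpow_of_pos two_pos,
    ENNReal.ofReal_ofNat, mul_comm]

lemma setLIntegral_Ico_two_rpow_zpow_le (hη : 0 ≤ η) (hq : 0 ≤ q) {G : ℝ → ℝ≥0∞} {m : ℤ}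
    {M : ℝ≥0∞} (hM : ∀ t ∈ Ico (((2 : ℝ) ^ θ) ^ m) (((2 : ℝ) ^ θ) ^ (m + 1)), G t ≤ M) :
    ∫⁻ t in Ico (((2 : ℝ) ^ θ) ^ m) (((2 : ℝ) ^ θ) ^ (m + 1)),
        (ENNReal.ofReal (t ^ (-η)) * G t) ^ q / ENNReal.ofReal t ≤
      (2 ^ (-(m * (η * θ))) * M) ^ q * ENNReal.ofReal (2 ^ θ - 1) := by
  set b : ℝ := 2 ^ θ
  have hb : 0 < b := by positivity
  have hbm : 0 < b ^ m := by positivity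
  have hleft : ENNReal.ofReal ((b ^ m) ^ (-η)) = 2 ^ (-(m * (η * θ))) := by
    rw [← ENNReal.ofReal_rpow_of_pos hbm, ofReal_two_rpow_zpow, ← ENNReal.rpow_mul]
    congr 1
    ring
  have hvol : ENNReal.ofReal (b ^ (m + 1) - b ^ m) =
      ENNReal.ofReal (b ^ m) * ENNReal.ofReal (b - 1) := by
    rw [← ENNReal.ofReal_mul hbm.le, zpow_add_one₀ hb.ne']
    congr 1
    ring
  have hpoint : ∀ t ∈ Ico (b ^ m) (b ^ (m + 1)),
      (ENNReal.ofReal (t ^ (-η)) * G t) ^ q / ENNReal.ofReal t ≤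
        (2 ^ (-(m * (η * θ))) * M) ^ q / ENNReal.ofReal (b ^ m) := fun t ht => by
    rw [← hleft]
    have hpow := Real.rpow_le_rpow_of_nonpos hbm ht.1 (neg_nonpos.2 hη)
    have hGM := hM t ht
    have htm := ht.1
    gcongr
  calc _ ≤ _ := setLIntegral_mono' measurableSet_Ico hpoint
    _ = _ := by
        rw [setLIntegral_const, Real.volume_Ico, hvol, ← mul_assoc,
          ENNReal.div_mul_cancel (by simpa using hbm) ofReal_ne_top]

lemma rpow_lintegral_Ioi_le_ellq (hη : 0 ≤ η) (hθ : 0 < θ) (hq : 0 < q) {G : ℝ → ℝ≥0∞}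
    {M : ℤ → ℝ≥0∞}
    (hM : ∀ m : ℤ, ∀ t ∈ Ico (((2 : ℝ) ^ θ) ^ m) (((2 : ℝ) ^ θ) ^ (m + 1)), G t ≤ M m) :
    (∫⁻ t in Ioi (0 : ℝ), (ENNReal.ofReal (t ^ (-η)) * G t) ^ q / ENNReal.ofReal t) ^ (1 / q) ≤
      ENNReal.ofReal (2 ^ θ - 1) ^ (1 / q) *
        ellq (ENNReal.ofReal q) (fun m => 2 ^ (-(m * (η * θ))) * M m) := by
  have hcover : Ioi (0 : ℝ) ⊆ ⋃ m : ℤ, Ico (((2 : ℝ) ^ θ) ^ m) (((2 : ℝ) ^ θ) ^ (m + 1)) :=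
    fun t ht => mem_iUnion.2 (exists_mem_Ico_zpow ht (Real.one_lt_rpow one_lt_two hθ))
  rw [ellq_ofReal hq, ← ENNReal.mul_rpow_of_nonneg _ _ (by positivity), mul_comm,
    ← ENNReal.tsum_mul_right]
  gcongr
  exact (lintegral_mono_set hcover).trans <| (lintegral_iUnion_le _ _).trans <|
    ENNReal.tsum_le_tsum fun m => setLIntegral_Ico_two_rpow_zpow_le hη hq.le (hM m)

lemma exists_rpow_lintegral_Ioi_le_ellq (hη : 0 ≤ η) (hθ : 0 < θ) (hq : 0 < q) :
    ∃ C ≠ ∞, ∀ (G : ℝ → ℝ≥0∞) (X Y : ℤ → ℝ≥0∞), (∀ m t, G t ≤ X m + ENNReal.ofReal t * Y m) →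
      (∫⁻ t in Ioi (0 : ℝ), (ENNReal.ofReal (t ^ (-η)) * G t) ^ q / ENNReal.ofReal t) ^ (1 / q) ≤
        C * (ellq (ENNReal.ofReal q) (fun m => 2 ^ (-(m * (η * θ))) * X m) +
          ellq (ENNReal.ofReal q) (fun m => 2 ^ (m * ((1 - η) * θ)) * Y m)) := by
  obtain ⟨C, hC, hadd⟩ := exists_ellq_add_le hq
  have hq' : ENNReal.ofReal q ≠ 0 := by simpa using hq
  refine ⟨ENNReal.ofReal (2 ^ θ - 1) ^ (1 / q) * (C * 2 ^ θ), mul_ne_top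
    (rpow_ne_top_of_nonneg (by positivity) ofReal_ne_top) (mul_ne_top hC (two_rpow_ne_top _)),
    fun G X Y hG => ?_⟩
  have hblock : ∀ m : ℤ, ∀ t ∈ Ico (((2 : ℝ) ^ θ) ^ m) (((2 : ℝ) ^ θ) ^ (m + 1)),
      G t ≤ X m + 2 ^ ((m + 1) * θ) * Y m := fun m t ht => by
    refine (hG m t).trans ?_
    gcongr
    refine (ENNReal.ofReal_le_ofReal ht.2.le).trans_eq ?_
    rw [ofReal_two_rpow_zpow, Int.cast_add, Int.cast_one]
  have hterm : ∀ m : ℤ, 2 ^ (-(m * (η * θ))) * (X m + 2 ^ ((m + 1) * θ) * Y m) ≤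
      2 ^ θ * (2 ^ (-(m * (η * θ))) * X m + 2 ^ (m * ((1 - η) * θ)) * Y m) := fun m => by
    have hexp : (2 : ℝ≥0∞) ^ (-(m * (η * θ))) * 2 ^ ((m + 1) * θ) =
        2 ^ θ * 2 ^ (m * ((1 - η) * θ)) := by
      rw [← two_rpow_add, ← two_rpow_add]
      congr 1
      ring
    rw [mul_add, mul_add, ← mul_assoc _ _ (Y m), hexp, mul_assoc _ _ (Y m)]
    exact add_le_add (le_mul_of_one_le_left' (ENNReal.one_le_rpow one_le_two hθ)) le_rfl
  calc _ ≤ _ := rpow_lintegral_Ioi_le_ellq hη hθ hq hblock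
    _ ≤ _ := mul_le_mul_right ((ellq_le_const_mul hq' hterm).trans
        (mul_le_mul_right (hadd _ _) _)) _
    _ = _ := by ring

lemma exists_interpolation_gap {q₁ : ℝ} {q₂ : ℝ≥0∞} (hq₁ : 0 < q₁) (hq₁q : q₁ < q)
    (hqq₂ : ENNReal.ofReal q < q₂) (hη : 1 / q = (1 - η) / q₁ + η / q₂.toReal) :
    0 < η ∧ ∃ θ > 0, 1 / q - 1 / q₁ = -(η * θ) ∧ 1 / q - 1 / q₂.toReal = (1 - η) * θ := by
  have hq : 0 < q := hq₁.trans hq₁q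
  have hfst : 1 / q < 1 / q₁ := one_div_lt_one_div_of_lt hq₁ hq₁q
  have hsnd : 1 / q₂.toReal < 1 / q := by
    obtain rfl | hq₂ := eq_or_ne q₂ ∞
    · simpa using hq
    · exact one_div_lt_one_div_of_lt hq ((ENNReal.ofReal_lt_iff_lt_toReal hq.le hq₂).1 hqq₂)
  have hθ : 0 < 1 / q₁ - 1 / q₂.toReal := sub_pos.2 (hsnd.trans hfst)
  have hgap : η * (1 / q₁ - 1 / q₂.toReal) = 1 / q₁ - 1 / q := by
    rw [hη]
    ring
  refine ⟨pos_of_mul_pos_left (hgap ▸ sub_pos.2 hfst) hθ.le, _, hθ, ?_, ?_⟩ <;> linarith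

lemma exists_finset_ellq_le {q₁ : ℝ} {q₂ : ℝ≥0∞} (hq₁ : 0 < q₁) (hq₁q : q₁ < q)
    (hqq₂ : ENNReal.ofReal q < q₂) :
    ∃ C ≠ ∞, ∀ a : ℤ → ℝ≥0∞, ellq (ENNReal.ofReal q) a ≠ ∞ → ∃ S : ℤ → Finset ℤ,
      ellq (ENNReal.ofReal q) (fun m => 2 ^ (m * (1 / q - 1 / q₁)) *
        ellq (ENNReal.ofReal q₁) ((S m : Set ℤ).indicator a)) ≤ C * ellq (ENNReal.ofReal q) a ∧
      ellq (ENNReal.ofReal q) (fun m => 2 ^ (m * (1 / q - 1 / q₂.toReal)) *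
        ellq q₂ ((S m : Set ℤ)ᶜ.indicator a)) ≤ C * ellq (ENNReal.ofReal q) a := by
  have hq : 0 < q := hq₁.trans hq₁q
  obtain ⟨C₁, hC₁, hhead⟩ := exists_ellq_head_le hq₁ hq₁q
  obtain ⟨C₂, hC₂, htail⟩ := exists_ellq_tail_le hq hqq₂
  refine ⟨C₁ + C₂, add_ne_top.2 ⟨hC₁, hC₂⟩, fun a ha =>
    ⟨fun m => (finite_dyadicRearr_lt a m).toFinset, ?_, ?_⟩⟩
  · simp only [Finite.coe_toFinset]
    exact (hhead a).trans (mul_le_mul_left le_self_add _)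
  · have hsum : ∑' k, a k ^ q ≠ ∞ := fun h => ha <| by
      rw [ellq_ofReal hq, h, ENNReal.top_rpow_of_pos (by positivity)]
    simp only [Finite.coe_toFinset]
    exact (htail a hsum).trans (mul_le_mul_left le_add_self _)

lemma exists_rpow_lintegral_Ioi_le_ellq_of_forall_finset {q₁ : ℝ} {q₂ : ℝ≥0∞} (hq₁ : 0 < q₁)
    (hq₁q : q₁ < q) (hqq₂ : ENNReal.ofReal q < q₂)
    (hη : 1 / q = (1 - η) / q₁ + η / q₂.toReal) :
    ∃ C ≠ ∞, ∀ a : ℤ → ℝ≥0∞, ellq (ENNReal.ofReal q) a ≠ ∞ → ∀ (B : ℝ≥0∞) (G : ℝ → ℝ≥0∞),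
      (∀ (S : Finset ℤ) (t : ℝ), G t ≤ B * ellq (ENNReal.ofReal q₁) ((S : Set ℤ).indicator a) +
        ENNReal.ofReal t * (B * ellq q₂ ((S : Set ℤ)ᶜ.indicator a))) →
      (∫⁻ t in Ioi (0 : ℝ), (ENNReal.ofReal (t ^ (-η)) * G t) ^ q / ENNReal.ofReal t) ^ (1 / q) ≤
        C * (B * ellq (ENNReal.ofReal q) a) := by
  have hq : 0 < q := hq₁.trans hq₁q
  have hq' : ENNReal.ofReal q ≠ 0 := by simpa using hq
  obtain ⟨hη₀, θ, hθ, hgap₁, hgap₂⟩ := exists_interpolation_gap hq₁ hq₁q hqq₂ hη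
  obtain ⟨A, hA, hsplit⟩ := exists_finset_ellq_le hq₁ hq₁q hqq₂
  obtain ⟨D, hD, h_int⟩ := exists_rpow_lintegral_Ioi_le_ellq hη₀.le hθ hq
  refine ⟨D * (A + A), by finiteness, fun a ha B G hG => ?_⟩
  obtain ⟨S, hhead, htail⟩ := hsplit a ha
  rw [hgap₁] at hhead
  simp only [hgap₂] at htail
  calc _ ≤ _ := h_int G _ _ fun m => hG (S m)
    _ ≤ D * (B * (A * ellq (ENNReal.ofReal q) a) + B * (A * ellq (ENNReal.ofReal q) a)) := by
        simp only [mul_left_comm _ B]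
        rw [ellq_const_mul hq', ellq_const_mul hq']
        gcongr
        · simpa only [mul_neg] using hhead
    _ = D * (A + A) * (B * ellq (ENNReal.ofReal q) a) := by ring

end RealInterpolation

theorem stmt11_general (n : ℕ) (hn : 1 ≤ n) (p : ℝ) (hp0 : 0 < p)
    (q1 q : ℝ) (q2 : ℝ≥0∞) (hq1 : 0 < q1) (hq1q : q1 < q) (hqq2 : ENNReal.ofReal q < q2)
    (η : ℝ) (hηdef : 1 / q = (1 - η) / q1 + (if q2 = ∞ then 0 else η / q2.toReal))
    (ψ : Euc n → ℝ) (hψ : ContDiff ℝ (⊤ : ℕ∞) ψ) (hψc : HasCompactSupport ψ)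
    (hψi : (∫ x : Euc n, ψ x) ≠ 0) :
    ∃ c : ℝ, 0 < c ∧
      ∀ f : Euc n → ℝ, LocallyIntegrable f volume →
        lorentzNorm p (ENNReal.ofReal q) (ntMax ψ f) < ∞ →
        (∫⁻ t in Ioi (0 : ℝ),
            (ENNReal.ofReal (t ^ (-η)) * Kfun ψ p (ENNReal.ofReal q1) q2 f t) ^ q /
              ENNReal.ofReal t) ^ (1 / q) ≤
          ENNReal.ofReal c * lorentzNorm p (ENNReal.ofReal q) (ntMax ψ f) := by
  have hq : ENNReal.ofReal q ≠ 0 := by simpa using hq1.trans hq1q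
  have hdef : 1 / q = (1 - η) / q1 + η / q2.toReal := by
    rw [hηdef]
    split_ifs with h <;> simp [h]
  obtain ⟨C, hC, h_int⟩ :=
    exists_rpow_lintegral_Ioi_le_ellq_of_forall_finset hq1 hq1q hqq2 hdef
  obtain ⟨B, hB, hK⟩ := exists_Kfun_le hn ⟨hψ, hψc, hψi⟩ hp0 hq
    (q₁ := ENNReal.ofReal q1) (by simpa using hq1) (ne_bot_of_gt hqq2)
  refine ⟨(C * B).toReal + 1, by positivity, fun f hf hL => ?_⟩
  have hCB : C * B ≤ ENNReal.ofReal ((C * B).toReal + 1) :=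
    (ENNReal.le_ofReal_iff_toReal_le (mul_ne_top hC hB) (by positivity)).2
      (le_add_of_nonneg_right zero_le_one)
  exact (h_int _ hL.ne B _ (hK f hf hL.ne)).trans
    ((mul_assoc _ _ _).symm.trans_le (mul_le_mul_left hCB _))

/-- The other half of Theorem 2.5: `H^{p,q} ↪ (H^{p,q₁},H^{p,q₂})_{η,q}`. -/
theorem stmt11 (n : ℕ) (hn : 1 ≤ n) (p : ℝ) (hp0 : 0 < p) (hp1 : p ≤ 1)
    (q1 q : ℝ) (q2 : ℝ≥0∞) (hq1 : 0 < q1) (hq1q : q1 < q) (hqq2 : ENNReal.ofReal q < q2)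
    (η : ℝ) (hη0 : 0 < η) (hη1 : η < 1)
    (hηdef : 1/q = (1 - η)/q1 + (if q2 = ∞ then 0 else η / q2.toReal))
    (ψ : Euc n → ℝ) (hψ : ContDiff ℝ (⊤ : ℕ∞) ψ) (hψc : HasCompactSupport ψ)
    (hψi : (∫ x : Euc n, ψ x) ≠ 0) :
    ∃ c : ℝ, 0 < c ∧
      ∀ f : Euc n → ℝ, LocallyIntegrable f volume →
        lorentzNorm p (ENNReal.ofReal q) (ntMax ψ f) < ∞ →
        (∫⁻ t in Ioi (0:ℝ),
            (ENNReal.ofReal (t ^ (-η)) * Kfun ψ p (ENNReal.ofReal q1) q2 f t) ^ q /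
              ENNReal.ofReal t) ^ (1/q) ≤
          ENNReal.ofReal c * lorentzNorm p (ENNReal.ofReal q) (ntMax ψ f) :=
  stmt11_general n hn p hp0 q1 q q2 hq1 hq1q hqq2 η hηdef ψ hψ hψc hψi

end
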